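/- Assume (P1)–(P4) on V, fix E > V_L, and assume the non-degeneracy condition ∫₀^{a₀}(E − V(x))^{−3/2}dx − a₀(E − V_∞)^{−3/2} ≠ 0. Fix ν ∈ (0,1) and let x(t) be the T(E,γ)-periodic symmetric solution of ẍ + V'(x) + 2γx = 0 at energy E. Then for all sufficiently small γ in the set C̃_{E,ν} = ∪_{m≥m₀}(Γ̃_m, γ̃_m), there exists a T-periodic spatially localized solution 𝐱(t) ∈ H²_per((0,T); l²(ℤ)) of the discrete Klein–Gordon equation ẍ_n + V'(x_n) = γ(x_{n+1} − 2x_n + x_{n−1}), n ∈ ℤ, such that x_n(t) = x_{−n}(t) for all n ∈ ℤ, 𝐱(−t) = 𝐱(t) = −𝐱(T/2 − t) for all t ∈ ℝ, and there exists C > 0 with sup_{t∈[0,T]} |x₀(t) − x(t)| ≤ C γ^{−1/4} and sup_{n≥1} sup_{t∈[0,T]} |x_n(t)| ≤ C γ^{1/4}. -/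

import Mathlib

/-!
The unknowns are shifted in time by a quarter period: with `L = T / 4` and `s = L - t`, a symmetric
breather is a solution on `[0, L]` with all sites at `0` when `s = 0` and at rest when `s = L`,
extended by reflection (`oddExt_ode`, `Sol.br_ode`). Symmetry in the site index leaves the half
lattice `n ≥ 0`. Write `γ = μ²`, so that `L` is of order `1 / μ`.

*Fixed point.* The centre starts at the node with momentum `p` and crosses the well in a bounded time
`τ`; afterwards `V′` vanishes and it performs a slow harmonic oscillation of frequency `ω = √2 μ`. The
other sites solve `y″ + κ² y = f` with `y(0) = y′(L) = 0`, whose Green operator `GG` is bounded because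
`|cos (κ L)|` stays away from zero for `γ` in the gaps (`nonresonance`). In a sup norm with weights
that are exponential in time at the centre and geometric in the site index, the resulting integral
operator contracts, so for each `p` there is a solution, depending continuously on `p`
(`Good.exists_family`). The centre has amplitude `1 / μ`, but it oscillates slowly, and an integration
by parts shows that it excites its neighbours only to order `μ` (`Sol.GG_y`, `Sol.tail`).

*Shooting.* It remains to choose `p = √(2e)` so that the centre is at rest at `s = L`. Conservation of
energy in the well (`inner_est`) and the asymptotics of `T` show that its velocity there, divided by
`ω`, is the asymptotic velocity times `delay p - λ / 4`, with an error `O(μ)` (`Sol.turning`). The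
delay equals `λ / 4` at `e = E`, and by non-degeneracy it has a nonzero derivative there
(`delay_sign`). Hence the velocity changes sign over the window `|e - E| ≤ √μ = γ^(1/4)`, and the
intermediate value theorem gives the momentum (`Reg.shoot`).

*Comparison.* The given periodic orbit is the central component of the decoupled problem with momentum
`√(2E)` (`Sol.identify`). A perturbation of size `√μ` of the momentum is amplified by at most a
multiple of `L`, so the two orbits differ by `O(√μ / μ) = O(γ^(-1/4))` (`Sol.br_close`).
-/

open Real MeasureTheory

/-- The `T`-periodic symmetric solution of `ẍ + V'(x) + 2γx = 0` at energy `E`. -/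
def SolAtEnergy (V : ℝ → ℝ) (Vinf γ E T : ℝ) (x : ℝ → ℝ) : Prop :=
  ContDiff ℝ 2 x ∧ 0 < T ∧ Function.Periodic x T ∧
  (∀ t, x (-t) = x t) ∧ (∀ t, x t = - x (T / 2 - t)) ∧
  x 0 = Real.sqrt (E - Vinf) / Real.sqrt γ ∧ deriv x 0 = 0 ∧
  (∀ t, deriv (deriv x) t + deriv V (x t) + 2 * γ * x t = 0) ∧
  (∀ t, (deriv x t) ^ 2 / 2 + V (x t) + γ * (x t) ^ 2 = E)

section

/-! ### Oscillator solution operators -/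

/-- The solution of `y″ + a² y = f` with `y(0) = y′(0) = 0`, for `a ≠ 0` and `f` continuous. -/
noncomputable def SS (a : ℝ) (f : ℝ → ℝ) (s : ℝ) : ℝ :=
  ∫ r in (0:ℝ)..s, sin (a * (s - r)) / a * f r

/-- The derivative of `SS a f`. -/
noncomputable def CC (a : ℝ) (f : ℝ → ℝ) (s : ℝ) : ℝ :=
  ∫ r in (0:ℝ)..s, cos (a * (s - r)) * f r

lemma SS_eq {a : ℝ} {f : ℝ → ℝ} (hf : Continuous f) (s : ℝ) :
    SS a f s = (sin (a * s) * (∫ r in (0:ℝ)..s, cos (a * r) * f r)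
      - cos (a * s) * ∫ r in (0:ℝ)..s, sin (a * r) * f r) / a := by
  unfold SS
  rw [← intervalIntegral.integral_const_mul, ← intervalIntegral.integral_const_mul,
    ← intervalIntegral.integral_sub, ← intervalIntegral.integral_div]
  · refine intervalIntegral.integral_congr fun r _ => ?_
    simp only [mul_sub, sin_sub]; ring
  all_goals exact Continuous.intervalIntegrable (by fun_prop) _ _

lemma CC_eq {a : ℝ} {f : ℝ → ℝ} (hf : Continuous f) (s : ℝ) :
    CC a f s = cos (a * s) * (∫ r in (0:ℝ)..s, cos (a * r) * f r)
      + sin (a * s) * ∫ r in (0:ℝ)..s, sin (a * r) * f r := by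
  unfold CC
  rw [← intervalIntegral.integral_const_mul, ← intervalIntegral.integral_const_mul,
    ← intervalIntegral.integral_add]
  · refine intervalIntegral.integral_congr fun r _ => ?_
    simp only [mul_sub, cos_sub]; ring
  all_goals exact Continuous.intervalIntegrable (by fun_prop) _ _

lemma hasDerivAt_prim {f : ℝ → ℝ} (hf : Continuous f) (s : ℝ) :
    HasDerivAt (fun s => ∫ r in (0:ℝ)..s, f r) (f s) s :=
  intervalIntegral.integral_hasDerivAt_right (hf.intervalIntegrable _ _)
    (hf.stronglyMeasurableAtFilter _ _) hf.continuousAt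

lemma hasDerivAt_sin_mul (a s : ℝ) : HasDerivAt (fun s => sin (a * s)) (a * cos (a * s)) s := by
  have := ((hasDerivAt_id s).const_mul a).sin
  simp only [id, mul_one] at this
  exact this.congr_deriv (by ring)

lemma hasDerivAt_cos_mul (a s : ℝ) : HasDerivAt (fun s => cos (a * s)) (-(a * sin (a * s))) s := by
  have := ((hasDerivAt_id s).const_mul a).cos
  simp only [id, mul_one] at this
  exact this.congr_deriv (by ring)

lemma hasDerivAt_SS {a : ℝ} (ha : a ≠ 0) {f : ℝ → ℝ} (hf : Continuous f) (s : ℝ) :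
    HasDerivAt (SS a f) (CC a f s) s := by
  have h1 := hasDerivAt_prim (f := fun r => cos (a * r) * f r) (by fun_prop) s
  have h2 := hasDerivAt_prim (f := fun r => sin (a * r) * f r) (by fun_prop) s
  have h := (((hasDerivAt_sin_mul a s).mul h1).sub ((hasDerivAt_cos_mul a s).mul h2)).div_const a
  have e : SS a f = _ := funext fun s => SS_eq hf s
  rw [e, CC_eq hf s]
  refine h.congr_deriv ?_
  field_simp
  ring

lemma hasDerivAt_CC {a : ℝ} (ha : a ≠ 0) {f : ℝ → ℝ} (hf : Continuous f) (s : ℝ) :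
    HasDerivAt (CC a f) (f s - a ^ 2 * SS a f s) s := by
  have h1 := hasDerivAt_prim (f := fun r => cos (a * r) * f r) (by fun_prop) s
  have h2 := hasDerivAt_prim (f := fun r => sin (a * r) * f r) (by fun_prop) s
  have h := ((hasDerivAt_cos_mul a s).mul h1).add ((hasDerivAt_sin_mul a s).mul h2)
  have e : CC a f = _ := funext fun s => CC_eq hf s
  rw [e, SS_eq hf s]
  refine h.congr_deriv ?_
  have := sin_sq_add_cos_sq (a * s)
  field_simp
  linear_combination (f s) * this

lemma continuous_SS {a : ℝ} (ha : a ≠ 0) {f : ℝ → ℝ} (hf : Continuous f) : Continuous (SS a f) :=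
  continuous_iff_continuousAt.2 fun s => (hasDerivAt_SS ha hf s).continuousAt

lemma SS_add {a : ℝ} {f h : ℝ → ℝ} (hf : Continuous f) (hh : Continuous h) (s : ℝ) :
    SS a (fun r => f r + h r) s = SS a f s + SS a h s := by
  unfold SS
  rw [← intervalIntegral.integral_add]
  · exact intervalIntegral.integral_congr fun r _ => by ring
  all_goals exact Continuous.intervalIntegrable (by fun_prop) _ _

lemma CC_add {a : ℝ} {f h : ℝ → ℝ} (hf : Continuous f) (hh : Continuous h) (s : ℝ) :
    CC a (fun r => f r + h r) s = CC a f s + CC a h s := by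
  unfold CC
  rw [← intervalIntegral.integral_add]
  · exact intervalIntegral.integral_congr fun r _ => by ring
  all_goals exact Continuous.intervalIntegrable (by fun_prop) _ _

lemma SS_mul (a k : ℝ) (f : ℝ → ℝ) (s : ℝ) :
    SS a (fun r => k * f r) s = k * SS a f s := by
  unfold SS
  rw [← intervalIntegral.integral_const_mul]
  exact intervalIntegral.integral_congr fun r _ => by ring

lemma CC_mul (a k : ℝ) (f : ℝ → ℝ) (s : ℝ) :
    CC a (fun r => k * f r) s = k * CC a f s := by
  unfold CC
  rw [← intervalIntegral.integral_const_mul]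
  exact intervalIntegral.integral_congr fun r _ => by ring

lemma SS_sub {a : ℝ} {f h : ℝ → ℝ} (hf : Continuous f) (hh : Continuous h) (s : ℝ) :
    SS a f s - SS a h s = SS a (fun r => f r - h r) s := by
  unfold SS
  rw [← intervalIntegral.integral_sub]
  · exact intervalIntegral.integral_congr fun r _ => by ring
  all_goals exact Continuous.intervalIntegrable (by fun_prop) _ _

lemma CC_sub {a : ℝ} {f h : ℝ → ℝ} (hf : Continuous f) (hh : Continuous h) (s : ℝ) :
    CC a f s - CC a h s = CC a (fun r => f r - h r) s := by
  unfold CC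
  rw [← intervalIntegral.integral_sub]
  · exact intervalIntegral.integral_congr fun r _ => by ring
  all_goals exact Continuous.intervalIntegrable (by fun_prop) _ _

lemma abs_int_kernel_le {k f : ℝ → ℝ} {A s : ℝ} (hs : 0 ≤ s)
    (hf : Continuous f) (hA : ∀ r ∈ Set.Icc 0 s, |k r| ≤ A) :
    |∫ r in (0:ℝ)..s, k r * f r| ≤ A * ∫ r in (0:ℝ)..s, |f r| := by
  rw [← intervalIntegral.integral_const_mul, ← Real.norm_eq_abs]
  refine intervalIntegral.norm_integral_le_of_norm_le hs ?_
    (Continuous.intervalIntegrable (by fun_prop) _ _)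
  refine Filter.Eventually.of_forall fun r hr => ?_
  rw [Real.norm_eq_abs, abs_mul]
  exact mul_le_mul_of_nonneg_right (hA r ⟨hr.1.le, hr.2⟩) (abs_nonneg _)

lemma abs_sin_mul_div_le {a : ℝ} (ha : 0 < a) {s : ℝ} (hs : 0 ≤ s) : |sin (a * s) / a| ≤ s := by
  rw [abs_div, abs_of_pos ha, div_le_iff₀ ha]
  have := abs_sin_le_abs (x := a * s)
  rw [abs_of_nonneg (by positivity : 0 ≤ a * s)] at this
  linarith

lemma abs_sin_div_le {a : ℝ} (ha : 0 < a) (x : ℝ) : |sin x / a| ≤ 1 / a := by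
  rw [abs_div, abs_of_pos ha]
  gcongr
  exact abs_sin_le_one x

lemma abs_SS_le {a : ℝ} (ha : 0 < a) {f : ℝ → ℝ} (hf : Continuous f) {s : ℝ} (hs : 0 ≤ s) :
    |SS a f s| ≤ s * ∫ r in (0:ℝ)..s, |f r| := by
  refine abs_int_kernel_le hs hf fun r hr => ?_
  have := abs_sin_mul_div_le ha (sub_nonneg.2 hr.2)
  linarith [hr.1]

lemma abs_SS_le' {a : ℝ} (ha : 0 < a) {f : ℝ → ℝ} (hf : Continuous f) {s : ℝ} (hs : 0 ≤ s) :
    |SS a f s| ≤ (1 / a) * ∫ r in (0:ℝ)..s, |f r| :=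
  abs_int_kernel_le hs hf fun _ _ => abs_sin_div_le ha _

lemma abs_CC_le {a : ℝ} {f : ℝ → ℝ} (hf : Continuous f) {s : ℝ} (hs : 0 ≤ s) :
    |CC a f s| ≤ ∫ r in (0:ℝ)..s, |f r| := by
  unfold CC
  simpa using abs_int_kernel_le (A := 1) hs hf (fun r _ => abs_cos_le_one (a * (s - r)))

lemma int_abs_mono {f : ℝ → ℝ} (hf : Continuous f) {s L : ℝ} (hs : 0 ≤ s) (hL : s ≤ L) :
    ∫ r in (0:ℝ)..s, |f r| ≤ ∫ r in (0:ℝ)..L, |f r| := by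
  apply intervalIntegral.integral_mono_interval le_rfl hs hL
  · exact Filter.Eventually.of_forall fun r => abs_nonneg _
  · exact Continuous.intervalIntegrable (by fun_prop) _ _

lemma int_abs_le_const {f : ℝ → ℝ} {s b : ℝ} (hs : 0 ≤ s)
    (hb : ∀ r ∈ Set.Icc 0 s, |f r| ≤ b) : ∫ r in (0:ℝ)..s, |f r| ≤ s * b := by
  have := intervalIntegral.norm_integral_le_of_norm_le_const (a := 0) (b := s) (C := b)
    (f := fun r => |f r|) (fun r hr => by
      rw [Set.uIoc_of_le hs] at hr
      simpa using hb r ⟨hr.1.le, hr.2⟩)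
  rw [Real.norm_eq_abs, sub_zero, abs_of_nonneg hs] at this
  linarith [le_abs_self (∫ r in (0:ℝ)..s, |f r|)]

/-- If `f` vanishes after `τ` and is dominated by the derivative of `b * exp (K r)` before, its
primitive is at most `b * exp (K * min s τ)`: integrating against the exponential weight gains
`1 / K`. -/
lemma int_abs_le_exp {f : ℝ → ℝ} (hf : Continuous f) {K b τ s : ℝ} (hb : 0 ≤ b) (hs : 0 ≤ s)
    (hτ : 0 ≤ τ)
    (h1 : ∀ r ∈ Set.Icc 0 s, r ≤ τ → |f r| ≤ b * (K * exp (K * r)))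
    (h2 : ∀ r ∈ Set.Icc 0 s, τ ≤ r → f r = 0) :
    ∫ r in (0:ℝ)..s, |f r| ≤ b * exp (K * min s τ) := by
  have key : ∀ x, 0 ≤ x → x ≤ s → x ≤ τ → ∫ r in (0:ℝ)..x, |f r| ≤ b * exp (K * x) := by
    intro x hx hxs hxτ
    have e : ∫ r in (0:ℝ)..x, b * (K * exp (K * r)) = b * exp (K * x) - b * exp (K * 0) := by
      apply intervalIntegral.integral_eq_sub_of_hasDerivAt
        (f := fun r => b * exp (K * r))
      · intro r _
        have := (((hasDerivAt_id r).const_mul K).exp).const_mul b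
        simp only [id, mul_one] at this
        exact this.congr_deriv (by ring)
      · exact Continuous.intervalIntegrable (by fun_prop) _ _
    have : ∫ r in (0:ℝ)..x, |f r| ≤ ∫ r in (0:ℝ)..x, b * (K * exp (K * r)) := by
      apply intervalIntegral.integral_mono_on hx
      · exact Continuous.intervalIntegrable (by fun_prop) _ _
      · exact Continuous.intervalIntegrable (by fun_prop) _ _
      · intro r hr; exact h1 r ⟨hr.1, hr.2.trans hxs⟩ (hr.2.trans hxτ)
    simp only [mul_zero, exp_zero, mul_one] at e
    linarith
  rcases le_total s τ with h | h
  · rw [min_eq_left h]; exact key s hs le_rfl h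
  · rw [min_eq_right h]
    have hi : ∀ x y, IntervalIntegrable (fun r => |f r|) volume x y :=
      fun x y => Continuous.intervalIntegrable (by fun_prop) _ _
    rw [← intervalIntegral.integral_add_adjacent_intervals (hi 0 τ) (hi τ s)]
    have : ∫ r in τ..s, |f r| = ∫ r in τ..s, (0:ℝ) := by
      refine intervalIntegral.integral_congr fun r hr => ?_
      rw [Set.uIcc_of_le h] at hr
      simp [h2 r ⟨hτ.trans hr.1, hr.2⟩ hr.1]
    rw [this]
    simpa using key τ hτ h le_rfl

/-- Variation of constants on `[s0, s1]` for `y″ + a² y = f`. -/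
lemma duhamel_sin {a s0 s1 : ℝ} (ha : a ≠ 0) (h01 : s0 ≤ s1) {y dy f : ℝ → ℝ} (hf : Continuous f)
    (h1 : ∀ s, HasDerivAt y (dy s) s)
    (h2 : ∀ s ∈ Set.Icc s0 s1, HasDerivAt dy (f s - a ^ 2 * y s) s) :
    ∫ r in s0..s1, sin (a * (s1 - r)) / a * f r =
      y s1 - (sin (a * (s1 - s0)) / a * dy s0 + cos (a * (s1 - s0)) * y s0) := by
  have := intervalIntegral.integral_eq_sub_of_hasDerivAt (a := s0) (b := s1)
    (f := fun r => sin (a * (s1 - r)) / a * dy r + cos (a * (s1 - r)) * y r)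
    (f' := fun r => sin (a * (s1 - r)) / a * f r) ?_ ?_
  · rw [this]; simp
  · intro r hr
    rw [Set.uIcc_of_le h01] at hr
    have hl : HasDerivAt (fun r => a * (s1 - r)) (-a) r := by
      simpa using ((hasDerivAt_id r).const_sub s1).const_mul a
    refine (((hl.sin.div_const a).mul (h2 r hr)).add (hl.cos.mul (h1 r))).congr_deriv ?_
    field_simp
    ring
  · exact Continuous.intervalIntegrable (by fun_prop) _ _

/-- The differentiated variation of constants formula. -/
lemma duhamel_cos {a s0 s1 : ℝ} (h01 : s0 ≤ s1) {y dy f : ℝ → ℝ} (hf : Continuous f)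
    (h1 : ∀ s, HasDerivAt y (dy s) s)
    (h2 : ∀ s ∈ Set.Icc s0 s1, HasDerivAt dy (f s - a ^ 2 * y s) s) :
    ∫ r in s0..s1, cos (a * (s1 - r)) * f r =
      dy s1 - (cos (a * (s1 - s0)) * dy s0 - a * sin (a * (s1 - s0)) * y s0) := by
  have := intervalIntegral.integral_eq_sub_of_hasDerivAt (a := s0) (b := s1)
    (f := fun r => cos (a * (s1 - r)) * dy r - a * sin (a * (s1 - r)) * y r)
    (f' := fun r => cos (a * (s1 - r)) * f r) ?_ ?_
  · rw [this]; simp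
  · intro r hr
    rw [Set.uIcc_of_le h01] at hr
    have hl : HasDerivAt (fun r => a * (s1 - r)) (-a) r := by
      simpa using ((hasDerivAt_id r).const_sub s1).const_mul a
    refine ((hl.cos.mul (h2 r hr)).sub ((hl.sin.const_mul a).mul (h1 r))).congr_deriv ?_
    ring
  · exact Continuous.intervalIntegrable (by fun_prop) _ _

/-- A solution of `D″ + a² D = 0` with vanishing Cauchy data is zero, by conservation of
`D′² + a² D²`. -/
lemma harmonic_unique {a c : ℝ} (ha : a ≠ 0) {D dD : ℝ → ℝ}
    (h1 : ∀ s, HasDerivAt D (dD s) s) (h2 : ∀ s, HasDerivAt dD (-(a ^ 2 * D s)) s)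
    (h0 : D c = 0) (h0' : dD c = 0) (s : ℝ) : D s = 0 := by
  have hd : ∀ s, HasDerivAt (fun s => dD s ^ 2 + a ^ 2 * D s ^ 2) 0 s := fun s =>
    (((h2 s).pow 2).add (((h1 s).pow 2).const_mul (a ^ 2))).congr_deriv (by simp; ring)
  have hc := is_const_of_deriv_eq_zero (fun s => (hd s).differentiableAt)
    (fun s => (hd s).deriv) s c
  simp only [h0, h0'] at hc
  have h3 : a ^ 2 * D s ^ 2 = 0 := by nlinarith [sq_nonneg (dD s), sq_nonneg (a * D s)]
  have : 0 < a ^ 2 := by positivity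
  simpa [ha] using h3

end

section

/-! ### The truncated half-lattice problem and its contraction estimate -/

/-- The solution of `y″ + κ² y = f` with `y(0) = 0` and `y′(L) = 0`. It needs `cos (κ L) ≠ 0`,
which is where non-resonance enters. -/
noncomputable def GG (κ L : ℝ) (f : ℝ → ℝ) (s : ℝ) : ℝ :=
  SS κ f s - CC κ f L * (sin (κ * s) / (κ * cos (κ * L)))

lemma GG_sub {κ L : ℝ} {f h : ℝ → ℝ} (hf : Continuous f) (hh : Continuous h) (s : ℝ) :
    GG κ L f s - GG κ L h s = GG κ L (fun r => f r - h r) s := by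
  unfold GG
  rw [← SS_sub hf hh, ← CC_sub hf hh]; ring

lemma abs_GG_aux {κ L c : ℝ} (hκ : 0 < κ) (hc : 0 < c) (hcos : c ≤ |cos (κ * L)|) (s : ℝ) :
    |sin (κ * s) / (κ * cos (κ * L))| ≤ 1 / (c * κ) := by
  rw [abs_div, abs_mul, abs_of_pos hκ]
  have := abs_sin_le_one (κ * s)
  rw [mul_comm c]
  gcongr

lemma abs_GG_le {κ L c : ℝ} (hκ : 0 < κ) (hc : 0 < c) (hc1 : c ≤ 1) (hcos : c ≤ |cos (κ * L)|)
    {f : ℝ → ℝ} (hf : Continuous f) {s : ℝ} (hs : s ∈ Set.Icc 0 L) :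
    |GG κ L f s| ≤ 2 / (c * κ) * ∫ r in (0:ℝ)..L, |f r| := by
  have h1 := abs_SS_le' hκ hf hs.1
  have h2 := abs_CC_le (a := κ) hf (hs.1.trans hs.2)
  have h3 := int_abs_mono hf hs.1 hs.2
  have hI : 0 ≤ ∫ r in (0:ℝ)..L, |f r| := (abs_nonneg _).trans h2
  have h4 := abs_GG_aux hκ hc hcos s
  have h5 : |CC κ f L * (sin (κ * s) / (κ * cos (κ * L)))| ≤
      (∫ r in (0:ℝ)..L, |f r|) * (1 / (c * κ)) := by
    rw [abs_mul]; gcongr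
  have h6 : |SS κ f s| ≤ (1 / (c * κ)) * ∫ r in (0:ℝ)..L, |f r| := by
    refine h1.trans ?_
    have : 1 / κ ≤ 1 / (c * κ) := by
      gcongr; nlinarith
    have : 0 ≤ ∫ r in (0:ℝ)..s, |f r| :=
      intervalIntegral.integral_nonneg hs.1 fun r _ => abs_nonneg _
    gcongr
  have := abs_sub (SS κ f s) (CC κ f L * (sin (κ * s) / (κ * cos (κ * L))))
  unfold GG
  calc _ ≤ _ := this
    _ ≤ _ := add_le_add h6 h5
    _ = _ := by ring

/-- A continuous cutoff, equal to `1` for `r ≤ τ` and to `0` for `r ≥ τ + 1`. -/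
noncomputable def chi (τ r : ℝ) : ℝ := max 0 (1 - max 0 (r - τ))

lemma chi_one {τ r : ℝ} (h : r ≤ τ) : chi τ r = 1 := by
  unfold chi; rw [max_eq_left (a := (0:ℝ)) (b := r - τ) (by linarith)]; simp
lemma chi_zero {τ r : ℝ} (h : τ + 1 ≤ r) : chi τ r = 0 := by
  unfold chi; rw [max_eq_right (a := (0:ℝ)) (b := r - τ) (by linarith)]
  exact max_eq_left (by linarith)
lemma chi_nonneg (τ r : ℝ) : 0 ≤ chi τ r := le_max_left _ _
lemma chi_le_one (τ r : ℝ) : chi τ r ≤ 1 :=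
  max_le zero_le_one (by linarith [le_max_left 0 (r - τ)])
lemma continuous_chi (τ : ℝ) : Continuous (chi τ) := by unfold chi; fun_prop

/-- Data of the half-lattice problem on the quarter period `[0, L]`: the coupling `γ`, the
frequency `κ` of small oscillations, the switch `j` (`1` if the central site feels its neighbours,
`0` if it is decoupled), the time `τ` after which the on-site force on the centre is switched off,
the parameters `K`, `B` of the weights, the non-resonance bound `c ≤ |cos (κ L)|`, the on-site force
`g` at the centre with Lipschitz constant `M`, and the nonlinear remainder `N` of the on-site force
at the other sites with Lipschitz constant `η`. -/
structure Par where
  (γ κ L j τ K B c M η : ℝ) (g N : ℝ → ℝ)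

/-- Conditions under which the half-lattice operator `Par.OP` contracts by `1 / 2`: `K_ge` handles
the on-site force at the centre, `c1` the action of the neighbours on the centre, `c2` the mutual
action of the neighbours, `c3` the action of the centre on its neighbours. -/
structure Par.Good (P : Par) : Prop where
  γ_pos : 0 < P.γ
  κ_pos : 0 < P.κ
  L_pos : 0 < P.L
  j_le : |P.j| ≤ 1
  τ_nonneg : 0 ≤ P.τ
  K_pos : 0 < P.K
  K_ge : 4 * (P.M * (2 + P.τ)) ≤ P.K
  B_pos : 0 < P.B
  c_pos : 0 < P.c
  c_le : P.c ≤ 1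
  cos_ge : P.c ≤ |cos (P.κ * P.L)|
  M_nonneg : 0 ≤ P.M
  η_nonneg : 0 ≤ P.η
  g_lip : ∀ x y, |P.g x - P.g y| ≤ P.M * |x - y|
  g_zero : P.g 0 = 0
  N_lip : ∀ x y, |P.N x - P.N y| ≤ P.η * |x - y|
  N_zero : P.N 0 = 0
  c1 : P.γ * P.B * P.L ≤ 1 / 4
  c2 : 2 / (P.c * P.κ) * P.L * (5 * P.γ + P.η) ≤ 1 / 4
  c3 : 2 / (P.c * P.κ) * P.L * (P.γ * ((1 + P.L) * exp (P.K * (P.τ + 1)))) ≤ P.B / 8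

namespace Par
variable (P : Par)

/-- Weight at the central site: exponential during the collision with the well, as in the Gronwall
lemma, and linear afterwards, as for free motion. -/
noncomputable def w (s : ℝ) : ℝ := (1 + s) * exp (P.K * min s (P.τ + 1))

/-- Weights of all sites, decaying geometrically away from the centre. -/
noncomputable def W : ℕ → ℝ → ℝ
  | 0, s => P.w s
  | n + 1, _ => P.B * (1 / 2) ^ (n + 1)

/-- Frequency of the slow harmonic oscillation of the centre outside the support of the force. -/
noncomputable def ω : ℝ := √(2 * P.γ)

/-- Force on the centre besides the harmonic one. The on-site force is frozen at time `τ` and then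
cut off, so that it acts during a bounded time only; on the solutions of interest it vanishes after
`τ` anyway. -/
noncomputable def src0 (X : ℕ → ℝ → ℝ) (r : ℝ) : ℝ :=
  -(chi P.τ r * P.g (X 0 (min r P.τ))) + 2 * P.γ * P.j * X 1 r

/-- Force on site `n + 1` besides `-κ²` times its displacement. -/
noncomputable def src (X : ℕ → ℝ → ℝ) (n : ℕ) (r : ℝ) : ℝ :=
  P.γ * (X (n + 2) r - 2 * X (n + 1) r + X n r) - P.N (X (n + 1) r)

/-- The integral operator whose fixed points are the half-lattice solutions vanishing at `s = 0`,
with momentum `p` of the centre at `s = 0` and neighbours at rest at `s = L`. No condition at `L` is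
imposed on the centre. -/
noncomputable def OP (p : ℝ) (X : ℕ → ℝ → ℝ) : ℕ → ℝ → ℝ
  | 0, s => p * (sin (P.ω * s) / P.ω) + SS P.ω (P.src0 X) s
  | n + 1, s => GG P.κ P.L (P.src X n) s

variable {P}

lemma Good.ω_pos (h : P.Good) : 0 < P.ω := by
  have := h.γ_pos
  unfold ω; positivity

lemma Good.ω_sq (h : P.Good) : P.ω ^ 2 = 2 * P.γ := by
  have := h.γ_pos
  unfold ω; rw [sq_sqrt]; positivity

lemma lip_cont {f : ℝ → ℝ} {M : ℝ} (hM : 0 ≤ M) (h : ∀ x y, |f x - f y| ≤ M * |x - y|) :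
    Continuous f :=
  (LipschitzWith.of_dist_le_mul (K := ⟨M, hM⟩) (fun x y => by
    rw [Real.dist_eq, Real.dist_eq]; exact h x y)).continuous

lemma Good.g_cont (h : P.Good) : Continuous P.g := lip_cont h.M_nonneg h.g_lip
lemma Good.N_cont (h : P.Good) : Continuous P.N := lip_cont h.η_nonneg h.N_lip

lemma Good.src0_cont (h : P.Good) {X : ℕ → ℝ → ℝ} (hX : ∀ n, Continuous (X n)) :
    Continuous (P.src0 X) := by
  have := h.g_cont; have := continuous_chi P.τ; have := hX 0; have := hX 1
  unfold src0; fun_prop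

lemma Good.src_cont (h : P.Good) {X : ℕ → ℝ → ℝ} (hX : ∀ n, Continuous (X n)) (n : ℕ) :
    Continuous (P.src X n) := by
  have := h.N_cont; have := hX n; have := hX (n+1); have := hX (n+2)
  unfold src; fun_prop

lemma Good.OP_cont (h : P.Good) {X : ℕ → ℝ → ℝ} (hX : ∀ n, Continuous (X n)) (p : ℝ) (n : ℕ) :
    Continuous (P.OP p X n) := by
  cases n with
  | zero =>
    have := continuous_SS h.ω_pos.ne' (h.src0_cont hX)
    unfold OP; fun_prop
  | succ n =>
    have := continuous_SS h.κ_pos.ne' (h.src_cont hX n)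
    unfold OP GG; fun_prop

lemma Good.w_ge (h : P.Good) {s : ℝ} (hs : 0 ≤ s) : 1 + s ≤ P.w s := by
  unfold w
  have h1 : 0 ≤ min s (P.τ + 1) := le_min hs (by linarith [h.τ_nonneg])
  have h2 : 1 ≤ exp (P.K * min s (P.τ + 1)) := one_le_exp (mul_nonneg h.K_pos.le h1)
  nlinarith

lemma Good.w_le (h : P.Good) {s : ℝ} (hs : s ∈ Set.Icc 0 P.L) :
    P.w s ≤ (1 + P.L) * exp (P.K * (P.τ + 1)) := by
  unfold w
  have := h.K_pos; have := hs.1; have := hs.2; have := h.L_pos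
  have hm : min s (P.τ + 1) ≤ P.τ + 1 := min_le_right _ _
  gcongr

lemma Good.W_pos (h : P.Good) (n : ℕ) {s : ℝ} (hs : 0 ≤ s) : 0 < P.W n s := by
  cases n with
  | zero => exact lt_of_lt_of_le (by linarith) (h.w_ge hs)
  | succ n => have := h.B_pos; unfold W; positivity

lemma W_cont (n : ℕ) : Continuous (P.W n) := by
  cases n with
  | zero => unfold W w; fun_prop
  | succ n => unfold W; fun_prop

/-- The on-site force at the centre contributes a factor `1 / 4` to the contraction, because the
exponential rate `K` of the weight is large compared with its Lipschitz constant. -/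
lemma Good.center_est (h : P.Good) {x x' : ℝ → ℝ} (hx : Continuous x) (hx' : Continuous x')
    {δ : ℝ} (hδ : 0 ≤ δ) (hd : ∀ s ∈ Set.Icc 0 P.L, |x s - x' s| ≤ P.w s * δ)
    {s : ℝ} (hs : s ∈ Set.Icc 0 P.L) :
    |SS P.ω (fun r => chi P.τ r * (P.g (x (min r P.τ)) - P.g (x' (min r P.τ)))) s|
      ≤ P.w s * (δ / 4) := by
  have hg := h.g_cont; have hch := continuous_chi P.τ
  have hf : Continuous (fun r => chi P.τ r * (P.g (x (min r P.τ)) - P.g (x' (min r P.τ)))) := by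
    fun_prop
  have hτ := h.τ_nonneg
  have hM := h.M_nonneg
  refine (abs_SS_le h.ω_pos hf hs.1).trans ?_
  have h1 := int_abs_le_exp (K := P.K) (b := δ / 4) (τ := P.τ + 1) hf (by positivity) hs.1
    (by positivity) ?_ ?_
  · have := hs.1
    calc _ ≤ s * (δ / 4 * exp (P.K * min s (P.τ + 1))) := by gcongr
      _ ≤ (1 + s) * (δ / 4 * exp (P.K * min s (P.τ + 1))) := by gcongr; linarith
      _ = _ := by unfold w; ring
  · intro r hr hrτ
    rw [abs_mul, abs_of_nonneg (chi_nonneg _ _)]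
    have hm : min r P.τ ∈ Set.Icc 0 P.L :=
      ⟨le_min hr.1 hτ, (min_le_left _ _).trans (hr.2.trans hs.2)⟩
    have a1 := h.g_lip (x (min r P.τ)) (x' (min r P.τ))
    have a2 := hd _ hm
    have a3 : P.w (min r P.τ) ≤ (2 + P.τ) * exp (P.K * r) := by
      unfold w
      have := h.K_pos
      have := hm.1
      have : min (min r P.τ) (P.τ + 1) ≤ r := (min_le_left _ _).trans (min_le_left _ _)
      have : min r P.τ ≤ P.τ := min_le_right _ _
      gcongr
      linarith
    calc _ ≤ 1 * (P.M * (((2 + P.τ) * exp (P.K * r)) * δ)) := by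
          have := chi_le_one P.τ r
          gcongr
          refine a1.trans ?_
          gcongr
          refine a2.trans ?_
          gcongr
      _ = (4 * (P.M * (2 + P.τ))) * (δ / 4 * exp (P.K * r)) := by ring
      _ ≤ P.K * (δ / 4 * exp (P.K * r)) := by gcongr; exact h.K_ge
      _ = _ := by ring
  · intro r hr hrτ
    rw [chi_zero hrτ, zero_mul]

/-- `OP` contracts by `1 / 2` in the weighted norm and is Lipschitz in the momentum `p`. -/
lemma Good.OP_est (h : P.Good) {X X' : ℕ → ℝ → ℝ} (hX : ∀ n, Continuous (X n))
    (hX' : ∀ n, Continuous (X' n)) {δ : ℝ} (hδ : 0 ≤ δ)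
    (hd : ∀ n, ∀ s ∈ Set.Icc 0 P.L, |X n s - X' n s| ≤ P.W n s * δ) (p p' : ℝ)
    (n : ℕ) {s : ℝ} (hs : s ∈ Set.Icc 0 P.L) :
    |P.OP p X n s - P.OP p' X' n s| ≤ P.W n s * (δ / 2 + |p - p'|) := by
  have hg := h.g_cont; have hch := continuous_chi P.τ
  have hB := h.B_pos; have hγ := h.γ_pos; have hL := h.L_pos; have hη := h.η_nonneg
  have hc := h.c_pos; have hκ := h.κ_pos
  have hs0 := hs.1
  cases n with
  | zero =>
    have e : P.OP p X 0 s - P.OP p' X' 0 s = (p - p') * (sin (P.ω * s) / P.ω)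
        + (SS P.ω (fun r => 2 * P.γ * P.j * (X 1 r - X' 1 r)) s
        - SS P.ω (fun r => chi P.τ r * (P.g (X 0 (min r P.τ)) - P.g (X' 0 (min r P.τ)))) s) := by
      have c0 := hX 0; have c1 := hX' 0; have c2 := hX 1; have c3 := hX' 1
      rw [SS_sub (by fun_prop) (by fun_prop)]
      have := SS_sub (a := P.ω) (h.src0_cont hX) (h.src0_cont hX') s
      simp only [OP]
      rw [show p * (sin (P.ω * s) / P.ω) + SS P.ω (P.src0 X) s
        - (p' * (sin (P.ω * s) / P.ω) + SS P.ω (P.src0 X') s)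
        = (p - p') * (sin (P.ω * s) / P.ω) + (SS P.ω (P.src0 X) s - SS P.ω (P.src0 X') s) by ring,
        this]
      congr 2
      funext r
      unfold src0; ring
    have b1 := h.center_est (hX 0) (hX' 0) hδ (hd 0) hs
    have b2 : |(p - p') * (sin (P.ω * s) / P.ω)| ≤ P.w s * |p - p'| := by
      rw [abs_mul, mul_comm]
      have := abs_sin_mul_div_le h.ω_pos hs0
      have := h.w_ge hs0
      gcongr
      linarith
    have b3 : |SS P.ω (fun r => 2 * P.γ * P.j * (X 1 r - X' 1 r)) s| ≤ P.w s * (δ / 4) := by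
      have c2 := hX 1; have c3 := hX' 1
      refine (abs_SS_le h.ω_pos (by fun_prop) hs0).trans ?_
      have := int_abs_le_const (f := fun r => 2 * P.γ * P.j * (X 1 r - X' 1 r)) (s := s)
        (b := P.γ * P.B * δ) hs0 ?_
      · calc _ ≤ s * (s * (P.γ * P.B * δ)) := by gcongr
          _ ≤ s * (P.L * (P.γ * P.B * δ)) := by have := hs.2; gcongr
          _ = s * ((P.γ * P.B * P.L) * δ) := by ring
          _ ≤ s * (1 / 4 * δ) := by have := h.c1; gcongr
          _ ≤ P.w s * (1 / 4 * δ) := by have := h.w_ge hs0; gcongr; linarith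
          _ = _ := by ring
      · intro r hr
        have a1 := hd 1 r ⟨hr.1, hr.2.trans hs.2⟩
        simp only [W] at a1
        rw [abs_mul, abs_mul, abs_of_pos (by positivity : 0 < 2 * P.γ)]
        have := h.j_le
        calc _ ≤ 2 * P.γ * 1 * (P.B * (1 / 2) ^ (0 + 1) * δ) := by gcongr
          _ = _ := by ring
    rw [e]
    have t1 := abs_add_le ((p - p') * (sin (P.ω * s) / P.ω))
      (SS P.ω (fun r => 2 * P.γ * P.j * (X 1 r - X' 1 r)) s
        - SS P.ω (fun r => chi P.τ r * (P.g (X 0 (min r P.τ)) - P.g (X' 0 (min r P.τ)))) s)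
    have t2 := abs_sub (SS P.ω (fun r => 2 * P.γ * P.j * (X 1 r - X' 1 r)) s)
      (SS P.ω (fun r => chi P.τ r * (P.g (X 0 (min r P.τ)) - P.g (X' 0 (min r P.τ)))) s)
    simp only [W]
    linarith
  | succ n =>
    have e : P.OP p X (n + 1) s - P.OP p' X' (n + 1) s
        = GG P.κ P.L (fun r => P.src X n r - P.src X' n r) s := by
      simp only [OP]
      exact GG_sub (h.src_cont hX n) (h.src_cont hX' n) s
    have hc1 := h.src_cont hX n
    have hc2 := h.src_cont hX' n
    have b1 := abs_GG_le hκ hc h.c_le h.cos_ge (f := fun r => P.src X n r - P.src X' n r)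
      (by fun_prop) hs
    rw [e]
    refine b1.trans ?_
    have b2 := int_abs_le_const (f := fun r => P.src X n r - P.src X' n r) (s := P.L)
      (b := P.B * (1 / 2) ^ (n + 1) * δ * (5 * P.γ + P.η)
        + (if n = 0 then P.γ * ((1 + P.L) * exp (P.K * (P.τ + 1))) * δ else 0)) hL.le ?_
    · have k : 2 / (P.c * P.κ) * (P.L *
          (if n = 0 then P.γ * ((1 + P.L) * exp (P.K * (P.τ + 1))) * δ else 0))
          ≤ P.B * (1 / 2) ^ (n + 1) * (δ / 4) := by
        split_ifs with h0
        · subst h0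
          have := h.c3
          calc _ = (2 / (P.c * P.κ) * P.L * (P.γ * ((1 + P.L) * exp (P.K * (P.τ + 1))))) * δ := by
                ring
            _ ≤ P.B / 8 * δ := by gcongr
            _ = _ := by ring
        · rw [mul_zero, mul_zero]; positivity
      have k2 : 2 / (P.c * P.κ) * (P.L * (P.B * (1 / 2) ^ (n + 1) * δ * (5 * P.γ + P.η)))
          ≤ P.B * (1 / 2) ^ (n + 1) * (δ / 4) := by
        have := h.c2
        calc _ = (P.B * (1 / 2) ^ (n + 1) * δ) * (2 / (P.c * P.κ) * P.L * (5 * P.γ + P.η)) := by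
              ring
          _ ≤ (P.B * (1 / 2) ^ (n + 1) * δ) * (1 / 4) := by gcongr
          _ = _ := by ring
      have k3 : 0 ≤ P.B * (1 / 2) ^ (n + 1) * |p - p'| := by positivity
      simp only [W]
      calc _ ≤ 2 / (P.c * P.κ) * (P.L * (P.B * (1 / 2) ^ (n + 1) * δ * (5 * P.γ + P.η)
        + (if n = 0 then P.γ * ((1 + P.L) * exp (P.K * (P.τ + 1))) * δ else 0))) := by gcongr
        _ = 2 / (P.c * P.κ) * (P.L * (P.B * (1 / 2) ^ (n + 1) * δ * (5 * P.γ + P.η)))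
          + 2 / (P.c * P.κ) * (P.L *
          (if n = 0 then P.γ * ((1 + P.L) * exp (P.K * (P.τ + 1))) * δ else 0)) := by ring
        _ ≤ _ := by linarith
    · intro r hr
      have a1 := hd (n + 1) r hr
      have a2 := hd (n + 2) r hr
      have a3 := h.N_lip (X (n + 1) r) (X' (n + 1) r)
      simp only [W] at a1 a2
      have a4 : |X n r - X' n r| ≤ 2 * (P.B * (1 / 2) ^ (n + 1) * δ)
          + (if n = 0 then ((1 + P.L) * exp (P.K * (P.τ + 1))) * δ else 0) := by
        have a0 := hd n r hr
        cases n with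
        | zero =>
          simp only [W] at a0
          have := h.w_le hr
          have : P.w r * δ ≤ (1 + P.L) * exp (P.K * (P.τ + 1)) * δ := by gcongr
          have : 0 ≤ 2 * (P.B * (1 / 2) ^ (0 + 1) * δ) := by positivity
          simp only [if_true]
          linarith
        | succ n =>
          simp only [W] at a0
          simp only [Nat.succ_ne_zero, if_false]
          refine a0.trans (le_of_eq ?_)
          rw [pow_succ _ (n + 1)]; ring
      have a5 : |P.src X n r - P.src X' n r| ≤ P.γ * (|X (n + 2) r - X' (n + 2) r|
          + 2 * |X (n + 1) r - X' (n + 1) r| + |X n r - X' n r|)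
          + |P.N (X (n + 1) r) - P.N (X' (n + 1) r)| := by
        have e : P.src X n r - P.src X' n r = P.γ * ((X (n + 2) r - X' (n + 2) r)
          - 2 * (X (n + 1) r - X' (n + 1) r) + (X n r - X' n r))
          - (P.N (X (n + 1) r) - P.N (X' (n + 1) r)) := by unfold src; ring
        rw [e]
        refine (abs_sub _ _).trans ?_
        rw [abs_mul, abs_of_pos hγ]
        gcongr
        refine (abs_add_le _ _).trans ?_
        gcongr
        refine (abs_sub _ _).trans ?_
        rw [abs_mul, abs_of_pos (by norm_num : (0:ℝ) < 2)]
      have a6 : P.η * |X (n + 1) r - X' (n + 1) r| ≤ P.η * (P.B * (1 / 2) ^ (n + 1) * δ) := by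
        gcongr
      have a7 : P.γ * (|X (n + 2) r - X' (n + 2) r|
          + 2 * |X (n + 1) r - X' (n + 1) r| + |X n r - X' n r|)
          ≤ P.γ * (P.B * (1 / 2) ^ (n + 1 + 1) * δ + 2 * (P.B * (1 / 2) ^ (n + 1) * δ)
          + (2 * (P.B * (1 / 2) ^ (n + 1) * δ)
          + (if n = 0 then ((1 + P.L) * exp (P.K * (P.τ + 1))) * δ else 0))) := by gcongr
      have a8 : P.γ * (if n = 0 then ((1 + P.L) * exp (P.K * (P.τ + 1))) * δ else 0)
        = (if n = 0 then P.γ * ((1 + P.L) * exp (P.K * (P.τ + 1))) * δ else 0) := by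
        split_ifs <;> ring
      have a9 : P.γ * (P.B * (1 / 2) ^ (n + 1 + 1) * δ) ≤ P.γ * (P.B * (1 / 2) ^ (n + 1) * δ) := by
        gcongr ?_ * (?_ * ?_ * ?_)
        rw [pow_succ]
        have : (0:ℝ) < (1 / 2) ^ (n + 1) := by positivity
        linarith
      rw [← a8]
      nlinarith
end Par

end

section

/-! ### Fixed points of the truncated problem -/

namespace Par
variable {P : Par}

/-- Projection of the real line onto `[0, L]`. -/
noncomputable def cl (L s : ℝ) : ℝ := max 0 (min s L)
lemma cl_mem {L : ℝ} (hL : 0 ≤ L) (s : ℝ) : cl L s ∈ Set.Icc 0 L :=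
  ⟨le_max_left _ _, max_le hL (min_le_right _ _)⟩
lemma cl_eq {L s : ℝ} (hs : s ∈ Set.Icc 0 L) : cl L s = s := by
  unfold cl; rw [min_eq_left hs.2, max_eq_right hs.1]
lemma continuous_cl (L : ℝ) : Continuous (cl L) := by unfold cl; fun_prop

/-- The sequence of functions with normalised values `u`: multiplication by the weights, after
extending constantly beyond `[0, L]`. -/
noncomputable def dec (P : Par) (u : BoundedContinuousFunction (ℕ × ℝ) ℝ) (n : ℕ) (s : ℝ) : ℝ :=
  P.W n (cl P.L s) * u (n, cl P.L s)

lemma dec_cont (u : BoundedContinuousFunction (ℕ × ℝ) ℝ) (n : ℕ) : Continuous (dec P u n) := by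
  have := W_cont (P := P) n
  have := continuous_cl P.L
  unfold dec
  fun_prop

lemma Good.dec_dist (h : P.Good) (u v : BoundedContinuousFunction (ℕ × ℝ) ℝ) (n : ℕ) {s : ℝ}
    (hs : s ∈ Set.Icc 0 P.L) : |dec P u n s - dec P v n s| ≤ P.W n s * dist u v := by
  unfold dec
  rw [cl_eq hs, ← mul_sub, abs_mul, abs_of_pos (h.W_pos n hs.1)]
  have := BoundedContinuousFunction.dist_coe_le_dist (f := u) (g := v) (n, s)
  rw [Real.dist_eq] at this
  have := (h.W_pos n hs.1)
  gcongr

lemma Good.OP_zero (n : ℕ) (s : ℝ) (h : P.Good) : P.OP 0 (fun _ _ => 0) n s = 0 := by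
  cases n with
  | zero =>
    have : P.src0 (fun _ _ => 0) = fun _ => 0 := by
      funext r; simp [src0, h.g_zero]
    simp [OP, this, SS]
  | succ n =>
    have : P.src (fun _ _ => 0) n = fun _ => 0 := by
      funext r; simp [src, h.N_zero]
    simp [OP, this, SS, CC, GG]

lemma Good.OP_bound (h : P.Good) (p : ℝ) {X : ℕ → ℝ → ℝ} (hX : ∀ n, Continuous (X n)) {δ : ℝ}
    (hδ : 0 ≤ δ) (hd : ∀ n, ∀ s ∈ Set.Icc 0 P.L, |X n s| ≤ P.W n s * δ) (n : ℕ) {s : ℝ}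
    (hs : s ∈ Set.Icc 0 P.L) : |P.OP p X n s| ≤ P.W n s * (δ / 2 + |p|) := by
  have := h.OP_est hX (X' := fun _ _ => 0) (fun _ => continuous_const) hδ
    (by simpa using hd) p 0 n hs
  simpa [Good.OP_zero n s h] using this

/-- `OP` conjugated by the weights, as a self-map of the bounded continuous functions on `ℕ × ℝ`. -/
noncomputable def Good.Phi (h : P.Good) (p : ℝ) (u : BoundedContinuousFunction (ℕ × ℝ) ℝ) :
    BoundedContinuousFunction (ℕ × ℝ) ℝ :=
  BoundedContinuousFunction.ofNormedAddCommGroup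
    (fun x : ℕ × ℝ => P.OP p (dec P u) x.1 (cl P.L x.2) / P.W x.1 (cl P.L x.2))
    (by
      rw [continuous_prod_of_discrete_left]
      intro n
      have h1 := h.OP_cont (dec_cont (P := P) u) p n
      have h2 := W_cont (P := P) n
      have h3 := continuous_cl P.L
      exact Continuous.div (h1.comp h3) (h2.comp h3)
        fun s => (h.W_pos n (cl_mem h.L_pos.le s).1).ne')
    (‖u‖ / 2 + |p|)
    (by
      rintro ⟨n, s⟩
      have hs := cl_mem h.L_pos.le s
      have h0 := h.W_pos n hs.1
      simp only [norm_div, Real.norm_eq_abs, abs_of_pos h0]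
      rw [div_le_iff₀ h0, mul_comm]
      refine h.OP_bound p (dec_cont u) (norm_nonneg u) ?_ n hs
      intro n s hs
      have := h.dec_dist u 0 n hs
      simpa [dec] using this)

lemma Good.Phi_dist (h : P.Good) (p p' : ℝ) (u v : BoundedContinuousFunction (ℕ × ℝ) ℝ) :
    dist (h.Phi p u) (h.Phi p' v) ≤ dist u v / 2 + |p - p'| := by
  rw [BoundedContinuousFunction.dist_le (by positivity)]
  rintro ⟨n, s⟩
  have hs := cl_mem h.L_pos.le s
  have h0 := h.W_pos n hs.1
  have := h.OP_est (dec_cont u) (dec_cont v) dist_nonneg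
    (fun n s hs => h.dec_dist u v n hs) p p' n hs
  rw [Real.dist_eq]
  simp only [Good.Phi, BoundedContinuousFunction.coe_ofNormedAddCommGroup]
  rw [← sub_div, abs_div, abs_of_pos h0, div_le_iff₀ h0, mul_comm]
  exact this

/-- For every momentum `p` the truncated problem has a solution, bounded by the weights and
depending on `p` in a Lipschitz way; this is the Banach fixed point theorem for `Good.Phi`. -/
theorem Good.exists_family (h : P.Good) : ∃ X : ℝ → ℕ → ℝ → ℝ,
    (∀ p n, Continuous (X p n)) ∧
    (∀ p n, ∀ s ∈ Set.Icc 0 P.L, X p n s = P.OP p (X p) n s) ∧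
    (∀ p n, ∀ s ∈ Set.Icc 0 P.L, |X p n s| ≤ P.W n s * (2 * |p|)) ∧
    (∀ p p' n, ∀ s ∈ Set.Icc 0 P.L, |X p n s - X p' n s| ≤ P.W n s * (2 * |p - p'|)) := by
  have hc : ∀ p, ContractingWith (1 / 2) (h.Phi p) := fun p =>
    ⟨by rw [← NNReal.coe_lt_coe]; norm_num, LipschitzWith.of_dist_le_mul fun u v => by
      have := h.Phi_dist p p u v
      simp at this ⊢
      linarith⟩
  have hfix : ∀ p, ∃ u, h.Phi p u = u := fun p =>
    ⟨_, ContractingWith.fixedPoint_isFixedPt (hc p)⟩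
  choose u hu using hfix
  have hd : ∀ p p', dist (u p) (u p') ≤ 2 * |p - p'| := fun p p' => by
    have := h.Phi_dist p p' (u p) (u p')
    rw [hu, hu] at this; linarith
  have h0 : u 0 = 0 := by
    have h1 : h.Phi 0 0 = 0 := by
      ext ⟨n, s⟩
      have e : dec P 0 = fun _ _ => 0 := by funext n s; simp [dec]
      simp [Good.Phi, e, Good.OP_zero n _ h]
    have := h.Phi_dist 0 0 (u 0) 0
    rw [hu, h1, sub_self, abs_zero] at this
    exact dist_le_zero.1 (by linarith)
  have hdec : ∀ p p' n, ∀ s ∈ Set.Icc 0 P.L,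
      |dec P (u p) n s - dec P (u p') n s| ≤ P.W n s * (2 * |p - p'|) := fun p p' n s hs => by
    refine (h.dec_dist _ _ n hs).trans ?_
    have := h.W_pos n hs.1
    have := hd p p'
    gcongr
  refine ⟨fun p => dec P (u p), fun p n => dec_cont _ _, fun p n s hs => ?_, fun p n s hs => ?_,
    hdec⟩
  · have h1 := h.W_pos n hs.1
    have e : u p (n, s) = P.OP p (dec P (u p)) n s / P.W n s := by
      conv_lhs => rw [← hu p]
      simp only [Good.Phi, BoundedContinuousFunction.coe_ofNormedAddCommGroup, cl_eq hs]
    change P.W n (cl P.L s) * u p (n, cl P.L s) = _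
    rw [cl_eq hs, e, mul_div_cancel₀ _ h1.ne']
  · have := hdec p 0 n s hs
    simpa [h0, dec] using this
end Par

end

section

/-! ### Odd reflection from a quarter period to the line -/

/-- The triangle wave of period `4 L` which is the identity on `[-L, L]`. -/
noncomputable def tri (L s : ℝ) : ℝ := 2 * L / π * arcsin (sin (π / (2 * L) * s))

lemma continuous_tri (L : ℝ) : Continuous (tri L) := by
  unfold tri
  exact continuous_const.mul (continuous_arcsin.comp (by fun_prop))

lemma tri_mem {L : ℝ} (hL : 0 < L) (s : ℝ) : tri L s ∈ Set.Icc (-L) L := by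
  have h1 := neg_pi_div_two_le_arcsin (sin (π / (2 * L) * s))
  have h2 := arcsin_le_pi_div_two (sin (π / (2 * L) * s))
  have hπ := pi_pos
  unfold tri
  have e : 2 * L / π * (π / 2) = L := by field_simp
  have h3 : 0 ≤ 2 * L / π := by positivity
  constructor
  · have := mul_le_mul_of_nonneg_left h1 h3
    linarith
  · have := mul_le_mul_of_nonneg_left h2 h3
    linarith

lemma tri_eq {L s : ℝ} (hL : 0 < L) (hs : s ∈ Set.Icc (-L) L) : tri L s = s := by
  have hπ := pi_pos
  have e : π / (2 * L) * L = π / 2 := by field_simp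
  have h3 : 0 ≤ π / (2 * L) := by positivity
  unfold tri
  rw [arcsin_sin]
  · field_simp
  · have := mul_le_mul_of_nonneg_left hs.1 h3
    linarith
  · have := mul_le_mul_of_nonneg_left hs.2 h3
    linarith

lemma tri_neg (L s : ℝ) : tri L (-s) = -tri L s := by
  unfold tri; rw [mul_neg, sin_neg, arcsin_neg, mul_neg]

lemma tri_refl {L : ℝ} (hL : 0 < L) (s : ℝ) : tri L (2 * L - s) = tri L s := by
  unfold tri
  rw [show π / (2 * L) * (2 * L - s) = π - π / (2 * L) * s by field_simp, sin_pi_sub]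

/-- The extension of `y` from `[0, L]` that is odd about `0` and even about `L`, assuming
`y 0 = 0`. -/
noncomputable def oddExt (L : ℝ) (y : ℝ → ℝ) (s : ℝ) : ℝ :=
  y (max (tri L s) 0) - y (max (-tri L s) 0)

lemma continuous_oddExt (L : ℝ) {f : ℝ → ℝ} (hf : Continuous f) : Continuous (oddExt L f) := by
  have := continuous_tri L
  unfold oddExt; fun_prop

lemma oddExt_neg (L : ℝ) (y : ℝ → ℝ) (s : ℝ) : oddExt L y (-s) = -oddExt L y s := by
  unfold oddExt; rw [tri_neg]; simp

lemma oddExt_refl {L : ℝ} (hL : 0 < L) (y : ℝ → ℝ) (s : ℝ) : oddExt L y (2 * L - s) = oddExt L y s := by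
  unfold oddExt; rw [tri_refl hL]

lemma oddExt_eq {L : ℝ} (hL : 0 < L) {y : ℝ → ℝ} (h0 : y 0 = 0) {s : ℝ} (hs : s ∈ Set.Icc 0 L) :
    oddExt L y s = y s := by
  unfold oddExt
  rw [tri_eq hL ⟨by linarith [hs.1], hs.2⟩, max_eq_left hs.1,
    max_eq_right (by linarith [hs.1] : -s ≤ 0), h0, sub_zero]

/-- A function that is odd about `0` and even about `L` is determined by its values on `[-L, L]`. -/
lemma sym_tri {L : ℝ} (hL : 0 < L) {Y : ℝ → ℝ} (h1 : ∀ s, Y (-s) = -Y s)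
    (h2 : ∀ s, Y (2 * L - s) = Y s) (s : ℝ) : Y (tri L s) = Y s := by
  have hp : Function.Periodic Y (4 * L) := fun s => by
    rw [← h2, show 2 * L - (s + 4 * L) = -(2 * L - (-s)) by ring, h1, h2, h1, neg_neg]
  have hπ := pi_pos
  have e : sin (π / (2 * L) * tri L s) = sin (π / (2 * L) * s) := by
    unfold tri
    rw [show π / (2 * L) * (2 * L / π * arcsin (sin (π / (2 * L) * s)))
      = arcsin (sin (π / (2 * L) * s)) by field_simp, sin_arcsin (neg_one_le_sin _) (sin_le_one _)]
  have hL' := hL.ne'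
  obtain ⟨k, hk | hk⟩ := sin_eq_sin_iff.1 e
  · have : s = tri L s + k * (4 * L) := by
      field_simp at hk
      linarith
    conv_rhs => rw [this]
    rw [hp.int_mul k]
  · have : s = 2 * L - tri L s + k * (4 * L) := by
      field_simp at hk
      linarith
    conv_rhs => rw [this]
    rw [hp.int_mul k, h2]

lemma oddExt_comp_odd {L : ℝ} {y G : ℝ → ℝ} (h0 : y 0 = 0) (hG : ∀ x, G (-x) = -G x) (s : ℝ) :
    oddExt L (fun r => G (y r)) s = G (oddExt L y s) := by
  have hG0 : G 0 = 0 := by have := hG 0; simp at this; linarith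
  change G (y _) - G (y _) = G (y _ - y _)
  rcases le_total (tri L s) 0 with h | h
  · rw [max_eq_right h, h0, hG0, zero_sub, zero_sub, hG]
  · rw [max_eq_right (by linarith : -tri L s ≤ 0), h0, hG0, sub_zero, sub_zero]

lemma oddExt_congr {L : ℝ} (hL : 0 < L) {y y' : ℝ → ℝ} (h : ∀ s ∈ Set.Icc 0 L, y s = y' s) (s : ℝ) :
    oddExt L y s = oddExt L y' s := by
  have := tri_mem hL s
  unfold oddExt
  rw [h _ ⟨le_max_right _ _, max_le this.2 hL.le⟩,
    h _ ⟨le_max_right _ _, max_le (by linarith [this.1]) hL.le⟩]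

/-- If `y` solves `y″ + a² y = f` on `[0, L]` with `y(0) = y′(L) = 0` and `f(0) = 0`, its reflection
solves the reflected equation on the whole line. -/
theorem oddExt_ode {a L A : ℝ} (ha : 0 < a) (hL : 0 < L) {f y : ℝ → ℝ} (hf : Continuous f)
    (hf0 : f 0 = 0) (hy : ∀ s ∈ Set.Icc 0 L, y s = A * (sin (a * s) / a) + SS a f s)
    (hbc : A * cos (a * L) + CC a f L = 0) :
    ∃ dY : ℝ → ℝ, ∀ s, HasDerivAt (oddExt L y) (dY s) s ∧
      HasDerivAt dY (oddExt L f s - a ^ 2 * oddExt L y s) s := by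
  have hF := continuous_oddExt L hf
  set Y : ℝ → ℝ := fun s => A * (sin (a * s) / a) + SS a (oddExt L f) s with hY
  set dY : ℝ → ℝ := fun s => A * cos (a * s) + CC a (oddExt L f) s with hdY
  have d1 : ∀ s, HasDerivAt Y (dY s) s := fun s => by
    refine ((((hasDerivAt_sin_mul a s).div_const a).const_mul A).add
      (hasDerivAt_SS ha.ne' hF s)).congr_deriv ?_
    simp only [hdY]; field_simp
  have d2 : ∀ s, HasDerivAt dY (oddExt L f s - a ^ 2 * Y s) s := fun s => by
    refine (((hasDerivAt_cos_mul a s).const_mul A).add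
      (hasDerivAt_CC ha.ne' hF s)).congr_deriv ?_
    simp only [hY]; field_simp; ring
  have hcS : ∀ s ∈ Set.Icc 0 L, SS a (oddExt L f) s = SS a f s := fun s hs => by
    refine intervalIntegral.integral_congr fun r hr => ?_
    rw [Set.uIcc_of_le hs.1] at hr
    simp only [oddExt_eq hL hf0 ⟨hr.1, hr.2.trans hs.2⟩]
  have hcC : CC a (oddExt L f) L = CC a f L := by
    refine intervalIntegral.integral_congr fun r hr => ?_
    rw [Set.uIcc_of_le hL.le] at hr
    simp only [oddExt_eq hL hf0 hr]
  have hYy : ∀ s ∈ Set.Icc 0 L, Y s = y s := fun s hs => by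
    rw [hy s hs]; simp only [hY, hcS s hs]
  have hY0 : Y 0 = 0 := by simp [hY, SS]
  have hdYL : dY L = 0 := by simp only [hdY, hcC]; exact hbc
  -- `s ↦ Y s + Y (-s)` solves the homogeneous equation with zero Cauchy data at `0`
  have o1 : ∀ s, Y (-s) = -Y s := fun s => by
    have := harmonic_unique (a := a) (c := 0) ha.ne' (D := fun s => Y s + Y (-s))
      (dD := fun s => dY s - dY (-s)) ?_ ?_ (by simp [hY0]) (by simp) s
    · linarith
    · intro s
      refine ((d1 s).add (HasDerivAt.comp s (d1 (-s)) (hasDerivAt_neg s))).congr_deriv ?_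
      ring
    · intro s
      refine ((d2 s).sub (HasDerivAt.comp s (d2 (-s)) (hasDerivAt_neg s))).congr_deriv ?_
      rw [oddExt_neg]; ring
  have o2 : ∀ s, Y (2 * L - s) = Y s := fun s => by
    have := harmonic_unique (a := a) (c := L) ha.ne' (D := fun s => Y s - Y (2 * L - s))
      (dD := fun s => dY s + dY (2 * L - s)) ?_ ?_ (by
        rw [show 2 * L - L = L by ring, sub_self])
        (by
        rw [show 2 * L - L = L by ring, hdYL, add_zero]) s
    · linarith
    · intro s
      refine ((d1 s).sub (HasDerivAt.comp s (d1 (2 * L - s))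
        ((hasDerivAt_id s).const_sub (2 * L)))).congr_deriv ?_
      ring
    · intro s
      refine ((d2 s).add (HasDerivAt.comp s (d2 (2 * L - s))
        ((hasDerivAt_id s).const_sub (2 * L)))).congr_deriv ?_
      rw [oddExt_refl hL]; ring
  have hext : oddExt L y = Y := by
    funext s
    rw [← sym_tri hL o1 o2 s]
    have ht := tri_mem hL s
    have hy0 : y 0 = 0 := by rw [← hYy 0 ⟨le_rfl, hL.le⟩, hY0]
    unfold oddExt
    rcases le_total (tri L s) 0 with h | h
    · rw [max_eq_right h, max_eq_left (by linarith), hy0, zero_sub, ← neg_neg (tri L s), o1,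
        neg_neg, hYy _ ⟨by linarith, by linarith [ht.1]⟩]
    · rw [max_eq_left h, max_eq_right (by linarith), hy0, sub_zero, hYy _ ⟨h, ht.2⟩]
  rw [hext]
  exact ⟨dY, fun s => ⟨d1 s, d2 s⟩⟩

end

section

/-! ### The potential -/

/-- Properties of the potential used below: an even well with values in `[0, VL]`, zero at the
origin and constant outside `[-a0, a0]`, with Lipschitz derivative. The field `near` says that `V′ - κ²` has Lipschitz
constant `o(ρ)` on `[-ρ, ρ]`; it expresses `V″(0) = κ²` and `V‴(0) = 0`. -/
structure Pot (V : ℝ → ℝ) (VL Vinf a0 κ M : ℝ) : Prop where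
  C2 : ContDiff ℝ 2 V
  even : ∀ x, V (-x) = V x
  nonneg : ∀ x, 0 ≤ V x
  le : ∀ x, V x ≤ VL
  a0_pos : 0 < a0
  const : ∀ x : ℝ, a0 ≤ |x| → V x = Vinf
  V0 : V 0 = 0
  M_pos : 0 < M
  lip : ∀ x y, |deriv V x - deriv V y| ≤ M * |x - y|
  near : ∀ η > 0, ∃ r > 0, ∀ ρ, 0 ≤ ρ → ρ ≤ r → ∀ x ∈ Set.Icc (-ρ) ρ, ∀ y ∈ Set.Icc (-ρ) ρ,
    |(deriv V x - κ ^ 2 * x) - (deriv V y - κ ^ 2 * y)| ≤ η * ρ * |x - y|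

lemma deriv_even_odd {f : ℝ → ℝ} (h : ∀ x, f (-x) = f x) (x : ℝ) : deriv f (-x) = -deriv f x := by
  have := deriv_comp_neg f (-x)
  rw [neg_neg] at this
  rw [← this]
  congr 1
  funext y; exact (h y).symm

lemma deriv_odd_even {f : ℝ → ℝ} (h : ∀ x, f (-x) = -f x) (x : ℝ) : deriv f (-x) = deriv f x := by
  have := deriv_comp_neg f (-x)
  rw [neg_neg] at this
  have e : (fun y => f (-y)) = fun y => -f y := by funext y; exact h y
  rw [e] at this
  have h2 : deriv (fun y => -f y) (-x) = -deriv f (-x) := deriv.fun_neg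
  rw [h2] at this
  linarith

section
variable {V : ℝ → ℝ} {VL Vinf a0 κ M x₀ : ℝ}

/-- The assumptions on `V` give a `Pot`; the third derivative at `0` vanishes since `V` is even. -/
lemma exists_pot
    (hV : ContDiff ℝ 2 V) (hVeven : ∀ x, V (-x) = V x)
    (hx₀ : 0 < x₀) (hV7 : ContDiffOn ℝ 7 V (Set.Ioo (-x₀) x₀))
    (htaylor : ∃ K > (0:ℝ), ∃ r > (0:ℝ), ∀ x : ℝ, |x| ≤ r →
      |V x - κ ^ 2 * x ^ 2 / 2| ≤ K * x ^ 6)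
    (hVnonneg : ∀ x, 0 ≤ V x) (hVle : ∀ x, V x ≤ VL)
    (ha0 : 0 < a0) (hVconst : ∀ x : ℝ, a0 ≤ |x| → V x = Vinf) :
    ∃ M, Pot V VL Vinf a0 κ M := by
  have V0 : V 0 = 0 := by
    obtain ⟨K, _, r, hr, h⟩ := htaylor
    have := h 0 (by simpa using hr.le)
    simpa using this
  have C1 : ContDiff ℝ 1 (deriv V) := by
    have : ContDiff ℝ (1 + 1) V := by simpa [one_add_one_eq_two] using hV
    exact (contDiff_succ_iff_deriv.1 this).2.2
  have dV : Differentiable ℝ V := hV.differentiable (by norm_num)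
  have dV1 : Differentiable ℝ (deriv V) := C1.differentiable (by norm_num)
  have cV2 : Continuous (deriv (deriv V)) := C1.continuous_deriv le_rfl
  have odd := deriv_even_odd hVeven
  have ev2 := deriv_odd_even odd
  have d0 : deriv V 0 = 0 := by have := odd 0; simp at this; linarith
  have out1 : ∀ x, a0 < |x| → deriv V x = 0 := by
    intro x hx
    have : V =ᶠ[nhds x] fun _ => Vinf := by
      have ho : IsOpen {y : ℝ | a0 < |y|} := isOpen_lt continuous_const continuous_abs
      filter_upwards [ho.mem_nhds hx] with y hy using hVconst y (le_of_lt hy)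
    rw [this.deriv_eq]; simp
  have out2 : ∀ x, a0 < |x| → deriv (deriv V) x = 0 := by
    intro x hx
    have : deriv V =ᶠ[nhds x] fun _ => 0 := by
      have ho : IsOpen {y : ℝ | a0 < |y|} := isOpen_lt continuous_const continuous_abs
      filter_upwards [ho.mem_nhds hx] with y hy using out1 y hy
    rw [this.deriv_eq]; simp
  obtain ⟨M0, hM0⟩ := (isCompact_Icc (a := -a0) (b := a0)).exists_bound_of_continuousOn
    cV2.continuousOn
  have hbd : ∀ x, ‖deriv (deriv V) x‖ ≤ max M0 1 := by
    intro x
    by_cases hx : a0 < |x|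
    · rw [out2 x hx]; simp
    · exact (hM0 x (abs_le.1 (not_lt.1 hx))).trans (le_max_left _ _)
  have v2 : deriv (deriv V) 0 = κ ^ 2 := by
    obtain ⟨K, hK, r, hr, ht⟩ := htaylor
    set v := deriv (deriv V) 0 with hv
    have hd : HasDerivAt (deriv V) v 0 := (dV1 0).hasDerivAt
    have key : ∀ ε > 0, |v - κ ^ 2| ≤ 4 * ε := by
      intro ε hε
      have h1 := (hasDerivAt_iff_isLittleO.1 hd).def hε
      rw [Metric.eventually_nhds_iff] at h1
      obtain ⟨δ, hδ, h1⟩ := h1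
      obtain ⟨x, hx0, hx1⟩ : ∃ x > 0, x < min (min δ r) (min 1 (ε / K)) :=
        exists_between (by positivity)
      simp only [lt_min_iff] at hx1
      obtain ⟨⟨hxδ, hxr⟩, hx1, hxε⟩ := hx1
      have h2 := Convex.norm_image_sub_le_of_norm_deriv_le (𝕜 := ℝ)
        (f := fun y => V y - v * y ^ 2 / 2) (s := Set.Icc 0 x) (C := ε * x) (x := 0) (y := x)
        (fun y _ => by fun_prop) (fun y hy => by
          have e : deriv (fun y => V y - v * y ^ 2 / 2) y = deriv V y - v * y := by
            have := ((dV y).hasDerivAt.sub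
              (((hasDerivAt_pow 2 y).const_mul v).div_const 2)).deriv
            refine this.trans ?_
            push_cast; ring
          rw [e]
          have h3 := h1 (y := y) (by
            rw [Real.dist_eq, sub_zero, abs_of_nonneg hy.1]; exact lt_of_le_of_lt hy.2 hxδ)
          simp only [d0, sub_zero, smul_eq_mul, Real.norm_eq_abs] at h3 ⊢
          rw [mul_comm v]
          refine h3.trans ?_
          rw [abs_of_nonneg hy.1]
          have := hy.2
          gcongr) (convex_Icc 0 x) ⟨le_rfl, hx0.le⟩ ⟨hx0.le, le_rfl⟩
      simp only [V0, Real.norm_eq_abs, sub_zero] at h2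
      rw [abs_of_pos hx0] at h2
      have h3 := ht x (by rw [abs_of_pos hx0]; exact hxr.le)
      have h4 : K * x ^ 6 ≤ ε * x ^ 2 := by
        rw [lt_div_iff₀ hK] at hxε
        have : x ^ 4 ≤ x := by
          calc x ^ 4 ≤ x ^ 1 := pow_le_pow_of_le_one hx0.le hx1.le (by norm_num)
            _ = x := pow_one x
        calc K * x ^ 6 = K * x ^ 4 * x ^ 2 := by ring
          _ ≤ (x * K) * x ^ 2 := by rw [mul_comm x K]; gcongr
          _ ≤ _ := by gcongr
      have h5 : |v - κ ^ 2| * x ^ 2 ≤ 4 * ε * x ^ 2 := by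
        rw [← abs_of_pos (show 0 < x ^ 2 by positivity), ← abs_mul, abs_of_pos (show 0 < x ^ 2 by positivity)]
        norm_num at h2
        rw [abs_le] at h2 h3 ⊢
        constructor <;> nlinarith [h2.1, h2.2, h3.1, h3.2]
      exact le_of_mul_le_mul_right h5 (by positivity)
    have : |v - κ ^ 2| ≤ 0 := le_of_forall_pos_le_add fun ε hε => by
      have := key (ε / 4) (by positivity)
      linarith
    have := abs_nonpos_iff.1 this
    linarith
  have d3 : HasDerivAt (deriv (deriv V)) 0 0 := by
    have o : IsOpen (Set.Ioo (-x₀) x₀) := isOpen_Ioo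
    have m0 : (0:ℝ) ∈ Set.Ioo (-x₀) x₀ := ⟨by linarith, hx₀⟩
    have k1 : ContDiffOn ℝ 6 (deriv V) (Set.Ioo (-x₀) x₀) := hV7.deriv_of_isOpen o (by norm_num)
    have k2 : ContDiffOn ℝ 5 (deriv (deriv V)) (Set.Ioo (-x₀) x₀) :=
      k1.deriv_of_isOpen o (by norm_num)
    have k3 : DifferentiableAt ℝ (deriv (deriv V)) 0 :=
      (k2.differentiableOn (by norm_num)).differentiableAt (o.mem_nhds m0)
    have := k3.hasDerivAt
    have e : deriv (deriv (deriv V)) 0 = 0 := by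
      have := deriv_even_odd ev2 0
      simp at this; linarith
    rwa [e] at this
  refine ⟨max M0 1, hV, hVeven, hVnonneg, hVle, ha0, hVconst, V0, by positivity, ?_, ?_⟩
  · intro x y
    have := Convex.norm_image_sub_le_of_norm_deriv_le (𝕜 := ℝ) (f := deriv V) (s := Set.univ)
      (C := max M0 1) (x := y) (y := x) (fun y _ => dV1 y) (fun y _ => hbd y) convex_univ
      trivial trivial
    simpa using this
  · intro η hη
    have h1 := (hasDerivAt_iff_isLittleO.1 d3).def hη
    rw [Metric.eventually_nhds_iff] at h1
    obtain ⟨δ, hδ, h1⟩ := h1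
    refine ⟨δ / 2, by positivity, fun ρ hρ hρδ x hx y hy => ?_⟩
    have := Convex.norm_image_sub_le_of_norm_deriv_le (𝕜 := ℝ)
      (f := fun z => deriv V z - κ ^ 2 * z) (s := Set.Icc (-ρ) ρ)
      (C := η * ρ) (x := y) (y := x) (fun y _ => by fun_prop) (fun z hz => by
        have e : deriv (fun z => deriv V z - κ ^ 2 * z) z = deriv (deriv V) z - κ ^ 2 := by
          have := ((dV1 z).hasDerivAt.sub ((hasDerivAt_id z).const_mul (κ ^ 2))).deriv
          refine this.trans ?_
          ring
        have hz' := abs_le.2 hz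
        rw [e, ← v2]
        have h3 := h1 (y := z) (by
            rw [Real.dist_eq, sub_zero]; linarith)
        simp only [sub_zero, smul_eq_mul, Real.norm_eq_abs, mul_zero] at h3 ⊢
        refine h3.trans ?_
        gcongr) (convex_Icc _ _) hy hx
    simpa using this

end

namespace Pot
variable {V : ℝ → ℝ} {VL Vinf a0 κ M : ℝ} (H : Pot V VL Vinf a0 κ M)
include H

lemma odd (x : ℝ) : deriv V (-x) = -deriv V x := deriv_even_odd H.even x
lemma d0 : deriv V 0 = 0 := by have := H.odd 0; simp at this; linarith
lemma hasDeriv (x : ℝ) : HasDerivAt V (deriv V x) x :=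
  ((H.C2.differentiable (by norm_num)) x).hasDerivAt
lemma cont : Continuous V := H.C2.continuous
lemma cont_deriv : Continuous (deriv V) := Par.lip_cont H.M_pos.le H.lip

lemma out {x : ℝ} (hx : a0 ≤ |x|) : deriv V x = 0 := by
  have key : ∀ y, a0 < |y| → deriv V y = 0 := by
    intro x hx
    have : V =ᶠ[nhds x] fun _ => Vinf := by
      have ho : IsOpen {y : ℝ | a0 < |y|} := isOpen_lt continuous_const continuous_abs
      filter_upwards [ho.mem_nhds hx] with y hy using H.const y (le_of_lt hy)
    rw [this.deriv_eq]; simp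
  have ha := H.a0_pos
  by_contra hne
  have hM := H.M_pos
  have hp : 0 < |deriv V x| := abs_pos.2 hne
  set t := |deriv V x| / (2 * M * |x|) with ht
  have hx0 : 0 < |x| := by linarith
  have htp : 0 < t := by positivity
  have h1 := key (x * (1 + t)) (by
    rw [abs_mul, abs_of_pos (by linarith : 0 < 1 + t)]; nlinarith)
  have h2 := H.lip x (x * (1 + t))
  rw [h1, sub_zero, show x - x * (1 + t) = -(x * t) by ring, abs_neg, abs_mul, abs_of_pos htp] at h2
  have : M * (|x| * t) = |deriv V x| / 2 := by rw [ht]; field_simp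
  linarith

lemma bound (x : ℝ) : |deriv V x| ≤ M * a0 := by
  have hM := H.M_pos; have := H.a0_pos
  by_cases h : a0 ≤ |x|
  · rw [H.out h]; simp; positivity
  · have := H.lip x 0
    rw [H.d0, sub_zero, sub_zero] at this
    refine this.trans ?_
    have := (not_le.1 h).le
    gcongr
end Pot

end

section

/-! ### Non-resonance -/

lemma finset_pos_lower (s : Finset ℕ) (f : ℕ → ℝ) (h : ∀ m ∈ s, 0 < f m) :
    ∃ ε > 0, ∀ m ∈ s, ε ≤ f m := by
  induction s using Finset.induction_on with
  | empty => exact ⟨1, one_pos, by simp⟩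
  | insert a s ha ih =>
    obtain ⟨ε, hε, h1⟩ := ih fun m hm => h m (Finset.mem_insert_of_mem hm)
    refine ⟨min ε (f a), lt_min hε (h a (Finset.mem_insert_self _ _)), fun m hm => ?_⟩
    rcases Finset.mem_insert.1 hm with rfl | hm
    · exact min_le_right _ _
    · exact (min_le_left _ _).trans (h1 m hm)

/-- `|cos (π q / 2)|` is bounded below when `q` has distance at least `ν / 4` from the integers. -/
lemma cos_lower {ν q : ℝ} (hν : ν ∈ Set.Ioo (0:ℝ) 1) (m : ℕ) (h1 : m + ν / 4 ≤ q)
    (h2 : q ≤ m + 1 - ν / 4) :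
    √((1 - cos (π * ν / 4)) / 2) ≤ |cos (π * q / 2)| := by
  have hπ := pi_pos
  have hν0 := hν.1
  have e : cos (π * q / 2) ^ 2 = (1 + cos (π * q)) / 2 := by
    have := cos_sq (π * q / 2)
    rw [this, show 2 * (π * q / 2) = π * q by ring]; ring
  have h3 : |cos (π * q)| = |cos (π * q - m * π)| := by
    rw [cos_sub_nat_mul_pi, abs_mul, abs_pow]; simp
  have h4 : |cos (π * q - m * π)| ≤ cos (π * ν / 4) := by
    rw [abs_le]
    constructor
    · rw [← cos_pi_sub]
      apply cos_le_cos_of_nonneg_of_le_pi <;> nlinarith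
    · apply cos_le_cos_of_nonneg_of_le_pi <;> nlinarith
  have h5 := (abs_le.1 (h3.trans_le h4)).1
  rw [← sqrt_sq_eq_abs, e]
  apply sqrt_le_sqrt
  linarith

lemma cos_const_pos {ν : ℝ} (hν : ν ∈ Set.Ioo (0:ℝ) 1) :
    0 < √((1 - cos (π * ν / 4)) / 2) ∧ √((1 - cos (π * ν / 4)) / 2) ≤ 1 := by
  have hπ := pi_pos
  have hν0 := hν.1
  have hν1 := hν.2
  constructor
  · apply sqrt_pos.2
    have : cos (π * ν / 4) < cos 0 := by
      apply cos_lt_cos_of_nonneg_of_le_pi le_rfl <;> nlinarith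
    rw [cos_zero] at this
    linarith
  · rw [sqrt_le_one]
    have := neg_one_le_cos (π * ν / 4)
    linarith

/-- Non-resonance: for small `γ` in the gaps `(Γ̃_m, γ̃_m)` the ratio `κ T / (2 π)` keeps a distance of at least
`ν / 4` from the integers, so `cos (κ T / 4)` is bounded away from zero uniformly in `m`. -/
lemma nonresonance {κ ν lam : ℝ} (hκ : 0 < κ) (hν : ν ∈ Set.Ioo (0:ℝ) 1)
    (T ω₀ : ℝ → ℝ) (hTpos : ∀ γ : ℝ, 0 < γ → 0 < T γ)
    (hT : ∃ C > (0:ℝ), ∃ γ' > (0:ℝ), ∀ γ ∈ Set.Ioo (0:ℝ) γ',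
      |T γ - (Real.sqrt 2 * π / Real.sqrt γ + lam)| ≤ C * γ)
    (hω₀ : ∀ γ : ℝ, 0 < γ → ω₀ γ = 2 * π / (Real.sqrt γ * T γ))
    (Γt γt : ℕ → ℝ) (m₀ : ℕ)
    (hpos : ∀ m ≥ m₀, 0 < Γt m ∧ 0 < γt m)
    (hsmall : Filter.Tendsto Γt Filter.atTop (nhds 0) ∧
      Filter.Tendsto γt Filter.atTop (nhds 0))
    (hΓeq : ∀ m ≥ m₀, Real.sqrt (κ ^ 2 + 4 * Γt m)
      / Real.sqrt (((m : ℝ) + 1) ^ 2 - ν * ((m : ℝ) + 1))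
      = Real.sqrt (Γt m) * ω₀ (Γt m))
    (hγeq : ∀ m ≥ m₀, κ / Real.sqrt ((m : ℝ) ^ 2 + ν * (m : ℝ))
      = Real.sqrt (γt m) * ω₀ (γt m)) :
    ∃ γ₀ > (0:ℝ), ∃ c > (0:ℝ), c ≤ 1 ∧ ∀ m : ℕ, m₀ ≤ m → ∀ γ ∈ Set.Ioo (Γt m) (γt m), γ < γ₀ →
      c ≤ |cos (κ * (T γ / 4))| := by
  obtain ⟨C, hC, γ', hγ', hT⟩ := hT
  have hπ := pi_pos
  have hν0 := hν.1
  set ε := min γ' (π * ν / (12 * κ * C)) with hε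
  have hε0 : 0 < ε := by positivity
  have ev1 := hsmall.1.eventually (gt_mem_nhds hε0)
  have ev2 := hsmall.2.eventually (gt_mem_nhds hε0)
  obtain ⟨m1, hm1⟩ := Filter.eventually_atTop.1 (ev1.and ev2)
  obtain ⟨ε', hε', hlow⟩ := finset_pos_lower (Finset.Ico m₀ (m1 + 1)) Γt
    fun m hm => (hpos m (Finset.mem_Ico.1 hm).1).1
  refine ⟨ε', hε', _, (cos_const_pos hν).1, (cos_const_pos hν).2, ?_⟩
  intro m hm γ hγ hγ0
  have hmm : m1 + 1 ≤ m := by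
    by_contra hlt
    have := hlow m (Finset.mem_Ico.2 ⟨hm, not_le.1 hlt⟩)
    linarith [hγ.1]
  obtain ⟨hs1, hs2⟩ := hm1 m (by omega)
  obtain ⟨hp1, hp2⟩ := hpos m hm
  have hγp : 0 < γ := hp1.trans hγ.1
  have hm1' : (1:ℝ) ≤ m := by exact_mod_cast (by omega : 1 ≤ m)
  have ω_eq : ∀ g > 0, √g * ω₀ g = 2 * π / T g := by
    intro g hg
    have := hTpos g hg
    have := sqrt_pos.2 hg
    rw [hω₀ g hg]; field_simp
  have A := hT (γt m) ⟨hp2, hs2.trans_le (min_le_left _ _)⟩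
  have B := hT (Γt m) ⟨hp1, hs1.trans_le (min_le_left _ _)⟩
  have D := hT γ ⟨hγp, (hγ.2.trans hs2).trans_le (min_le_left _ _)⟩
  have mono : ∀ a b : ℝ, 0 < a → a ≤ b → √2 * π / √b ≤ √2 * π / √a := by
    intro a b ha hab
    have := sqrt_pos.2 ha
    gcongr
  have m1 := mono _ _ hγp hγ.2.le
  have m2 := mono _ _ hp1 hγ.1.le
  have lowT : T (γt m) - 2 * C * ε ≤ T γ := by
    rw [abs_le] at A D
    nlinarith [A.1, A.2, D.1, D.2, hγ.2]
  have upT : T γ ≤ T (Γt m) + 2 * C * ε := by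
    rw [abs_le] at B D
    nlinarith [B.1, B.2, D.1, D.2, hγ.1, hγ.2]
  have hεc : 2 * C * ε * κ ≤ 2 * π * (ν / 12) := by
    have : ε ≤ π * ν / (12 * κ * C) := min_le_right _ _
    rw [le_div_iff₀ (by positivity)] at this
    nlinarith
  have e1 := hγeq m hm
  rw [ω_eq _ hp2] at e1
  have e2 := hΓeq m hm
  rw [ω_eq _ hp1] at e2
  have q1 : m + ν / 3 ≤ κ * T (γt m) / (2 * π) := by
    have hs : 0 < √((m:ℝ) ^ 2 + ν * m) := sqrt_pos.2 (by positivity)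
    have := hTpos _ hp2
    have : κ * T (γt m) / (2 * π) = √((m:ℝ) ^ 2 + ν * m) := by
      rw [div_eq_div_iff hs.ne' (hTpos _ hp2).ne'] at e1
      rw [div_eq_iff (by positivity), e1]; ring
    rw [this]
    apply le_sqrt_of_sq_le
    nlinarith [hν.2]
  have q2 : κ * T (Γt m) / (2 * π) ≤ m + 1 - ν / 2 := by
    have hs : 0 < √(((m:ℝ)+1) ^ 2 - ν * (m+1)) := sqrt_pos.2 (by nlinarith [hν.2])
    have ht := hTpos _ hp1
    have hk : κ ≤ √(κ ^ 2 + 4 * Γt m) := le_sqrt_of_sq_le (by linarith)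
    have h1 : √(κ ^ 2 + 4 * Γt m) * T (Γt m) / (2 * π) = √(((m:ℝ)+1) ^ 2 - ν * (m+1)) := by
      rw [div_eq_div_iff hs.ne' ht.ne'] at e2
      rw [div_eq_iff (by positivity), e2]; ring
    have h2 : κ * T (Γt m) / (2 * π) ≤ √(κ ^ 2 + 4 * Γt m) * T (Γt m) / (2 * π) := by gcongr
    rw [h1] at h2
    refine h2.trans ?_
    rw [sqrt_le_left (by linarith [hν.2])]
    nlinarith
  have hπν := mul_pos hπ hν0
  have e : κ * (T γ / 4) = π * (κ * T γ / (2 * π)) / 2 := by field_simp; norm_num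
  rw [e]
  apply cos_lower hν m
  · have := mul_le_mul_of_nonneg_left lowT hκ.le
    rw [le_div_iff₀ (by positivity)] at q1 ⊢
    linarith
  · have := mul_le_mul_of_nonneg_left upT hκ.le
    rw [div_le_iff₀ (by positivity)] at q2 ⊢
    linarith

end

section

/-! ### Crossing the interaction region -/

lemma mvt_Icc {f f' : ℝ → ℝ} {τ C : ℝ} (h : ∀ s ∈ Set.Icc 0 τ, HasDerivAt f (f' s) s)
    (hb : ∀ s ∈ Set.Icc 0 τ, |f' s| ≤ C) {s : ℝ} (hs : s ∈ Set.Icc 0 τ) :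
    |f s - f 0| ≤ C * s := by
  have := Convex.norm_image_sub_le_of_norm_hasDerivWithin_le (f := f) (f' := f') (C := C)
    (s := Set.Icc 0 τ) (x := 0) (y := s) (fun x hx => (h x hx).hasDerivWithinAt) hb
    (convex_Icc _ _) ⟨le_rfl, hs.1.trans hs.2⟩ hs
  simpa [abs_of_nonneg hs.1] using this

/-- The time a particle of momentum `p` at the origin needs to cross `[0, a0]` in the potential
`V`, minus the time it would need at its asymptotic velocity `√(p² - 2 V_∞)`. -/
noncomputable def delay (V : ℝ → ℝ) (Vinf a0 p : ℝ) : ℝ :=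
  (∫ u in (0:ℝ)..a0, 1 / √(p ^ 2 - 2 * V u)) - a0 / √(p ^ 2 - 2 * Vinf)

section
variable {V : ℝ → ℝ} {VL Vinf a0 κ M : ℝ}

lemma Pot.Vinf_le (H : Pot V VL Vinf a0 κ M) : Vinf ≤ VL := by
  rw [← H.const a0 (le_abs_self _)]; exact H.le _
lemma Pot.Vinf_nonneg (H : Pot V VL Vinf a0 κ M) : 0 ≤ Vinf := by
  rw [← H.const a0 (le_abs_self _)]; exact H.nonneg _

/-- Bound for the energy drift, per unit of `γ`, caused by a perturbing force of size `γ * Hc`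
during a time `τ`. -/
noncomputable def K1 (M a0 P0 Hc τ : ℝ) : ℝ := 2 * ((P0 + (M * a0 + Hc) * τ) * Hc * τ)

/-- Scattering of the centre by the well: under a perturbing force of size `γ * Hc` it moves
outward with speed at least `c`, has left `[-a0, a0]` by time `τ`, and is then, up to `O(γ)`, in the
state of the unperturbed particle. The proof follows the energy `y′² / 2 + V(y)` and the time map. -/
theorem inner_est (H : Pot V VL Vinf a0 κ M) {c p P0 τ γ Hc : ℝ} {y dy h : ℝ → ℝ}
    (hc : 0 < c) (hp : 2 * VL + 2 * c ^ 2 ≤ p ^ 2) (hp0 : 0 < p) (hpP : p ≤ P0)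
    (hτ0 : 0 < τ) (hτ : a0 + 1 ≤ c * τ) (h0 : y 0 = 0) (h0' : dy 0 = p)
    (h1 : ∀ s, HasDerivAt y (dy s) s)
    (h2 : ∀ s ∈ Set.Icc 0 τ, HasDerivAt dy (-deriv V (y s) + h s) s)
    (hHc : 0 ≤ Hc) (hh : ∀ s ∈ Set.Icc 0 τ, |h s| ≤ γ * Hc) (hγ : 0 < γ) (hγ1 : γ ≤ 1)
    (hsmall : K1 M a0 P0 Hc τ * γ ≤ c ^ 2) :
    (∀ s ∈ Set.Icc 0 τ, c * s ≤ y s) ∧ c ≤ dy τ ∧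
    |dy τ - √(p ^ 2 - 2 * Vinf)| ≤ K1 M a0 P0 Hc τ / c * γ ∧
    |y τ - √(p ^ 2 - 2 * Vinf) * (τ - delay V Vinf a0 p)| ≤
      P0 * τ * K1 M a0 P0 Hc τ / c ^ 2 * γ := by
  have hP0 : 0 < P0 := hp0.trans_le hpP
  have hM := H.M_pos
  have ha := H.a0_pos
  have hVi := H.Vinf_le
  have hVn := H.Vinf_nonneg
  set D := P0 + (M * a0 + Hc) * τ with hD
  set k := K1 M a0 P0 Hc τ with hk
  have hD0 : 0 ≤ D := by positivity
  have hk' : k = 2 * (D * Hc * τ) := rfl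
  have hk0 : 0 ≤ k := by rw [hk']; positivity
  have dyb : ∀ s ∈ Set.Icc 0 τ, |dy s| ≤ D := by
    intro s hs
    have := mvt_Icc h2 (C := M * a0 + Hc) (fun s hs => by
      refine (abs_add_le _ _).trans ?_
      rw [abs_neg]
      have := H.bound (y s)
      have := hh s hs
      nlinarith) hs
    rw [h0'] at this
    have h3 : |dy s| ≤ |dy s - p| + |p| := by simpa using abs_add_le (dy s - p) p
    rw [abs_of_pos hp0] at h3
    have : (M * a0 + Hc) * s ≤ (M * a0 + Hc) * τ := by
      have := hs.2; gcongr
    linarith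
  have en : ∀ s ∈ Set.Icc 0 τ, |dy s ^ 2 + 2 * V (y s) - p ^ 2| ≤ k * γ := by
    intro s hs
    have := mvt_Icc (f := fun s => dy s ^ 2 + 2 * V (y s)) (f' := fun s => 2 * (dy s * h s))
      (τ := τ) (C := 2 * (D * (γ * Hc)))
      (fun s hs => by
        refine (((h2 s hs).pow 2).add (((H.hasDeriv (y s)).comp s (h1 s)).const_mul 2)).congr_deriv ?_
        push_cast; ring)
      (fun s hs => by
        rw [abs_mul, abs_mul, abs_two]
        have := dyb s hs
        have := hh s hs
        gcongr) hs
    simp only [h0, h0', H.V0, mul_zero, add_zero] at this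
    refine this.trans ?_
    have := hs.2
    calc 2 * (D * (γ * Hc)) * s ≤ 2 * (D * (γ * Hc)) * τ := by gcongr
      _ = _ := by rw [hk']; ring
  have rad : ∀ x, 2 * c ^ 2 ≤ p ^ 2 - 2 * V x := fun x => by linarith [H.le x]
  have dysq : ∀ s ∈ Set.Icc 0 τ, c ^ 2 ≤ dy s ^ 2 := fun s hs => by
    have := (abs_le.1 (en s hs)).1
    linarith [rad (y s)]
  have dyc : ∀ s ∈ Set.Icc 0 τ, c ≤ dy s := by
    intro s hs
    by_contra hlt
    rw [not_le] at hlt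
    have hneg : dy s ≤ 0 := by
      by_contra hpos
      have := dysq s hs
      rw [not_le] at hpos
      nlinarith
    have hcont : ContinuousOn dy (Set.Icc 0 s) := fun r hr =>
      (h2 r ⟨hr.1, hr.2.trans hs.2⟩).continuousAt.continuousWithinAt
    obtain ⟨r, hr, hr0⟩ := intermediate_value_Icc' hs.1 hcont ⟨hneg, by rw [h0']; exact hp0.le⟩
    have := dysq r ⟨hr.1, hr.2.trans hs.2⟩
    rw [hr0] at this
    nlinarith
  have sqc : ∀ x, c ≤ √(p ^ 2 - 2 * V x) := fun x => le_sqrt_of_sq_le (by nlinarith [rad x])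
  have dyclose : ∀ s ∈ Set.Icc 0 τ, |dy s - √(p ^ 2 - 2 * V (y s))| ≤ k / c * γ := by
    intro s hs
    have e1 := en s hs
    have e2 := dyc s hs
    have e3 := sqc (y s)
    have e4 : √(p ^ 2 - 2 * V (y s)) ^ 2 = p ^ 2 - 2 * V (y s) :=
      sq_sqrt (by nlinarith [rad (y s)])
    set q := √(p ^ 2 - 2 * V (y s))
    have e5 : |dy s - q| * (dy s + q) ≤ k * γ := by
      rw [← abs_of_pos (by linarith : 0 < dy s + q), ← abs_mul]
      refine le_trans (le_of_eq ?_) e1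
      congr 1; linear_combination - e4
    have e6 : |dy s - q| * c ≤ k * γ := le_trans (by gcongr; linarith) e5
    rw [div_mul_eq_mul_div, le_div_iff₀ hc]; exact e6
  have ylow : ∀ s ∈ Set.Icc 0 τ, c * s ≤ y s := by
    intro s hs
    have := Convex.mul_sub_le_image_sub_of_le_deriv (convex_Icc 0 τ) (f := y) (C := c)
      (fun r _ => (h1 r).continuousAt.continuousWithinAt)
      (fun r _ => (h1 r).differentiableAt.differentiableWithinAt)
      (fun r hr => by rw [(h1 r).deriv]; exact dyc r (interior_subset hr))
      0 ⟨le_rfl, hτ0.le⟩ s hs hs.1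
    rw [h0] at this; linarith
  have mτ : τ ∈ Set.Icc 0 τ := ⟨hτ0.le, le_rfl⟩
  have yτ : a0 + 1 ≤ y τ := hτ.trans (ylow τ mτ)
  have Vτ : V (y τ) = Vinf := H.const _ ((by linarith : a0 ≤ y τ).trans (le_abs_self _))
  refine ⟨ylow, dyc τ mτ, ?_, ?_⟩
  · have := dyclose τ mτ; rwa [Vτ] at this
  -- the time map `x ↦ ∫₀ˣ du / √(p² - 2 V u)`
  have cint : Continuous fun u => 1 / √(p ^ 2 - 2 * V u) := by
    have := H.cont
    exact continuous_const.div (by fun_prop) (fun u => (hc.trans_le (sqc u)).ne')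
  set v := √(p ^ 2 - 2 * Vinf) with hv
  have hvc : c ≤ v := by have := sqc (y τ); rwa [Vτ] at this
  have hvP : v ≤ P0 := by
    rw [hv]
    calc √(p ^ 2 - 2 * Vinf) ≤ √(p ^ 2) := sqrt_le_sqrt (by linarith)
      _ = p := sqrt_sq hp0.le
      _ ≤ P0 := hpP
  set G : ℝ → ℝ := fun x => ∫ u in (0:ℝ)..x, 1 / √(p ^ 2 - 2 * V u) with hG
  have dG : ∀ x, HasDerivAt G (1 / √(p ^ 2 - 2 * V x)) x := fun x =>
    intervalIntegral.integral_hasDerivAt_right (cint.intervalIntegrable _ _)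
      (cint.stronglyMeasurableAtFilter _ _) cint.continuousAt
  have G1 : |G (y τ) - τ| ≤ τ * k / c ^ 2 * γ := by
    have := mvt_Icc (f := fun s => G (y s) - s) (τ := τ)
      (f' := fun s => 1 / √(p ^ 2 - 2 * V (y s)) * dy s - 1) (C := k / c ^ 2 * γ)
      (fun s hs => ((dG (y s)).comp s (h1 s)).sub (hasDerivAt_id s))
      (fun s hs => by
        have e1 := dyclose s hs
        have e3 := sqc (y s)
        set q := √(p ^ 2 - 2 * V (y s))
        have hq : 0 < q := by linarith
        have : 1 / q * dy s - 1 = (dy s - q) / q := by field_simp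
        rw [this, abs_div, abs_of_pos hq, div_le_iff₀ hq]
        refine e1.trans ?_
        calc k / c * γ = k / c ^ 2 * γ * c := by field_simp
          _ ≤ _ := by gcongr) mτ
    simp only [h0, hG, intervalIntegral.integral_same, sub_zero] at this
    refine this.trans (le_of_eq ?_)
    ring
  have G2 : G (y τ) = (∫ u in (0:ℝ)..a0, 1 / √(p ^ 2 - 2 * V u)) + (y τ - a0) / v := by
    rw [hG]
    simp only
    rw [← intervalIntegral.integral_add_adjacent_intervals (b := a0)
      (cint.intervalIntegrable _ _) (cint.intervalIntegrable _ _)]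
    congr 1
    rw [intervalIntegral.integral_congr (g := fun _ => 1 / v)]
    · rw [intervalIntegral.integral_const, smul_eq_mul]; ring
    · intro u hu
      rw [Set.uIcc_of_le (by linarith)] at hu
      simp only
      rw [H.const u (hu.1.trans (le_abs_self _))]
  have hv0 : 0 < v := by linarith
  have e : y τ - v * (τ - delay V Vinf a0 p) = v * (G (y τ) - τ) := by
    rw [G2, delay, ← hv]; field_simp; ring
  rw [e, abs_mul, abs_of_pos hv0]
  calc v * |G (y τ) - τ| ≤ P0 * (τ * k / c ^ 2 * γ) := by gcongr
    _ = _ := by ring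

end

end

section

/-! ### A priori bounds for the central site -/

/-- The data `P` are those of the potential `V` at coupling `γ = μ²`, with a quarter period `L`
comparable to `1 / μ`. -/
structure Par.Reg (P : Par) (V : ℝ → ℝ) (VL Vinf a0 μ : ℝ) : Prop where
  good : P.Good
  pot : Pot V VL Vinf a0 P.κ P.M
  g_eq : P.g = deriv V
  μ_pos : 0 < μ
  μ_le : μ ≤ 1
  γ_eq : P.γ = μ ^ 2
  L_lo : 1 ≤ μ * P.L
  L_hi : μ * P.L ≤ 2
  τL : P.τ + 1 ≤ P.L

/-- `X` is a solution of the truncated half-lattice problem with momentum `p`, in the weighted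
ball given by the fixed point theorem. -/
structure Par.Sol (P : Par) (p : ℝ) (X : ℕ → ℝ → ℝ) : Prop where
  cont : ∀ n, Continuous (X n)
  eq : ∀ n, ∀ s ∈ Set.Icc 0 P.L, X n s = P.OP p X n s
  bnd : ∀ n, ∀ s ∈ Set.Icc 0 P.L, |X n s| ≤ P.W n s * (2 * |p|)

namespace Par
variable {P : Par} {V : ℝ → ℝ} {VL Vinf a0 μ : ℝ}

/-- The displacement of the centre given by the right-hand side of the integral equation. It
agrees with `X 0` on `[0, L]` and is differentiable on the whole line. -/
noncomputable def yy (P : Par) (p : ℝ) (X : ℕ → ℝ → ℝ) (s : ℝ) : ℝ :=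
  p * (sin (P.ω * s) / P.ω) + SS P.ω (P.src0 X) s

/-- The derivative of `yy`. -/
noncomputable def dyy (P : Par) (p : ℝ) (X : ℕ → ℝ → ℝ) (s : ℝ) : ℝ :=
  p * cos (P.ω * s) + CC P.ω (P.src0 X) s

lemma Reg.ω_eq (R : P.Reg V VL Vinf a0 μ) : P.ω = √2 * μ := by
  unfold ω; rw [R.γ_eq, sqrt_mul (by norm_num), sqrt_sq R.μ_pos.le]

lemma Good.yy_deriv (h : P.Good) (p : ℝ) {X : ℕ → ℝ → ℝ} (hX : ∀ n, Continuous (X n)) (s : ℝ) :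
    HasDerivAt (P.yy p X) (P.dyy p X s) s := by
  refine (((hasDerivAt_sin_mul P.ω s).div_const P.ω).const_mul p |>.add
    (hasDerivAt_SS h.ω_pos.ne' (h.src0_cont hX) s)).congr_deriv ?_
  have := h.ω_pos
  unfold dyy
  field_simp

lemma Good.dyy_deriv (h : P.Good) (p : ℝ) {X : ℕ → ℝ → ℝ} (hX : ∀ n, Continuous (X n)) (s : ℝ) :
    HasDerivAt (P.dyy p X) (P.src0 X s - P.ω ^ 2 * P.yy p X s) s := by
  refine (((hasDerivAt_cos_mul P.ω s)).const_mul p |>.add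
    (hasDerivAt_CC h.ω_pos.ne' (h.src0_cont hX) s)).congr_deriv ?_
  have := h.ω_pos
  unfold yy
  field_simp
  ring

lemma yy_zero (p : ℝ) (X : ℕ → ℝ → ℝ) : P.yy p X 0 = 0 := by simp [yy, SS]
lemma dyy_zero (p : ℝ) (X : ℕ → ℝ → ℝ) : P.dyy p X 0 = p := by simp [dyy, CC]

/-- Bound for `∫ |src0|`, independent of `μ`. -/
noncomputable def S1 (P : Par) (a0 P0 : ℝ) : ℝ :=
  P.M * a0 / P.K * exp (P.K * (P.τ + 1)) + 4 * P.B * P0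

/-- Bound for `∫ |X₀″|`, independent of `μ`. -/
noncomputable def S2 (P : Par) (a0 P0 : ℝ) : ℝ :=
  P.S1 a0 P0 + 24 * exp (P.K * (P.τ + 1)) * P0

/-- Bound, per unit of `μ`, for the response of the first neighbour to the centre. -/
noncomputable def S3 (P : Par) (a0 P0 : ℝ) : ℝ :=
  (6 * exp (P.K * (P.τ + 1)) * P0 + (P0 + P.S1 a0 P0) * (1 / (P.c * P.κ))
    + 2 / (P.c * P.κ) * P.S2 a0 P0) / P.κ ^ 2

section
variable {p P0 : ℝ} {X : ℕ → ℝ → ℝ}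

lemma Sol.X0 (S : P.Sol p X) {s : ℝ} (hs : s ∈ Set.Icc 0 P.L) : X 0 s = P.yy p X s := S.eq 0 s hs

lemma Sol.tail0 (S : P.Sol p X) (h : P.Good) (hp0 : 0 ≤ p) (hpP : p ≤ P0) (n : ℕ) {s : ℝ}
    (hs : s ∈ Set.Icc 0 P.L) : |X (n + 1) s| ≤ 2 * P.B * P0 * (1 / 2) ^ (n + 1) := by
  have := S.bnd (n + 1) s hs
  have hB := h.B_pos
  rw [abs_of_nonneg hp0] at this
  unfold W at this
  refine this.trans ?_
  calc P.B * (1 / 2) ^ (n + 1) * (2 * p) ≤ P.B * (1 / 2) ^ (n + 1) * (2 * P0) := by gcongr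
    _ = _ := by ring

lemma Sol.X0_bnd (S : P.Sol p X) (h : P.Good) (hp0 : 0 ≤ p) (hpP : p ≤ P0) {s : ℝ}
    (hs : s ∈ Set.Icc 0 P.L) : |X 0 s| ≤ (1 + P.L) * exp (P.K * (P.τ + 1)) * (2 * P0) := by
  have h1 := S.bnd 0 s hs
  rw [abs_of_nonneg hp0] at h1
  refine h1.trans ?_
  have h2 := h.w_le hs
  have h3 := (h.W_pos 0 hs.1).le
  change P.w s * _ ≤ _
  have : 0 ≤ P.w s := h3
  have := h.L_pos
  gcongr

lemma Reg.γL (R : P.Reg V VL Vinf a0 μ) : P.γ * P.L ≤ 2 * μ := by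
  rw [R.γ_eq]; nlinarith [R.L_hi, R.μ_pos]

/-- The total momentum transferred to the centre besides the harmonic force is bounded: the
on-site force acts for a bounded time, and the neighbours contribute `γ * L = O(μ)`. -/
lemma Sol.int_src0 (S : P.Sol p X) (R : P.Reg V VL Vinf a0 μ) (hp0 : 0 ≤ p) (hpP : p ≤ P0) :
    ∫ r in (0:ℝ)..P.L, |P.src0 X r| ≤ P.S1 a0 P0 := by
  have h := R.good
  have hB := h.B_pos; have hK := h.K_pos; have hM := R.pot.M_pos; have ha := R.pot.a0_pos
  have hγ := h.γ_pos; have hL := h.L_pos; have hτ := h.τ_nonneg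
  have hg := h.g_cont; have hX0 := S.cont 0; have hX1 := S.cont 1
  have hch := continuous_chi P.τ
  have c1 : Continuous fun r => chi P.τ r * P.g (X 0 (min r P.τ)) := by fun_prop
  have c2 : Continuous fun r => 2 * P.γ * P.j * X 1 r := by fun_prop
  have i1 : ∫ r in (0:ℝ)..P.L, |chi P.τ r * P.g (X 0 (min r P.τ))| ≤
      P.M * a0 / P.K * exp (P.K * (P.τ + 1)) := by
    refine (int_abs_le_exp (K := P.K) (b := P.M * a0 / P.K) (τ := P.τ + 1) c1 (by positivity)
      hL.le (by positivity) ?_ ?_).trans ?_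
    · intro r hr _
      rw [abs_mul, abs_of_nonneg (chi_nonneg _ _), R.g_eq]
      have := R.pot.bound (X 0 (min r P.τ))
      have h1 := chi_le_one P.τ r
      have h2 := chi_nonneg P.τ r
      have h3 : 1 ≤ exp (P.K * r) := one_le_exp (mul_nonneg hK.le hr.1)
      calc _ ≤ 1 * (P.M * a0) := by gcongr
        _ = P.M * a0 * 1 := by ring
        _ ≤ P.M * a0 * exp (P.K * r) := by gcongr
        _ = _ := by field_simp
    · intro r _ hr
      simp [chi_zero hr]
    · gcongr; exact min_le_right _ _
  have i2 : ∫ r in (0:ℝ)..P.L, |2 * P.γ * P.j * X 1 r| ≤ 4 * P.B * P0 := by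
    refine (int_abs_le_const (b := 2 * P.γ * (P.B * P0)) hL.le ?_).trans ?_
    · intro r hr
      have h1 := S.tail0 h hp0 hpP 0 hr
      have h2 := h.j_le
      rw [abs_mul, abs_mul, abs_of_pos (by positivity : 0 < 2 * P.γ)]
      calc _ ≤ 2 * P.γ * 1 * (2 * P.B * P0 * (1 / 2) ^ (0 + 1)) := by gcongr
        _ = _ := by ring
    · have := R.γL
      have := R.μ_le
      have hP0 := hp0.trans hpP
      have : P.γ * P.L ≤ 2 := by linarith
      calc _ = P.γ * P.L * (2 * (P.B * P0)) := by ring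
        _ ≤ 2 * (2 * (P.B * P0)) := by gcongr
        _ = _ := by ring
  have i3 : ∫ r in (0:ℝ)..P.L, |P.src0 X r| ≤ (∫ r in (0:ℝ)..P.L,
      (|chi P.τ r * P.g (X 0 (min r P.τ))| + |2 * P.γ * P.j * X 1 r|)) := by
    apply intervalIntegral.integral_mono_on hL.le
    · exact ((h.src0_cont S.cont).abs).intervalIntegrable _ _
    · exact (c1.abs.add c2.abs).intervalIntegrable _ _
    · intro r _
      unfold src0
      refine (abs_add_le _ _).trans ?_
      rw [abs_neg]
  rw [intervalIntegral.integral_add (c1.abs.intervalIntegrable _ _)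
    (c2.abs.intervalIntegrable _ _)] at i3
  unfold S1
  linarith

/-- The acceleration of the centre has bounded integral, since `ω² |X₀| L` is bounded although
`X₀` and `L` are both of order `1 / μ`. -/
lemma Sol.int_acc (S : P.Sol p X) (R : P.Reg V VL Vinf a0 μ) (hp0 : 0 ≤ p) (hpP : p ≤ P0) :
    ∫ r in (0:ℝ)..P.L, |P.src0 X r - P.ω ^ 2 * X 0 r| ≤ P.S2 a0 P0 := by
  have h := R.good
  have hγ := h.γ_pos; have hL := h.L_pos
  have hP0 := hp0.trans hpP
  have c1 := h.src0_cont S.cont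
  have hX0 := S.cont 0
  have c2 : Continuous fun r => P.ω ^ 2 * X 0 r := by fun_prop
  have i1 := S.int_src0 R hp0 hpP
  have i2 : ∫ r in (0:ℝ)..P.L, |P.ω ^ 2 * X 0 r| ≤ 24 * exp (P.K * (P.τ + 1)) * P0 := by
    refine (int_abs_le_const (b := 2 * P.γ * ((1 + P.L) * exp (P.K * (P.τ + 1)) * (2 * P0)))
      hL.le ?_).trans ?_
    · intro r hr
      rw [h.ω_sq, abs_mul, abs_of_pos (by positivity : 0 < 2 * P.γ)]
      have := S.X0_bnd h hp0 hpP hr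
      gcongr
    · have : P.γ * P.L * (1 + P.L) ≤ 6 := by
        rw [R.γ_eq]; nlinarith [R.L_hi, R.μ_pos, R.μ_le, mul_pos R.μ_pos hL]
      calc _ = P.γ * P.L * (1 + P.L) * (4 * exp (P.K * (P.τ + 1)) * P0) := by ring
        _ ≤ 6 * (4 * exp (P.K * (P.τ + 1)) * P0) := by gcongr
        _ = _ := by ring
  have i3 : ∫ r in (0:ℝ)..P.L, |P.src0 X r - P.ω ^ 2 * X 0 r| ≤ (∫ r in (0:ℝ)..P.L,
      (|P.src0 X r| + |P.ω ^ 2 * X 0 r|)) := by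
    apply intervalIntegral.integral_mono_on hL.le
    · exact ((c1.sub c2).abs).intervalIntegrable _ _
    · exact (c1.abs.add c2.abs).intervalIntegrable _ _
    · intro r _
      exact abs_sub _ _
  rw [intervalIntegral.integral_add (c1.abs.intervalIntegrable _ _)
    (c2.abs.intervalIntegrable _ _)] at i3
  unfold S2
  linarith

lemma Sol.dyL (S : P.Sol p X) (R : P.Reg V VL Vinf a0 μ) (hp0 : 0 ≤ p) (hpP : p ≤ P0) :
    |P.dyy p X P.L| ≤ P0 + P.S1 a0 P0 := by
  have h1 := S.int_src0 R hp0 hpP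
  have h2 := abs_CC_le (a := P.ω) (R.good.src0_cont S.cont) R.good.L_pos.le
  unfold dyy
  refine (abs_add_le _ _).trans ?_
  rw [abs_mul, abs_of_nonneg hp0]
  have := abs_cos_le_one (P.ω * P.L)
  nlinarith

lemma SS_congr {a L : ℝ} {f h : ℝ → ℝ} (hfh : ∀ s ∈ Set.Icc 0 L, f s = h s) {s : ℝ}
    (hs : s ∈ Set.Icc 0 L) : SS a f s = SS a h s := by
  unfold SS
  apply intervalIntegral.integral_congr
  intro r hr
  rw [Set.uIcc_of_le hs.1] at hr
  simp only
  rw [hfh r ⟨hr.1, hr.2.trans hs.2⟩]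

lemma CC_congr {a L : ℝ} {f h : ℝ → ℝ} (hfh : ∀ s ∈ Set.Icc 0 L, f s = h s) {s : ℝ}
    (hs : s ∈ Set.Icc 0 L) : CC a f s = CC a h s := by
  unfold CC
  apply intervalIntegral.integral_congr
  intro r hr
  rw [Set.uIcc_of_le hs.1] at hr
  simp only
  rw [hfh r ⟨hr.1, hr.2.trans hs.2⟩]

lemma GG_congr {a L : ℝ} (hL : 0 ≤ L) {f h : ℝ → ℝ} (hfh : ∀ s ∈ Set.Icc 0 L, f s = h s) {s : ℝ}
    (hs : s ∈ Set.Icc 0 L) : GG a L f s = GG a L h s := by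
  unfold GG
  rw [SS_congr hfh hs, CC_congr hfh ⟨hL, le_rfl⟩]

/-- The slow oscillation of the centre forces its neighbours weakly. Although `X 0` is of order
`1 / μ` over a time of order `1 / μ`, integration by parts through the equation of `X 0` gains the
factor `κ⁻²` and leaves only boundary terms and `∫ |X₀″|`. -/
lemma Sol.GG_y (S : P.Sol p X) (R : P.Reg V VL Vinf a0 μ) (hp0 : 0 ≤ p) (hpP : p ≤ P0)
    {s : ℝ} (hs : s ∈ Set.Icc 0 P.L) : |P.γ * GG P.κ P.L (X 0) s| ≤ P.S3 a0 P0 * μ := by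
  have h := R.good
  have hκ := h.κ_pos; have hc := h.c_pos; have hL := h.L_pos; have hγ := h.γ_pos
  have hP0 := hp0.trans hpP
  have hμ := R.μ_pos
  have mL : P.L ∈ Set.Icc 0 P.L := ⟨hL.le, le_rfl⟩
  have hX0 := S.cont 0
  have c1 := h.src0_cont S.cont
  set F : ℝ → ℝ := fun r => P.src0 X r - P.ω ^ 2 * X 0 r with hF
  have cF : Continuous F := by fun_prop
  have d1 : ∀ s, HasDerivAt (P.yy p X) (P.dyy p X s) s := h.yy_deriv p S.cont
  have d2 : ∀ s ∈ Set.Icc 0 P.L, HasDerivAt (P.dyy p X)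
      ((F s + P.κ ^ 2 * X 0 s) - P.κ ^ 2 * P.yy p X s) s := fun s hs => by
    have := h.dyy_deriv p S.cont s
    refine this.congr_deriv ?_
    rw [← S.X0 hs, hF]; ring
  have cc : Continuous fun r => F r + P.κ ^ 2 * X 0 r := by fun_prop
  have cc2 : Continuous fun r => P.κ ^ 2 * X 0 r := by fun_prop
  have e1 : SS P.κ (fun r => F r + P.κ ^ 2 * X 0 r) s
      = P.yy p X s - sin (P.κ * s) / P.κ * p := by
    have := duhamel_sin hκ.ne' hs.1 cc d1 (fun r hr => d2 r ⟨hr.1, hr.2.trans hs.2⟩)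
    unfold SS
    rw [this, yy_zero, dyy_zero]; simp
  have e2 : CC P.κ (fun r => F r + P.κ ^ 2 * X 0 r) P.L
      = P.dyy p X P.L - cos (P.κ * P.L) * p := by
    have := duhamel_cos hL.le cc d1 d2
    unfold CC
    rw [this, yy_zero, dyy_zero]; simp
  have hcos : cos (P.κ * P.L) ≠ 0 := by
    intro h0
    have := h.cos_ge
    rw [h0, abs_zero] at this
    linarith
  have e3 : P.κ ^ 2 * GG P.κ P.L (X 0) s = X 0 s
      - P.dyy p X P.L * (sin (P.κ * s) / (P.κ * cos (P.κ * P.L))) - GG P.κ P.L F s := by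
    have a1 := SS_add (a := P.κ) cF cc2 s
    have a2 := CC_add (a := P.κ) cF cc2 P.L
    rw [e1] at a1
    rw [e2] at a2
    have a3 := SS_mul P.κ (P.κ ^ 2) (X 0) s
    have a4 := CC_mul P.κ (P.κ ^ 2) (X 0) P.L
    rw [a3] at a1
    rw [a4] at a2
    unfold GG
    rw [S.X0 hs]
    have e4 : P.κ ^ 2 * SS P.κ (X 0) s = P.yy p X s - sin (P.κ * s) / P.κ * p - SS P.κ F s := by
      linarith
    have e5 : P.κ ^ 2 * CC P.κ (X 0) P.L = P.dyy p X P.L - cos (P.κ * P.L) * p - CC P.κ F P.L := by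
      linarith
    rw [mul_sub, e4, ← mul_assoc, e5]
    field_simp
    ring
  have b1 := S.X0_bnd h hp0 hpP hs
  have b2 := S.dyL R hp0 hpP
  have b3 := abs_GG_aux hκ hc h.cos_ge s
  have b4 := abs_GG_le hκ hc h.c_le h.cos_ge cF hs
  have b5 := S.int_acc R hp0 hpP
  have hS1 : 0 ≤ P0 + P.S1 a0 P0 := (abs_nonneg _).trans b2
  have b6 : |P.κ ^ 2 * GG P.κ P.L (X 0) s| ≤ (1 + P.L) * exp (P.K * (P.τ + 1)) * (2 * P0)
      + (P0 + P.S1 a0 P0) * (1 / (P.c * P.κ)) + 2 / (P.c * P.κ) * P.S2 a0 P0 := by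
    rw [e3]
    refine (abs_sub _ _).trans ?_
    refine add_le_add ((abs_sub _ _).trans (add_le_add b1 ?_)) (b4.trans ?_)
    · rw [abs_mul]; gcongr
    · gcongr
  have hS2 : 0 ≤ P.S2 a0 P0 := le_trans
    (intervalIntegral.integral_nonneg hL.le fun r _ => abs_nonneg _) b5
  have g1 : P.γ * (1 + P.L) ≤ 3 * μ := by
    rw [R.γ_eq]; nlinarith [R.L_hi, R.μ_pos, R.μ_le]
  have g2 : P.γ ≤ μ := by rw [R.γ_eq]; nlinarith [R.μ_le]
  have : P.γ * |P.κ ^ 2 * GG P.κ P.L (X 0) s| ≤ P.κ ^ 2 * (P.S3 a0 P0 * μ) := by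
    refine (mul_le_mul_of_nonneg_left b6 hγ.le).trans ?_
    have e : P.κ ^ 2 * (P.S3 a0 P0 * μ) = 3 * μ * (exp (P.K * (P.τ + 1)) * (2 * P0))
      + μ * ((P0 + P.S1 a0 P0) * (1 / (P.c * P.κ)) + 2 / (P.c * P.κ) * P.S2 a0 P0) := by
      unfold S3; field_simp; ring
    rw [e]
    calc _ = P.γ * (1 + P.L) * (exp (P.K * (P.τ + 1)) * (2 * P0))
      + P.γ * ((P0 + P.S1 a0 P0) * (1 / (P.c * P.κ)) + 2 / (P.c * P.κ) * P.S2 a0 P0) := by ring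
      _ ≤ _ := by gcongr
  rw [abs_mul, abs_of_pos (by positivity : 0 < P.κ ^ 2)] at this
  rw [abs_mul, abs_of_pos hγ]
  have k2 : 0 < P.κ ^ 2 := by positivity
  nlinarith

end
end Par

end

section

/-! ### Smallness of the neighbours -/

namespace Par
variable {P : Par} {V : ℝ → ℝ} {VL Vinf a0 μ : ℝ}
variable {p P0 : ℝ} {X : ℕ → ℝ → ℝ}

lemma Good.N_le (h : P.Good) (x : ℝ) : |P.N x| ≤ P.η * |x| := by
  have := h.N_lip x 0
  rwa [h.N_zero, sub_zero, sub_zero] at this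

/-- The response of a neighbour to forces of size `b (5 γ + η)` is at most `b / 4`. -/
lemma Good.GG_small (h : P.Good) {f : ℝ → ℝ} (hf : Continuous f) {b : ℝ} (hb : 0 ≤ b)
    (hfb : ∀ r ∈ Set.Icc 0 P.L, |f r| ≤ b * (5 * P.γ + P.η)) {s : ℝ} (hs : s ∈ Set.Icc 0 P.L) :
    |GG P.κ P.L f s| ≤ b / 4 := by
  have hκ := h.κ_pos; have hc := h.c_pos; have hL := h.L_pos
  refine (abs_GG_le hκ hc h.c_le h.cos_ge hf hs).trans ?_
  have h1 := int_abs_le_const hL.le hfb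
  calc _ ≤ 2 / (P.c * P.κ) * (P.L * (b * (5 * P.γ + P.η))) := by gcongr
    _ = 2 / (P.c * P.κ) * P.L * (5 * P.γ + P.η) * b := by ring
    _ ≤ 1 / 4 * b := by have := h.c2; gcongr
    _ = _ := by ring

/-- A bound `Q` on the neighbours improves to `2 S₃ μ + Q / 4`. -/
lemma Sol.tail_step (S : P.Sol p X) (R : P.Reg V VL Vinf a0 μ) (hp0 : 0 ≤ p) (hpP : p ≤ P0)
    {Q : ℝ} (hQ : 0 ≤ Q)
    (hX : ∀ n, ∀ s ∈ Set.Icc 0 P.L, |X (n + 1) s| ≤ Q * (1 / 2) ^ (n + 1))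
    (n : ℕ) {s : ℝ} (hs : s ∈ Set.Icc 0 P.L) :
    |X (n + 1) s| ≤ (2 * P.S3 a0 P0 * μ + Q / 4) * (1 / 2) ^ (n + 1) := by
  have h := R.good
  have hγ := h.γ_pos; have hη := h.η_nonneg
  have hN := h.N_cont
  have hX0 := S.cont 0; have hX1 := S.cont 1; have hX2 := S.cont 2
  have hS3 : 0 ≤ P.S3 a0 P0 * μ := (abs_nonneg _).trans (S.GG_y R hp0 hpP hs)
  rw [S.eq _ s hs]
  cases n with
  | zero =>
    have cs := h.src_cont S.cont 0
    have c0 : Continuous fun r => P.γ * X 0 r := by fun_prop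
    have e := GG_sub (κ := P.κ) (L := P.L) cs c0 s
    have e2 : GG P.κ P.L (fun r => P.γ * X 0 r) s = P.γ * GG P.κ P.L (X 0) s := by
      unfold GG
      rw [SS_mul, CC_mul]; ring
    have h1 := S.GG_y R hp0 hpP hs
    have h2 := h.GG_small (f := fun r => P.src X 0 r - P.γ * X 0 r) (b := Q / 2) (by fun_prop)
      (by positivity) (fun r hr => by
        have a1 := hX 0 r hr
        have a2 := hX 1 r hr
        have a3 := (h.N_le (X 1 r)).trans (mul_le_mul_of_nonneg_left a1 hη)
        norm_num at a1 a2 a3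
        have e3 : P.src X 0 r - P.γ * X 0 r = P.γ * (X 2 r - 2 * X 1 r) - P.N (X 1 r) := by
          simp only [src]; ring
        have a4 : |X 2 r - 2 * X 1 r| ≤ Q * (1 / 4) + 2 * (Q * (1 / 2)) := by
          refine (abs_sub _ _).trans ?_
          rw [abs_mul, abs_two]
          gcongr
        rw [e3]
        refine (abs_sub _ _).trans ?_
        rw [abs_mul, abs_of_pos hγ]
        have := mul_le_mul_of_nonneg_left a4 hγ.le
        nlinarith [mul_nonneg hγ.le hQ]) hs
    change |GG P.κ P.L (P.src X 0) s| ≤ _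
    have e3 : GG P.κ P.L (P.src X 0) s = GG P.κ P.L (fun r => P.src X 0 r - P.γ * X 0 r) s
        + P.γ * GG P.κ P.L (X 0) s := by rw [← e2]; linarith
    rw [e3]
    refine (abs_add_le _ _).trans ?_
    rw [zero_add, pow_one]
    linarith
  | succ n =>
    have cs := h.src_cont S.cont (n + 1)
    have h2 := h.GG_small (b := Q * (1 / 2) ^ (n + 2)) cs (by positivity) (fun r hr => by
      have a1 := hX n r hr
      have a2 := hX (n + 1) r hr
      have a3 := hX (n + 2) r hr
      have a4 := (h.N_le (X (n + 2) r)).trans (mul_le_mul_of_nonneg_left a2 hη)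
      have e1 : Q * (1 / 2) ^ (n + 1) = 2 * (Q * (1 / 2) ^ (n + 2)) := by ring
      have e2 : Q * (1 / 2) ^ (n + 3) = 1 / 2 * (Q * (1 / 2) ^ (n + 2)) := by ring
      rw [e1] at a1
      change |X (n + 3) r| ≤ Q * (1 / 2) ^ (n + 3) at a3
      rw [e2] at a3
      change |X (n + 2) r| ≤ Q * (1 / 2) ^ (n + 2) at a2
      change |P.N (X (n + 2) r)| ≤ P.η * (Q * (1 / 2) ^ (n + 2)) at a4
      have hq : 0 ≤ Q * (1 / 2) ^ (n + 2) := by positivity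
      set q := Q * (1 / 2) ^ (n + 2)
      have a5 : |X (n + 3) r - 2 * X (n + 2) r + X (n + 1) r| ≤ 1 / 2 * q + 2 * q + 2 * q := by
        refine (abs_add_le _ _).trans (add_le_add ((abs_sub _ _).trans (add_le_add a3 ?_)) a1)
        rw [abs_mul, abs_two]
        gcongr
      change |P.γ * (X (n + 3) r - 2 * X (n + 2) r + X (n + 1) r) - P.N (X (n + 2) r)| ≤ _
      refine (abs_sub _ _).trans ?_
      rw [abs_mul, abs_of_pos hγ]
      have := mul_le_mul_of_nonneg_left a5 hγ.le
      nlinarith [mul_nonneg hγ.le hq]) hs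
    change |GG P.κ P.L (P.src X (n + 1)) s| ≤ _
    refine h2.trans ?_
    change Q * (1 / 2) ^ (n + 2) / 4 ≤ (2 * P.S3 a0 P0 * μ + Q / 4) * (1 / 2) ^ (n + 2)
    have : 0 ≤ P.S3 a0 P0 * μ * (1 / 2) ^ (n + 2) := by positivity
    linarith

/-- The neighbours have amplitude `O(μ) = O(√γ)`, decaying geometrically in the site index: this
is the limit of the iteration of `Sol.tail_step`. -/
lemma Sol.tail (S : P.Sol p X) (R : P.Reg V VL Vinf a0 μ) (hp0 : 0 ≤ p) (hpP : p ≤ P0)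
    (n : ℕ) {s : ℝ} (hs : s ∈ Set.Icc 0 P.L) :
    |X (n + 1) s| ≤ 4 * P.S3 a0 P0 * μ * (1 / 2) ^ (n + 1) := by
  have h := R.good
  have hB := h.B_pos
  have hP0 := hp0.trans hpP
  have hS3 : 0 ≤ P.S3 a0 P0 * μ := (abs_nonneg _).trans (S.GG_y R hp0 hpP hs)
  have key : ∀ k : ℕ, ∀ n, ∀ s ∈ Set.Icc 0 P.L, |X (n + 1) s| ≤
      (4 * P.S3 a0 P0 * μ + 2 * P.B * P0 * (1 / 2) ^ k) * (1 / 2) ^ (n + 1) := by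
    intro k
    induction k with
    | zero =>
      intro n s hs
      refine (S.tail0 h hp0 hpP n hs).trans ?_
      gcongr
      linarith
    | succ k ih =>
      intro n s hs
      have hq : 0 ≤ 2 * P.B * P0 * (1 / 2) ^ k := by positivity
      refine (S.tail_step R hp0 hpP (by linarith) ih n hs).trans ?_
      apply mul_le_mul_of_nonneg_right _ (by positivity)
      rw [pow_succ]
      linarith
  have lim : Filter.Tendsto (fun k : ℕ =>
      (4 * P.S3 a0 P0 * μ + 2 * P.B * P0 * (1 / 2) ^ k) * (1 / 2) ^ (n + 1)) Filter.atTop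
      (nhds ((4 * P.S3 a0 P0 * μ + 2 * P.B * P0 * 0) * (1 / 2) ^ (n + 1))) := by
    have := tendsto_pow_atTop_nhds_zero_of_lt_one (r := (1/2:ℝ)) (by norm_num) (by norm_num)
    exact ((this.const_mul _).const_add _).mul_const _
  have := ge_of_tendsto' lim (fun k => key k n s hs)
  simpa using this

end Par

end

section

/-! ### The velocity of the central site at the quarter period -/

namespace Par

/-- Bound for the displacement of the centre up to time `τ`. -/
noncomputable def Yb (P : Par) (P0 : ℝ) : ℝ := (1 + P.τ) * exp (P.K * (P.τ + 1)) * (2 * P0)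

/-- Bound, per unit of `γ`, for the coupling force on the centre up to time `τ`. -/
noncomputable def Hc (P : Par) (P0 : ℝ) : ℝ := 2 * (P.B * P0) + 2 * P.Yb P0

/-- Conditions making `μ` small enough for the shooting argument: the collision is over before
`τ`, `4 L` has the asymptotics of the period, and the errors are dominated. The constant `c` is a
lower bound for the speed of the centre in the well. -/
structure Fine (P : Par) (a0 μ lam CT c P0 : ℝ) : Prop where
  c_pos : 0 < c
  cτ : a0 + 1 ≤ c * P.τ
  lamτ : |lam| / 4 + 1 ≤ P.τ
  CT_pos : 0 < CT
  Lasym : |4 * P.L - (√2 * π / μ + lam)| ≤ CT * μ ^ 2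
  s1 : K1 P.M a0 P0 (P.Hc P0) P.τ * μ ^ 2 ≤ c ^ 2
  s2 : CT * μ ^ 2 ≤ 4
  s3 : (a0 + 1) * (2 * μ) ≤ c
  s4 : 8 * P.S3 a0 P0 * μ ≤ 1
  s5 : 4 * P.τ * μ ≤ 1

variable {P : Par} {V : ℝ → ℝ} {VL Vinf a0 μ lam CT c : ℝ}
variable {p P0 : ℝ} {X : ℕ → ℝ → ℝ}

lemma Sol.yb (S : P.Sol p X) (R : P.Reg V VL Vinf a0 μ) (hp0 : 0 ≤ p) (hpP : p ≤ P0) {s : ℝ}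
    (hs : s ∈ Set.Icc 0 P.τ) : |P.yy p X s| ≤ P.Yb P0 := by
  have hτL := R.τL
  have hsL : s ∈ Set.Icc 0 P.L := ⟨hs.1, by linarith [hs.2]⟩
  have := S.bnd 0 s hsL
  rw [S.X0 hsL, abs_of_nonneg hp0] at this
  refine this.trans ?_
  have hK := R.good.K_pos
  have hP0 := hp0.trans hpP
  have := hs.1; have := hs.2
  have hτ0 := R.good.τ_nonneg
  change P.w s * (2 * p) ≤ _
  unfold w Yb
  have hm : min s (P.τ + 1) ≤ P.τ + 1 := min_le_right _ _
  gcongr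

/-- Error constant, per unit of `γ`, for the velocity of the centre at time `τ`. -/
noncomputable def Ka (P : Par) (a0 P0 c : ℝ) : ℝ := K1 P.M a0 P0 (P.Hc P0) P.τ / c

/-- Error constant, per unit of `γ`, for the position of the centre at time `τ`. -/
noncomputable def Kb (P : Par) (a0 P0 c : ℝ) : ℝ :=
  P0 * P.τ * K1 P.M a0 P0 (P.Hc P0) P.τ / c ^ 2

/-- The state of the centre when the collision is over, from `inner_est`. -/
lemma Sol.inner (S : P.Sol p X) (R : P.Reg V VL Vinf a0 μ) (F : P.Fine a0 μ lam CT c P0)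
    (hp : 2 * VL + 2 * c ^ 2 ≤ p ^ 2) (hp0 : 0 < p) (hpP : p ≤ P0) :
    a0 + 1 ≤ P.yy p X P.τ ∧ c ≤ P.dyy p X P.τ ∧
    |P.dyy p X P.τ - √(p ^ 2 - 2 * Vinf)| ≤ P.Ka a0 P0 c * μ ^ 2 ∧
    |P.yy p X P.τ - √(p ^ 2 - 2 * Vinf) * (P.τ - delay V Vinf a0 p)| ≤ P.Kb a0 P0 c * μ ^ 2 := by
  have h := R.good
  have hγ := h.γ_pos
  have hτ : 0 < P.τ := by have := F.lamτ; have := abs_nonneg lam; linarith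
  have hB := h.B_pos
  have hP0 := hp0.trans_le hpP
  have hYb : 0 ≤ P.Yb P0 := by unfold Yb; positivity
  have := inner_est R.pot (y := P.yy p X) (dy := P.dyy p X) (τ := P.τ) (γ := P.γ) (Hc := P.Hc P0)
    (h := fun s => 2 * P.γ * P.j * X 1 s - P.ω ^ 2 * P.yy p X s) F.c_pos hp hp0 hpP hτ F.cτ
    (yy_zero p X) (dyy_zero p X) (h.yy_deriv p S.cont) (fun s hs => by
      refine (h.dyy_deriv p S.cont s).congr_deriv ?_
      have hsL : s ∈ Set.Icc 0 P.L := ⟨hs.1, by linarith [hs.2, R.τL]⟩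
      unfold src0
      rw [chi_one hs.2, min_eq_left hs.2, S.X0 hsL, R.g_eq]
      ring) (by unfold Hc; positivity) (fun s hs => by
      have hsL : s ∈ Set.Icc 0 P.L := ⟨hs.1, by linarith [hs.2, R.τL]⟩
      have h1 := S.tail0 h hp0.le hpP 0 hsL
      have h2 := S.yb R hp0.le hpP hs
      have h3 := h.j_le
      norm_num at h1
      refine (abs_sub _ _).trans ?_
      rw [h.ω_sq, abs_mul, abs_mul (2 * P.γ) P.j, abs_mul (2 * P.γ) (P.yy p X s),
        abs_of_pos (by positivity : 0 < 2 * P.γ)]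
      unfold Hc
      calc _ ≤ 2 * P.γ * 1 * (2 * P.B * P0 * (1 / 2)) + 2 * P.γ * P.Yb P0 := by gcongr
        _ = _ := by ring) hγ (by rw [R.γ_eq]; nlinarith [R.μ_pos, R.μ_le])
      (by rw [R.γ_eq]; exact F.s1)
  obtain ⟨a1, a2, a3, a4⟩ := this
  rw [R.γ_eq] at a3 a4
  exact ⟨F.cτ.trans (a1 _ ⟨hτ.le, le_rfl⟩), a2, a3, a4⟩

/-- Once the centre has left `[-a0, a0]`, only the neighbours act on it besides the harmonic
force. -/
lemma Sol.src0_outer (S : P.Sol p X) (R : P.Reg V VL Vinf a0 μ)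
    (hy : a0 ≤ P.yy p X P.τ) {r : ℝ} (hr : P.τ ≤ r) :
    P.src0 X r = 2 * P.γ * P.j * X 1 r := by
  have hτ := R.good.τ_nonneg
  unfold src0
  rw [min_eq_right hr, S.X0 ⟨hτ, by linarith [R.τL]⟩, R.g_eq, R.pot.out (hy.trans (le_abs_self _))]
  ring

lemma Sol.src0_outer_le (S : P.Sol p X) (R : P.Reg V VL Vinf a0 μ) (hp0 : 0 ≤ p) (hpP : p ≤ P0)
    (hy : a0 ≤ P.yy p X P.τ) {r : ℝ} (hr : P.τ ≤ r) (hr' : r ≤ P.L) :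
    |P.src0 X r| ≤ 4 * μ ^ 2 * (P.S3 a0 P0 * μ) := by
  have h := R.good
  have hτ := h.τ_nonneg
  have hγ := h.γ_pos
  have h1 := S.tail R hp0 hpP 0 (⟨hτ.trans hr, hr'⟩ : r ∈ Set.Icc 0 P.L)
  have h3 := h.j_le
  norm_num at h1
  rw [S.src0_outer R hy hr, abs_mul, abs_mul (2 * P.γ) P.j, abs_of_pos (by positivity : 0 < 2 * P.γ)]
  calc _ ≤ 2 * P.γ * 1 * (4 * P.S3 a0 P0 * μ * (1 / 2)) := by gcongr
    _ = _ := by rw [R.γ_eq]; ring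

lemma Reg.ω_ge (R : P.Reg V VL Vinf a0 μ) : μ ≤ P.ω ∧ P.ω ≤ 2 * μ := by
  rw [R.ω_eq]
  have h1 : 1 ≤ √2 := le_sqrt_of_sq_le (by norm_num)
  have h2 : √2 ≤ 2 := sqrt_le_left (by norm_num) |>.2 (by norm_num)
  have := R.μ_pos
  constructor <;> nlinarith

/-- The phase `ω (L - τ)` is a quarter turn up to `ω ψ` with `ψ ≈ τ - λ / 4`, by the asymptotics of
the period. -/
lemma Fine.phase (F : P.Fine a0 μ lam CT c P0) (R : P.Reg V VL Vinf a0 μ) :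
    ∃ ψ, P.ω * (P.L - P.τ) = π / 2 - P.ω * ψ ∧ |ψ - (P.τ - lam / 4)| ≤ CT * μ ^ 2 / 4 ∧
      0 ≤ ψ ∧ ψ ≤ 2 * P.τ := by
  have hμ := R.μ_pos
  have s2 : (√2) ^ 2 = 2 := sq_sqrt (by norm_num)
  have hs2 : 0 < √2 := by positivity
  have hb := F.Lasym
  have e0 : |P.τ - P.L + √2 * π / μ / 4 - (P.τ - lam / 4)| ≤ CT * μ ^ 2 / 4 := by
    rw [abs_le] at hb ⊢
    constructor <;> linarith [hb.1, hb.2]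
  refine ⟨P.τ - P.L + √2 * π / μ / 4, ?_, e0, ?_, ?_⟩
  · rw [R.ω_eq]
    field_simp
    linear_combination (2 * π) * s2
  · have := F.lamτ; have := F.s2; have := le_abs_self lam
    linarith [(abs_le.1 e0).1]
  · have := F.lamτ; have := F.s2; have := neg_abs_le lam
    linarith [(abs_le.1 e0).2]

/-- After `τ` the centre stays outside the support of the force up to the quarter period, because
its harmonic arc has phase at most `π / 2` there. -/
lemma Sol.outer (S : P.Sol p X) (R : P.Reg V VL Vinf a0 μ) (F : P.Fine a0 μ lam CT c P0)
    (hp : 2 * VL + 2 * c ^ 2 ≤ p ^ 2) (hp0 : 0 < p) (hpP : p ≤ P0) {s : ℝ} (hs : P.τ ≤ s)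
    (hsL : s ≤ P.L) : a0 ≤ P.yy p X s := by
  have h := R.good
  have hτ := h.τ_nonneg
  have hμ := R.μ_pos
  obtain ⟨i1, i2, -, -⟩ := S.inner R F hp hp0 hpP
  have hω := h.ω_pos
  obtain ⟨hω1, hω2⟩ := R.ω_ge
  have hS3 : 0 ≤ P.S3 a0 P0 * μ :=
    (abs_nonneg _).trans (S.GG_y R hp0.le hpP (s := 0) ⟨le_rfl, h.L_pos.le⟩)
  have ha := R.pot.a0_pos
  have d := duhamel_sin hω.ne' hs (h.src0_cont S.cont) (h.yy_deriv p S.cont)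
    (fun r _ => h.dyy_deriv p S.cont r)
  have err : |∫ r in P.τ..s, sin (P.ω * (s - r)) / P.ω * P.src0 X r| ≤ 1 := by
    have := intervalIntegral.norm_integral_le_of_norm_le_const (a := P.τ) (b := s)
      (f := fun r => sin (P.ω * (s - r)) / P.ω * P.src0 X r)
      (C := 1 / μ * (4 * μ ^ 2 * (P.S3 a0 P0 * μ))) (fun r hr => by
        rw [Set.uIoc_of_le hs] at hr
        rw [Real.norm_eq_abs, abs_mul, abs_div, abs_of_pos hω]
        have := S.src0_outer_le R hp0.le hpP (by linarith) hr.1.le (hr.2.trans hsL)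
        have := abs_sin_le_one (P.ω * (s - r))
        gcongr)
    refine this.trans ?_
    rw [abs_of_nonneg (by linarith)]
    have hsμ : μ * (s - P.τ) ≤ 2 := by nlinarith [R.L_hi]
    calc _ = 4 * (P.S3 a0 P0 * μ) * (μ * (s - P.τ)) := by field_simp
      _ ≤ 4 * (P.S3 a0 P0 * μ) * 2 := by gcongr
      _ ≤ 1 := by linarith [F.s4]
  rw [d] at err
  obtain ⟨ψ, e, -, hψ, -⟩ := F.phase R
  have hθ : P.ω * (s - P.τ) ≤ π / 2 := by
    have : P.ω * (s - P.τ) ≤ P.ω * (P.L - P.τ) := by gcongr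
    have : 0 ≤ P.ω * ψ := by positivity
    linarith
  have hθ0 : 0 ≤ P.ω * (s - P.τ) := mul_nonneg hω.le (by linarith)
  have hc := cos_nonneg_of_mem_Icc (x := P.ω * (s - P.τ)) ⟨by linarith [pi_pos], hθ⟩
  have hsn := sin_nonneg_of_nonneg_of_le_pi hθ0 (by linarith [pi_pos])
  have hc1 := cos_le_one (P.ω * (s - P.τ))
  have hs1 := sin_le_one (P.ω * (s - P.τ))
  have hsc := sin_sq_add_cos_sq (P.ω * (s - P.τ))
  set C := cos (P.ω * (s - P.τ))
  set Sn := sin (P.ω * (s - P.τ))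
  have hsum : 1 ≤ Sn + C := by nlinarith
  have h1 : Sn * (a0 + 1) ≤ Sn / P.ω * P.dyy p X P.τ := by
    have : (a0 + 1) * P.ω ≤ P.dyy p X P.τ := by
      have := F.s3
      have : (a0 + 1) * P.ω ≤ (a0 + 1) * (2 * μ) := by gcongr
      linarith
    calc Sn * (a0 + 1) = Sn / P.ω * ((a0 + 1) * P.ω) := by field_simp
      _ ≤ _ := by gcongr
  have h2 : C * (a0 + 1) ≤ C * P.yy p X P.τ := by gcongr
  have := (abs_le.1 err).1
  nlinarith

/-- Error constant in the turning condition. -/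
noncomputable def C4 (P : Par) (a0 CT c P0 : ℝ) : ℝ :=
  (P0 + P.Ka a0 P0 c) * (8 * P.τ ^ 3) + P.Ka a0 P0 c * (2 * P.τ) + P0 * CT
    + P.Yb P0 * (8 * P.τ ^ 2) + P.Kb a0 P0 c + 8 * P.S3 a0 P0

/-- The elementary estimate behind `Sol.turning`, with `sn = sin (ω ψ)` and `cs = cos (ω ψ)`: the
leading part of `dL / ω` is `v ψ - v (τ - D)`. -/
lemma turning_aux {ω ψ v P0 μ Ka Kb CT τ Yb S3 dL dτ yτ sn cs D l : ℝ} (hω : 0 < ω)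
    (hv0 : 0 ≤ v) (hvP : v ≤ P0) (hψ : 0 ≤ ψ) (hψ2 : ψ ≤ 2 * τ) (hμ : 0 ≤ μ) (hμ2 : μ ^ 2 ≤ μ)
    (hμ1 : μ ≤ 1)
    (hKa : 0 ≤ Ka) (hKb : 0 ≤ Kb) (hP0 : 0 ≤ P0) (hCT : 0 ≤ CT)
    (err : |(dL - (sn * dτ - ω * cs * yτ)) / ω| ≤ 8 * S3 * μ)
    (i3 : |dτ - v| ≤ Ka * μ ^ 2) (i4 : |yτ - v * (τ - D)| ≤ Kb * μ ^ 2) (hYb : |yτ| ≤ Yb)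
    (hψ' : |ψ - (τ - l)| ≤ CT * μ ^ 2 / 4) (hsin : |sn / ω - ψ| ≤ 8 * τ ^ 3 * μ)
    (hcos : |cs - 1| ≤ 8 * τ ^ 2 * μ) :
    |dL / ω - v * (D - l)| ≤ ((P0 + Ka) * (8 * τ ^ 3) + Ka * (2 * τ) + P0 * CT
      + Yb * (8 * τ ^ 2) + Kb + 8 * S3) * μ := by
  have hY0 := (abs_nonneg _).trans hYb
  have b1 : |dτ * (sn / ω - ψ)| ≤ (P0 + Ka) * (8 * τ ^ 3 * μ) := by
    rw [abs_mul]
    have : |dτ| ≤ P0 + Ka := by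
      have h1 : |dτ| ≤ |dτ - v| + |v| := by simpa using abs_add_le (dτ - v) v
      rw [abs_of_nonneg hv0] at h1
      have : Ka * μ ^ 2 ≤ Ka * 1 := by gcongr; linarith
      linarith
    gcongr
  have b2 : |(dτ - v) * ψ| ≤ Ka * μ * (2 * τ) := by
    rw [abs_mul, abs_of_nonneg hψ]
    have : |dτ - v| ≤ Ka * μ := i3.trans (by gcongr)
    gcongr
  have b3 : |v * (ψ - (τ - l))| ≤ P0 * (CT * μ) := by
    rw [abs_mul, abs_of_nonneg hv0]
    have : CT * μ ^ 2 ≤ CT * μ := by gcongr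
    have : 0 ≤ CT * μ := by positivity
    have : |ψ - (τ - l)| ≤ CT * μ := by linarith
    gcongr
  have b4 : |yτ * (cs - 1)| ≤ Yb * (8 * τ ^ 2 * μ) := by
    rw [abs_mul]; gcongr
  have b5 : |yτ - v * (τ - D)| ≤ Kb * μ := i4.trans (by gcongr)
  have key : dL / ω - v * (D - l) = (dL - (sn * dτ - ω * cs * yτ)) / ω
        + (dτ * (sn / ω - ψ)) + (dτ - v) * ψ + v * (ψ - (τ - l))
        - yτ * (cs - 1) - (yτ - v * (τ - D)) := by
    field_simp; ring
  rw [key, abs_le]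
  rw [abs_le] at err b1 b2 b3 b4 b5
  constructor <;> linarith [err.1, b1.1, b2.1, b3.1, b4.1, b5.1, err.2, b1.2, b2.2, b3.2, b4.2, b5.2]

set_option maxHeartbeats 800000 in
/-- The velocity of the centre at the quarter period is, after division by `ω`, the asymptotic
velocity times the mismatch between the delay of this orbit and that of the reference orbit, with an
error `O(μ)`. -/
lemma Sol.turning (S : P.Sol p X) (R : P.Reg V VL Vinf a0 μ) (F : P.Fine a0 μ lam CT c P0)
    (hp : 2 * VL + 2 * c ^ 2 ≤ p ^ 2) (hp0 : 0 < p) (hpP : p ≤ P0) :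
    |P.dyy p X P.L / P.ω - √(p ^ 2 - 2 * Vinf) * (delay V Vinf a0 p - lam / 4)|
      ≤ P.C4 a0 CT c P0 * μ := by
  have h := R.good
  have hμ := R.μ_pos
  have hμ1 := R.μ_le
  obtain ⟨i1, i2, i3, i4⟩ := S.inner R F hp hp0 hpP
  have hω := h.ω_pos
  have hP0 := hp0.trans_le hpP
  have hL := h.L_pos
  have hCT := F.CT_pos
  have hVi := R.pot.Vinf_le
  have hVn := R.pot.Vinf_nonneg
  obtain ⟨hω1, hω2⟩ := R.ω_ge
  have hτ : 0 < P.τ := by have := F.lamτ; have := abs_nonneg lam; linarith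
  have hτL : P.τ ≤ P.L := by linarith [R.τL]
  have hS3 : 0 ≤ P.S3 a0 P0 * μ :=
    (abs_nonneg _).trans (S.GG_y R hp0.le hpP (s := 0) ⟨le_rfl, h.L_pos.le⟩)
  have hYb := S.yb R hp0.le hpP (s := P.τ) ⟨hτ.le, le_rfl⟩
  have hYb0 : 0 ≤ P.Yb P0 := (abs_nonneg _).trans hYb
  have d := duhamel_cos hτL (h.src0_cont S.cont) (h.yy_deriv p S.cont)
    (fun r _ => h.dyy_deriv p S.cont r)
  have err : |(∫ r in P.τ..P.L, cos (P.ω * (P.L - r)) * P.src0 X r) / P.ω|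
      ≤ 8 * P.S3 a0 P0 * μ := by
    have := intervalIntegral.norm_integral_le_of_norm_le_const (a := P.τ) (b := P.L)
      (f := fun r => cos (P.ω * (P.L - r)) * P.src0 X r)
      (C := 1 * (4 * μ ^ 2 * (P.S3 a0 P0 * μ))) (fun r hr => by
        rw [Set.uIoc_of_le hτL] at hr
        rw [Real.norm_eq_abs, abs_mul]
        have := S.src0_outer_le R hp0.le hpP (by linarith) hr.1.le hr.2
        have := abs_cos_le_one (P.ω * (P.L - r))
        gcongr)
    rw [abs_div, abs_of_pos hω, div_le_iff₀ hω]
    refine this.trans ?_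
    rw [abs_of_nonneg (by linarith)]
    have hsμ : μ * (P.L - P.τ) ≤ 2 := by nlinarith [R.L_hi]
    calc _ = 4 * (P.S3 a0 P0 * μ) * (μ * (P.L - P.τ)) * μ := by ring
      _ ≤ 4 * (P.S3 a0 P0 * μ) * 2 * P.ω := by gcongr
      _ = _ := by ring
  rw [d] at err
  obtain ⟨ψ, e, hψ', hψ, hψ2⟩ := F.phase R
  rw [e, cos_pi_div_two_sub, sin_pi_div_two_sub] at err
  set v := √(p ^ 2 - 2 * Vinf) with hv
  have hv0 : 0 ≤ v := sqrt_nonneg _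
  have hvP : v ≤ P0 := by
    rw [hv]
    calc √(p ^ 2 - 2 * Vinf) ≤ √(p ^ 2) := sqrt_le_sqrt (by linarith)
      _ = p := sqrt_sq hp0.le
      _ ≤ P0 := hpP
  have hμ2 : μ ^ 2 ≤ μ := by nlinarith
  have hKa : 0 ≤ P.Ka a0 P0 c := by
    have := (abs_nonneg _).trans i3
    exact nonneg_of_mul_nonneg_left this (by positivity)
  have hKb : 0 ≤ P.Kb a0 P0 c := by
    have := (abs_nonneg _).trans i4
    exact nonneg_of_mul_nonneg_left this (by positivity)
  have hφ : P.ω * ψ ≤ 4 * P.τ * μ := by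
    calc P.ω * ψ ≤ (2 * μ) * (2 * P.τ) := by gcongr
      _ = _ := by ring
  have hφ0 : 0 ≤ P.ω * ψ := by positivity
  have hφ1 : P.ω * ψ ≤ 1 := hφ.trans F.s5
  have hsin : |sin (P.ω * ψ) / P.ω - ψ| ≤ 8 * P.τ ^ 3 * μ := by
    have h1 : sin (P.ω * ψ) ≤ P.ω * ψ := sin_le hφ0
    have h2 : P.ω * ψ - (P.ω * ψ) ^ 3 / 4 ≤ sin (P.ω * ψ) := by
      rcases hφ0.eq_or_lt with h0 | h0
      · rw [← h0]; simp
      · have := sin_gt_sub_cube h0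
        have : 0 < (P.ω * ψ) ^ 3 := by positivity
        linarith
    have e3 : sin (P.ω * ψ) / P.ω - ψ = -(P.ω * ψ - sin (P.ω * ψ)) / P.ω := by
      field_simp; ring
    rw [e3, abs_div, abs_neg, abs_of_nonneg (by linarith), abs_of_pos hω, div_le_iff₀ hω]
    have h3 : (P.ω * ψ) ^ 2 ≤ (4 * P.τ * μ) ^ 2 := by gcongr
    calc _ ≤ (P.ω * ψ) ^ 3 / 4 := by linarith
      _ = (P.ω * ψ) ^ 2 * ψ / 4 * P.ω := by ring
      _ ≤ (4 * P.τ * μ) ^ 2 * (2 * P.τ) / 4 * P.ω := by gcongr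
      _ = 8 * P.τ ^ 3 * μ ^ 2 * P.ω := by ring
      _ ≤ 8 * P.τ ^ 3 * μ * P.ω := by gcongr
  have hcos : |cos (P.ω * ψ) - 1| ≤ 8 * P.τ ^ 2 * μ := by
    have h1 := one_sub_sq_div_two_le_cos (x := P.ω * ψ)
    have h2 := cos_le_one (P.ω * ψ)
    have h3 : (P.ω * ψ) ^ 2 ≤ (4 * P.τ * μ) ^ 2 := by gcongr
    have h4 : (4 * P.τ * μ) ^ 2 / 2 ≤ 8 * P.τ ^ 2 * μ := by
      calc _ = 8 * P.τ ^ 2 * μ ^ 2 := by ring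
        _ ≤ _ := by gcongr
    have h5 : (0:ℝ) ≤ 8 * P.τ ^ 2 * μ := by positivity
    rw [abs_le]
    constructor <;> linarith
  generalize P.dyy p X P.τ = dτ at *
  generalize P.yy p X P.τ = yτ at *
  clear_value v
  refine turning_aux hω hv0 hvP hψ hψ2 hμ.le hμ2 hμ1 hKa hKb hP0.le hCT.le err i3 i4 hYb hψ'
    hsin hcos

end Par

end

section

/-! ### Monotone delay and shooting -/

lemma inv_sqrt_eq {x : ℝ} (hx : 0 < x) : 1 / √x = x ^ (-(1:ℝ)/2) := by
  rw [neg_div, rpow_neg hx.le, sqrt_eq_rpow, one_div]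

lemma hasDerivAt_inv_sqrt {v e : ℝ} (h : v < e) :
    HasDerivAt (fun e => (e - v) ^ (-(1:ℝ)/2)) (-(1/2) * (e - v) ^ (-(3:ℝ)/2)) e := by
  have := ((hasDerivAt_id e).sub_const v).rpow_const (p := -(1:ℝ)/2) (Or.inl (sub_pos.2 h).ne')
  refine this.congr_deriv ?_
  simp only [id]
  rw [show -(1:ℝ)/2 - 1 = -(3:ℝ)/2 by norm_num]
  ring

/-- `√2` times the delay, as a function of the energy `e = p² / 2`. -/
noncomputable def DF (V : ℝ → ℝ) (Vinf a0 e : ℝ) : ℝ :=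
  (∫ u in (0:ℝ)..a0, (e - V u) ^ (-(1:ℝ)/2)) - a0 * (e - Vinf) ^ (-(1:ℝ)/2)

section
variable {V : ℝ → ℝ} {VL Vinf a0 κ M : ℝ}

/-- The derivative of the delay in the energy is a nonzero multiple of the non-degeneracy
integral; differentiation under the integral sign is allowed since `e - V` is bounded below. -/
lemma hasDerivAt_DF (H : Pot V VL Vinf a0 κ M) {E : ℝ} (hE : VL < E) :
    HasDerivAt (DF V Vinf a0) (-(1/2) * ((∫ s in (0:ℝ)..a0, (E - V s) ^ (-(3:ℝ)/2))
        - a0 * (E - Vinf) ^ (-(3:ℝ)/2))) E := by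
  have hVc : Continuous V := H.C2.continuous
  set m := (VL + E) / 2 with hm
  have hmV : VL < m := by rw [hm]; linarith
  have hmE : m < E := by rw [hm]; linarith
  have hle := H.le
  have hc : ∀ q : ℝ, ∀ e > VL, Continuous fun u => (e - V u) ^ q := fun q e he =>
    (continuous_const.sub hVc).rpow_const fun u => Or.inl (by
      have h1 := hle u
      have h2 : 0 < e - V u := by linarith
      exact h2.ne')
  have h1 := intervalIntegral.hasDerivAt_integral_of_dominated_loc_of_deriv_le (μ := volume)
    (F := fun e u => (e - V u) ^ (-(1:ℝ)/2))
    (F' := fun e u => -(1/2) * (e - V u) ^ (-(3:ℝ)/2)) (x₀ := E) (a := 0) (b := a0)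
    (s := Set.Ioi m) (bound := fun _ => (1/2) * (m - VL) ^ (-(3:ℝ)/2)) (Ioi_mem_nhds hmE)
    (by
      filter_upwards [Ioi_mem_nhds hmE] with e he
      exact (hc _ e (hmV.trans he)).aestronglyMeasurable)
    ((hc _ E hE).intervalIntegrable _ _)
    ((continuous_const.mul (hc _ E hE)).aestronglyMeasurable)
    (Filter.Eventually.of_forall fun u _ e he => by
      have h1 := hle u
      have h2 : m < e := he
      have h3 : (e - V u) ^ (-(3:ℝ)/2) ≤ (m - VL) ^ (-(3:ℝ)/2) :=
        rpow_le_rpow_of_nonpos (by linarith) (by linarith) (by norm_num)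
      have h4 : 0 ≤ (e - V u) ^ (-(3:ℝ)/2) := rpow_nonneg (by linarith) _
      rw [Real.norm_eq_abs, abs_mul, abs_of_nonneg h4]
      norm_num
      linarith)
    (by simp)
    (Filter.Eventually.of_forall fun u _ e he => hasDerivAt_inv_sqrt (by
      have h1 := hle u
      have h2 : m < e := he
      linarith))
  have h2 := (hasDerivAt_inv_sqrt (v := Vinf) (e := E) (by linarith [H.Vinf_le])).const_mul a0
  refine (h1.2.sub h2).congr_deriv ?_
  rw [intervalIntegral.integral_const_mul]
  ring

lemma delay_eq (H : Pot V VL Vinf a0 κ M) {e : ℝ} (he : VL < e) :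
    delay V Vinf a0 (√(2 * e)) = (√2 / 2) * DF V Vinf a0 e := by
  have h0 : 0 ≤ VL := (H.nonneg 0).trans (H.le 0)
  have key : ∀ v, v ≤ VL → 1 / √(√(2 * e) ^ 2 - 2 * v) = √2 / 2 * (e - v) ^ (-(1:ℝ)/2) := by
    intro v hv
    rw [← inv_sqrt_eq (by linarith), sq_sqrt (by linarith), ← mul_sub, sqrt_mul (by norm_num)]
    have : 0 < √(e - v) := sqrt_pos.2 (by linarith)
    have h2 : √2 ^ 2 = 2 := sq_sqrt (by norm_num)
    field_simp
    linarith
  unfold delay DF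
  rw [div_eq_mul_one_div a0, key Vinf H.Vinf_le,
    intervalIntegral.integral_congr (g := fun u => √2 / 2 * (e - V u) ^ (-(1:ℝ)/2))
      (fun u _ => key _ (H.le u)), intervalIntegral.integral_const_mul]
  ring

lemma lam_eq (H : Pot V VL Vinf a0 κ M) {E lam : ℝ} (hE : VL < E)
    (hlam : lam = 2 * √2 * ((∫ s in (0:ℝ)..a0, 1 / √(E - V s)) - a0 / √(E - Vinf))) :
    lam / 4 = (√2 / 2) * DF V Vinf a0 E := by
  unfold DF
  rw [hlam, div_eq_mul_one_div a0, inv_sqrt_eq (by linarith [H.Vinf_le]),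
    intervalIntegral.integral_congr (g := fun u => (E - V u) ^ (-(1:ℝ)/2))
      (fun u _ => inv_sqrt_eq (by linarith [H.le u]))]
  ring

/-- Nondegeneracy makes the delay strictly monotone (to first order) near the energy `E`. -/
lemma delay_sign (H : Pot V VL Vinf a0 κ M) {E lam : ℝ} (hE : VL < E)
    (hnondeg : (∫ s in (0:ℝ)..a0, (E - V s) ^ (-(3:ℝ)/2))
        - a0 * (E - Vinf) ^ (-(3:ℝ)/2) ≠ 0)
    (hlam : lam = 2 * √2 * ((∫ s in (0:ℝ)..a0, 1 / √(E - V s)) - a0 / √(E - Vinf))) :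
    ∃ d > 0, ∃ δ0 > 0, ∃ σ : ℝ, |σ| = 1 ∧ ∀ δ, 0 < δ → δ < δ0 →
      d * δ ≤ σ * (delay V Vinf a0 (√(2 * (E + δ))) - lam / 4) ∧
      σ * (delay V Vinf a0 (√(2 * (E - δ))) - lam / 4) ≤ -(d * δ) := by
  have hD := hasDerivAt_DF H hE
  set k := -(1/2) * ((∫ s in (0:ℝ)..a0, (E - V s) ^ (-(3:ℝ)/2))
        - a0 * (E - Vinf) ^ (-(3:ℝ)/2)) with hk
  have hk0 : k ≠ 0 := mul_ne_zero (by norm_num) hnondeg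
  have hka : 0 < |k| := abs_pos.2 hk0
  have h1 := (hasDerivAt_iff_isLittleO.1 hD).def (c := |k| / 2) (by positivity)
  obtain ⟨r, hr, hr'⟩ := Metric.eventually_nhds_iff.1 h1
  have hs2 : 0 < √2 := by positivity
  refine ⟨√2 / 4 * |k|, by positivity, min r (E - VL), lt_min hr (by linarith), |k| / k, by
    rw [abs_div, abs_abs, div_self hka.ne'], fun δ hδ hδ' => ?_⟩
  have hδr : δ < r := hδ'.trans_le (min_le_left _ _)
  have hδE : δ < E - VL := hδ'.trans_le (min_le_right _ _)
  rw [delay_eq H (by linarith), delay_eq H (by linarith), lam_eq H hE hlam]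
  have a1 := hr' (y := E + δ) (by simpa [abs_of_pos hδ] using hδr)
  have a2 := hr' (y := E - δ) (by simpa [Real.dist_eq, abs_of_pos hδ] using hδr)
  simp only [Real.norm_eq_abs, smul_eq_mul, add_sub_cancel_left, sub_sub_cancel_left, abs_neg,
    abs_of_pos hδ] at a1 a2
  generalize DF V Vinf a0 (E + δ) = A at *
  generalize DF V Vinf a0 (E - δ) = B at *
  generalize DF V Vinf a0 E = D at *
  have s1 : |k| / 2 * δ ≤ |k| / k * (A - D) ∧ |k| / k * (B - D) ≤ -(|k| / 2 * δ) := by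
    rw [abs_le] at a1 a2
    rcases lt_or_gt_of_ne hk0 with h | h
    · rw [abs_of_neg h] at *
      have h5 : -k / k = -1 := by rw [neg_div, div_self hk0]
      rw [h5]
      constructor <;> linarith [a1.1, a1.2, a2.1, a2.2]
    · rw [abs_of_pos h] at *
      rw [div_self hk0]
      constructor <;> linarith [a1.1, a1.2, a2.1, a2.2]
  constructor
  · calc √2 / 4 * |k| * δ = √2 / 2 * (|k| / 2 * δ) := by ring
      _ ≤ √2 / 2 * (|k| / k * (A - D)) := mul_le_mul_of_nonneg_left s1.1 (by positivity)
      _ = _ := by ring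
  · calc _ = √2 / 2 * (|k| / k * (B - D)) := by ring
      _ ≤ √2 / 2 * (-(|k| / 2 * δ)) := mul_le_mul_of_nonneg_left s1.2 (by positivity)
      _ = _ := by ring

end

namespace Par
variable {P : Par} {V : ℝ → ℝ} {VL Vinf a0 μ lam CT c P0 : ℝ}

/-- The velocity of the centre at the quarter period depends continuously on the momentum. -/
lemma Good.dyyL_cont (h : P.Good) {X : ℝ → ℕ → ℝ → ℝ} (hc : ∀ p n, Continuous (X p n))
    (hl : ∀ p p' n, ∀ s ∈ Set.Icc 0 P.L, |X p n s - X p' n s| ≤ P.W n s * (2 * |p - p'|)) :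
    Continuous fun p => P.dyy p (X p) P.L := by
  have hg := h.g_cont; have hch := continuous_chi P.τ
  have hB := h.B_pos; have hγ := h.γ_pos; have hL := h.L_pos
  have hτ := h.τ_nonneg; have hM := h.M_nonneg
  set w := (1 + P.L) * exp (P.K * (P.τ + 1)) with hw
  set Q := P.L * ((P.M * (w * 2)) + 2 * P.γ * 1 * (P.B * (1 / 2) ^ (0 + 1) * 2)) with hQ
  have hQ0 : 0 ≤ Q := by positivity
  suffices Continuous fun p => CC P.ω (P.src0 (X p)) P.L by unfold dyy; fun_prop
  refine lip_cont hQ0 fun p p' => ?_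
  rw [CC_sub (h.src0_cont (hc p)) (h.src0_cont (hc p'))]
  refine (abs_CC_le ((h.src0_cont (hc p)).sub (h.src0_cont (hc p'))) hL.le).trans ?_
  refine (int_abs_le_const (b := (P.M * (w * (2 * |p - p'|)))
    + 2 * P.γ * 1 * (P.B * (1 / 2) ^ (0 + 1) * (2 * |p - p'|))) hL.le fun r hr => ?_).trans
    (le_of_eq (by rw [hQ]; ring))
  have e : P.src0 (X p) r - P.src0 (X p') r
      = -(chi P.τ r * (P.g (X p 0 (min r P.τ)) - P.g (X p' 0 (min r P.τ))))
        + 2 * P.γ * P.j * (X p 1 r - X p' 1 r) := by unfold src0; ring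
  rw [Pi.sub_apply, e]
  refine (abs_add_le _ _).trans ?_
  rw [abs_neg, abs_mul, abs_mul, abs_mul (2 * P.γ), abs_of_nonneg (chi_nonneg _ _),
    abs_of_pos (by positivity : 0 < 2 * P.γ)]
  have hm : min r P.τ ∈ Set.Icc 0 P.L :=
    ⟨le_min hr.1 hτ, (min_le_left _ _).trans hr.2⟩
  have a1 := h.g_lip (X p 0 (min r P.τ)) (X p' 0 (min r P.τ))
  have a2 := hl p p' 0 _ hm
  have a3 := hl p p' 1 _ hr
  have a4 : P.W 0 (min r P.τ) ≤ w := h.w_le hm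
  have a5 := chi_le_one P.τ r
  have a6 := h.j_le
  have a7 : |X p 0 (min r P.τ) - X p' 0 (min r P.τ)| ≤ w * (2 * |p - p'|) :=
    a2.trans (by gcongr)
  have a8 : |P.g (X p 0 (min r P.τ)) - P.g (X p' 0 (min r P.τ))| ≤ P.M * (w * (2 * |p - p'|)) :=
    a1.trans (by gcongr)
  have a9 : chi P.τ r * |P.g (X p 0 (min r P.τ)) - P.g (X p' 0 (min r P.τ))|
      ≤ 1 * (P.M * (w * (2 * |p - p'|))) := by gcongr
  have a10 : 2 * P.γ * |P.j| * |X p 1 r - X p' 1 r|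
      ≤ 2 * P.γ * 1 * (P.B * (1 / 2) ^ (0 + 1) * (2 * |p - p'|)) := by
    gcongr
    exact a3
  linarith

/-- The shooting step: some momentum `√(2e)` with `e` within `δ` of `E` makes the centre turn
exactly at the quarter period. By `Sol.turning` the turning velocity has opposite signs at the ends
of the window once `δ` dominates `μ`, and the intermediate value theorem applies. -/
lemma Reg.shoot (R : P.Reg V VL Vinf a0 μ) (F : P.Fine a0 μ lam CT c P0) {E d δ σ : ℝ}
    (hδ : 0 < δ) (hσ : |σ| = 1)
    (hd : 0 < d) (hEδ : VL + c ^ 2 ≤ E - δ) (hP0 : √(2 * (E + δ)) ≤ P0)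
    (h1 : d * δ ≤ σ * (delay V Vinf a0 (√(2 * (E + δ))) - lam / 4))
    (h2 : σ * (delay V Vinf a0 (√(2 * (E - δ))) - lam / 4) ≤ -(d * δ))
    (hC : P.C4 a0 CT c P0 * μ ≤ c * (d * δ))
    {X : ℝ → ℕ → ℝ → ℝ} (hc : ∀ p n, Continuous (X p n))
    (hX : ∀ p n, ∀ s ∈ Set.Icc 0 P.L, X p n s = P.OP p (X p) n s)
    (hb : ∀ p n, ∀ s ∈ Set.Icc 0 P.L, |X p n s| ≤ P.W n s * (2 * |p|))
    (hl : ∀ p p' n, ∀ s ∈ Set.Icc 0 P.L, |X p n s - X p' n s| ≤ P.W n s * (2 * |p - p'|)) :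
    ∃ e ∈ Set.Icc (E - δ) (E + δ), P.dyy (√(2 * e)) (X (√(2 * e))) P.L = 0 := by
  have hV0 : 0 ≤ VL := (R.pot.nonneg 0).trans (R.pot.le 0)
  have hcp := F.c_pos
  have hω := R.good.ω_pos
  have hVi := R.pot.Vinf_le
  have main : ∀ e ∈ Set.Icc (E - δ) (E + δ), ∃ v, c ≤ v ∧
      |P.dyy (√(2 * e)) (X (√(2 * e))) P.L / P.ω - v * (delay V Vinf a0 (√(2 * e)) - lam / 4)|
      ≤ P.C4 a0 CT c P0 * μ := by
    intro e he
    have he0 : 0 < e := by nlinarith [he.1]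
    have hsq : √(2 * e) ^ 2 = 2 * e := sq_sqrt (by linarith)
    have S : P.Sol (√(2 * e)) (X (√(2 * e))) := ⟨hc _, hX _, hb _⟩
    refine ⟨_, ?_, S.turning R F (by rw [hsq]; linarith [he.1]) (by positivity)
      ((sqrt_le_sqrt (by linarith [he.2])).trans hP0)⟩
    apply le_sqrt_of_sq_le
    rw [hsq]
    nlinarith [he.1]
  have hcont : Continuous fun e => σ * (P.dyy (√(2 * e)) (X (√(2 * e))) P.L / P.ω) := by
    have := (R.good.dyyL_cont hc hl).comp (continuous_sqrt.comp (continuous_const_mul (2:ℝ)))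
    exact continuous_const.mul (this.div_const _)
  have hp : 0 ≤ σ * (P.dyy (√(2 * (E + δ))) (X (√(2 * (E + δ)))) P.L / P.ω) := by
    obtain ⟨v, hv, h⟩ := main (E + δ) ⟨by linarith, le_rfl⟩
    rw [← one_mul |_|, ← hσ, ← abs_mul] at h
    have h3 := (abs_le.1 h).1
    have h4 : c * (d * δ) ≤ v * (σ * (delay V Vinf a0 (√(2 * (E + δ))) - lam / 4)) :=
      mul_le_mul hv h1 (by positivity) (hcp.le.trans hv)
    linarith
  have hn : σ * (P.dyy (√(2 * (E - δ))) (X (√(2 * (E - δ)))) P.L / P.ω) ≤ 0 := by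
    obtain ⟨v, hv, h⟩ := main (E - δ) ⟨le_rfl, by linarith⟩
    rw [← one_mul |_|, ← hσ, ← abs_mul] at h
    have h3 := (abs_le.1 h).2
    have h4 : c * (d * δ) ≤ v * (-(σ * (delay V Vinf a0 (√(2 * (E - δ))) - lam / 4))) := by
      have : d * δ ≤ -(σ * (delay V Vinf a0 (√(2 * (E - δ))) - lam / 4)) := by linarith
      exact mul_le_mul hv this (by positivity) (hcp.le.trans hv)
    linarith
  obtain ⟨e, he, h0⟩ := intermediate_value_Icc (by linarith : E - δ ≤ E + δ)
    hcont.continuousOn ⟨hn, hp⟩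
  refine ⟨e, he, ?_⟩
  have hσ0 : σ ≠ 0 := by rintro rfl; simp at hσ
  have := (mul_eq_zero.1 h0).resolve_left hσ0
  exact (div_eq_zero_iff.1 this).resolve_right hω.ne'

end Par

end

section

/-! ### The reflected solution on the lattice -/

lemma oddExt_bound {L : ℝ} (hL : 0 < L) {y : ℝ → ℝ} (h0 : y 0 = 0) {b : ℝ}
    (hb : ∀ s ∈ Set.Icc 0 L, |y s| ≤ b) (s : ℝ) : |oddExt L y s| ≤ b := by
  have := tri_mem hL s
  unfold oddExt
  rcases le_total (tri L s) 0 with h | h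
  · rw [max_eq_right h, h0, zero_sub, abs_neg, max_eq_left (by linarith)]
    exact hb _ ⟨by linarith, by linarith [this.1]⟩
  · rw [max_eq_right (a := -tri L s) (by linarith), h0, sub_zero, max_eq_left h]
    exact hb _ ⟨h, this.2⟩

namespace Par
variable {P : Par} {V : ℝ → ℝ} {VL Vinf a0 μ lam CT c : ℝ}
variable {p P0 : ℝ} {X : ℕ → ℝ → ℝ}

lemma Sol.zero (S : P.Sol p X) (h : P.Good) (n : ℕ) : X n 0 = 0 := by
  rw [S.eq n 0 ⟨le_rfl, h.L_pos.le⟩]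
  cases n <;> simp [OP, SS, GG]

/-- The truncations in `src0` are inactive on orbits that stay outside the well after `τ`. -/
lemma Sol.src0_eq (S : P.Sol p X) (R : P.Reg V VL Vinf a0 μ)
    (hout : ∀ s, P.τ ≤ s → s ≤ P.L → a0 ≤ P.yy p X s) {r : ℝ} (hr : r ∈ Set.Icc 0 P.L) :
    P.src0 X r = -deriv V (X 0 r) + 2 * P.γ * P.j * X 1 r := by
  have hτ := R.good.τ_nonneg
  have hτL := R.τL
  rcases le_total r P.τ with h | h
  · unfold src0
    rw [chi_one h, min_eq_left h, R.g_eq, one_mul]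
  · rw [S.src0_outer R (hout _ le_rfl (by linarith)) h, S.X0 hr,
      R.pot.out ((hout _ h hr.2).trans (le_abs_self _))]
    ring

/-- The reflected centre solves its lattice equation; this uses the turning condition. -/
lemma Sol.ode0 (S : P.Sol p X) (R : P.Reg V VL Vinf a0 μ) (hj : P.j = 1)
    (hout : ∀ s, P.τ ≤ s → s ≤ P.L → a0 ≤ P.yy p X s) (hbc : P.dyy p X P.L = 0) :
    ∃ dY : ℝ → ℝ, ∀ s, HasDerivAt (oddExt P.L (X 0)) (dY s) s ∧
      HasDerivAt dY (-deriv V (oddExt P.L (X 0) s)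
        + 2 * P.γ * (oddExt P.L (X 1) s - oddExt P.L (X 0) s)) s := by
  have h := R.good
  have hL := h.L_pos
  have h0 := S.zero h
  have hs0 : P.src0 X 0 = 0 := by
    rw [S.src0_eq R hout ⟨le_rfl, hL.le⟩, h0, h0, R.pot.d0]; simp
  obtain ⟨dY, hdY⟩ := oddExt_ode h.ω_pos hL (h.src0_cont S.cont) hs0 (S.eq 0) hbc
  refine ⟨dY, fun s => ⟨(hdY s).1, (hdY s).2.congr_deriv ?_⟩⟩
  rw [oddExt_congr hL (fun r hr => S.src0_eq R hout hr), ← oddExt_comp_odd (h0 0) R.pot.odd,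
    h.ω_sq, hj]
  unfold oddExt
  ring

/-- The reflected neighbours solve their lattice equations, where `N` is the true remainder. -/
lemma Sol.odeN (S : P.Sol p X) (R : P.Reg V VL Vinf a0 μ)
    (n : ℕ) (hN : ∀ s ∈ Set.Icc 0 P.L,
      P.N (X (n + 1) s) = deriv V (X (n + 1) s) - P.κ ^ 2 * X (n + 1) s) :
    ∃ dY : ℝ → ℝ, ∀ s, HasDerivAt (oddExt P.L (X (n + 1))) (dY s) s ∧
      HasDerivAt dY (-deriv V (oddExt P.L (X (n + 1)) s)
        + P.γ * (oddExt P.L (X (n + 2)) s - 2 * oddExt P.L (X (n + 1)) s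
          + oddExt P.L (X n) s)) s := by
  have h := R.good
  have hL := h.L_pos
  have hκ := h.κ_pos
  have h0 := S.zero h
  have hcos : cos (P.κ * P.L) ≠ 0 := by
    have := h.c_pos.trans_le h.cos_ge
    exact abs_pos.1 this
  have hs0 : P.src X n 0 = 0 := by
    unfold src; rw [h0, h0, h0, h.N_zero]; simp
  obtain ⟨dY, hdY⟩ := oddExt_ode (A := -CC P.κ (P.src X n) P.L / cos (P.κ * P.L)) hκ hL
    (h.src_cont S.cont n) hs0 (y := X (n + 1)) (fun s hs => by
      rw [S.eq (n + 1) s hs]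
      unfold OP GG
      field_simp
      ring) (by field_simp; ring)
  refine ⟨dY, fun s => ⟨(hdY s).1, (hdY s).2.congr_deriv ?_⟩⟩
  rw [oddExt_congr hL (y' := fun r => P.γ * (X (n + 2) r - 2 * X (n + 1) r + X n r)
      - (deriv V (X (n + 1) r) - P.κ ^ 2 * X (n + 1) r))
      (fun r hr => by unfold src; rw [hN r hr]),
    ← oddExt_comp_odd (h0 (n + 1)) R.pot.odd]
  unfold oddExt
  ring

/-- The breather built from a half-lattice solution on a quarter period: odd reflection about the
node and even reflection about the turning time `s = L - t`. -/
noncomputable def br (P : Par) (X : ℕ → ℝ → ℝ) (n : ℤ) (t : ℝ) : ℝ :=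
  oddExt P.L (X n.natAbs) (P.L - t)

lemma Good.br_even (h : P.Good) (X : ℕ → ℝ → ℝ) (n : ℤ) (t : ℝ) :
    P.br X n (-t) = P.br X n t := by
  unfold br
  rw [← oddExt_refl h.L_pos]; congr 1; ring

lemma br_odd (X : ℕ → ℝ → ℝ) (n : ℤ) (t : ℝ) :
    P.br X n t = -P.br X n (2 * P.L - t) := by
  unfold br
  rw [← oddExt_neg]; congr 1; ring

lemma Good.br_periodic (h : P.Good) (X : ℕ → ℝ → ℝ) (n : ℤ) :
    Function.Periodic (P.br X n) (4 * P.L) := fun t => by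
  rw [br_odd, show 2 * P.L - (t + 4 * P.L) = -(2 * P.L + t) by ring, h.br_even, br_odd,
    show 2 * P.L - (2 * P.L + t) = -t by ring, h.br_even, neg_neg]

/-- The lattice equation, in first-order form. -/
lemma Sol.br_ode (S : P.Sol p X) (R : P.Reg V VL Vinf a0 μ) (hj : P.j = 1)
    (hout : ∀ s, P.τ ≤ s → s ≤ P.L → a0 ≤ P.yy p X s) (hbc : P.dyy p X P.L = 0)
    (hN : ∀ n, ∀ s ∈ Set.Icc 0 P.L,
      P.N (X (n + 1) s) = deriv V (X (n + 1) s) - P.κ ^ 2 * X (n + 1) s) (n : ℤ) :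
    ∃ dx : ℝ → ℝ, ∀ t, HasDerivAt (P.br X n) (dx t) t ∧
      HasDerivAt dx (-deriv V (P.br X n t)
        + P.γ * (P.br X (n + 1) t - 2 * P.br X n t + P.br X (n - 1) t)) t := by
  have key : ∃ dY : ℝ → ℝ, ∀ s, HasDerivAt (oddExt P.L (X n.natAbs)) (dY s) s ∧
      HasDerivAt dY (-deriv V (oddExt P.L (X n.natAbs) s)
        + P.γ * (oddExt P.L (X (n + 1).natAbs) s - 2 * oddExt P.L (X n.natAbs) s
          + oddExt P.L (X (n - 1).natAbs) s)) s := by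
    rcases lt_trichotomy n 0 with h | h | h
    · obtain ⟨m, rfl⟩ : ∃ m : ℕ, n = -(m + 1 : ℤ) := ⟨(-n - 1).toNat, by omega⟩
      rw [show (-(m + 1 : ℤ)).natAbs = m + 1 by omega,
        show (-(m + 1 : ℤ) + 1).natAbs = m by omega,
        show (-(m + 1 : ℤ) - 1).natAbs = m + 2 by omega]
      obtain ⟨dY, hd⟩ := S.odeN R m (hN m)
      exact ⟨dY, fun s => ⟨(hd s).1, (hd s).2.congr_deriv (by ring)⟩⟩
    · subst h
      obtain ⟨dY, hd⟩ := S.ode0 R hj hout hbc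
      refine ⟨dY, fun s => ⟨(hd s).1, (hd s).2.congr_deriv ?_⟩⟩
      norm_num
      ring
    · obtain ⟨m, rfl⟩ : ∃ m : ℕ, n = (m + 1 : ℤ) := ⟨(n - 1).toNat, by omega⟩
      rw [show ((m + 1 : ℤ)).natAbs = m + 1 by omega,
        show ((m + 1 : ℤ) + 1).natAbs = m + 2 by omega,
        show ((m + 1 : ℤ) - 1).natAbs = m by omega]
      obtain ⟨dY, hd⟩ := S.odeN R m (hN m)
      exact ⟨dY, hd⟩
  obtain ⟨dY, hd⟩ := key
  refine ⟨fun t => -dY (P.L - t), fun t => ⟨?_, ?_⟩⟩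
  · exact ((hd (P.L - t)).1.comp t ((hasDerivAt_id t).const_sub P.L)).congr_deriv (by ring)
  · exact (((hd (P.L - t)).2.comp t ((hasDerivAt_id t).const_sub P.L)).neg).congr_deriv
      (by simp only [br]; ring)

/-- Geometric decay of all components in the site index. -/
lemma Sol.br_decay (S : P.Sol p X) (R : P.Reg V VL Vinf a0 μ) (hp0 : 0 ≤ p) (hpP : p ≤ P0) :
    ∃ Q, 0 ≤ Q ∧ ∀ (n : ℤ) t, |P.br X n t| ≤ Q * (1 / 2) ^ n.natAbs := by
  have h := R.good
  have hL := h.L_pos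
  have hB := h.B_pos
  have hP0 := hp0.trans hpP
  have a : 0 ≤ (1 + P.L) * exp (P.K * (P.τ + 1)) * (2 * P0) := by positivity
  have b : 0 ≤ 2 * P.B * P0 := by positivity
  refine ⟨(1 + P.L) * exp (P.K * (P.τ + 1)) * (2 * P0) + 2 * P.B * P0, by positivity,
    fun n t => ?_⟩
  refine oddExt_bound hL (S.zero h _) (fun s hs => ?_) _
  rcases Nat.eq_zero_or_pos n.natAbs with e | e
  · rw [e, pow_zero, mul_one]
    linarith [S.X0_bnd h hp0 hpP hs]
  · obtain ⟨m, hm⟩ := Nat.exists_eq_succ_of_ne_zero e.ne'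
    rw [hm]
    refine (S.tail0 h hp0 hpP m hs).trans ?_
    gcongr
    linarith

lemma pow_shift (n m : ℤ) (h : n.natAbs ≤ m.natAbs + 1) :
    (1 / 2 : ℝ) ^ m.natAbs ≤ 2 * (1 / 2) ^ n.natAbs := by
  have : (1 / 2 : ℝ) ^ (m.natAbs + 1) ≤ (1 / 2) ^ n.natAbs :=
    pow_le_pow_of_le_one (by norm_num) (by norm_num) h
  rw [pow_succ] at this
  linarith

lemma summable_natAbs : Summable fun n : ℤ => (1 / 4 : ℝ) ^ n.natAbs := by
  apply Summable.of_nat_of_neg <;> simpa using summable_geometric_of_lt_one (r := (1/4:ℝ))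
    (by norm_num) (by norm_num)

/-- The breather lies in `H²` with values in `ℓ²`: the displacement decays geometrically, hence so
does the acceleration by the equation, and hence the velocity by integrating from a zero of it. -/
lemma Sol.br_summable (S : P.Sol p X) (R : P.Reg V VL Vinf a0 μ) (hp0 : 0 ≤ p) (hpP : p ≤ P0)
    {dx : ℤ → ℝ → ℝ} (hd : ∀ n t, HasDerivAt (P.br X n) (dx n t) t ∧
      HasDerivAt (dx n) (-deriv V (P.br X n t)
        + P.γ * (P.br X (n + 1) t - 2 * P.br X n t + P.br X (n - 1) t)) t) :
    Summable (fun n : ℤ => ∫ t in (0:ℝ)..(4 * P.L),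
      (P.br X n t) ^ 2 + (deriv (P.br X n) t) ^ 2 + (deriv (deriv (P.br X n)) t) ^ 2) := by
  have h := R.good
  have hL := h.L_pos
  have hγ := h.γ_pos
  have hM := R.pot.M_pos
  obtain ⟨Q, hQ, hb⟩ := S.br_decay R hp0 hpP
  have e1 : ∀ n, deriv (P.br X n) = dx n := fun n => funext fun t => (hd n t).1.deriv
  have e2 : ∀ n t, |deriv (dx n) t| ≤ (P.M * Q + 6 * P.γ * Q) * (1 / 2) ^ n.natAbs := by
    intro n t
    rw [(hd n t).2.deriv]
    have b1 := hb n t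
    have b2 := (hb (n + 1) t).trans (mul_le_mul_of_nonneg_left (pow_shift n (n + 1) (by omega)) hQ)
    have b3 := (hb (n - 1) t).trans (mul_le_mul_of_nonneg_left (pow_shift n (n - 1) (by omega)) hQ)
    have b4 : |deriv V (P.br X n t)| ≤ P.M * (Q * (1 / 2) ^ n.natAbs) := by
      have := R.pot.lip (P.br X n t) 0
      rw [R.pot.d0, sub_zero, sub_zero] at this
      exact this.trans (by gcongr)
    have b5 : |P.br X (n + 1) t - 2 * P.br X n t + P.br X (n - 1) t|
        ≤ 6 * (Q * (1 / 2) ^ n.natAbs) := by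
      rw [abs_le] at *
      constructor <;> linarith [b1.1, b2.1, b3.1, b1.2, b2.2, b3.2]
    refine (abs_add_le _ _).trans ?_
    rw [abs_neg, abs_mul, abs_of_pos hγ]
    calc _ ≤ P.M * (Q * (1 / 2) ^ n.natAbs) + P.γ * (6 * (Q * (1 / 2) ^ n.natAbs)) := by gcongr
      _ = _ := by ring
  set Q2 := P.M * Q + 6 * P.γ * Q with hQ2
  have hQ20 : 0 ≤ Q2 := by positivity
  have e3 : ∀ n, ∀ t ∈ Set.Icc 0 (4 * P.L), |dx n t| ≤ Q2 * (4 * P.L) * (1 / 2) ^ n.natAbs := by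
    intro n t ht
    have d0 : dx n 0 = 0 := by
      have := deriv_even_odd (h.br_even X n) 0
      rw [e1, neg_zero] at this
      linarith
    have := mvt_Icc (fun s _ => (hd n s).2.differentiableAt.hasDerivAt) (fun s _ => e2 n s) ht
    rw [d0, sub_zero] at this
    refine this.trans ?_
    have := ht.2
    calc _ ≤ Q2 * (1 / 2) ^ n.natAbs * (4 * P.L) := by gcongr
      _ = _ := by ring
  refine Summable.of_norm_bounded (g := fun n : ℤ =>
    (Q ^ 2 + (Q2 * (4 * P.L)) ^ 2 + Q2 ^ 2) * (4 * P.L) * (1 / 4) ^ n.natAbs)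
    (summable_natAbs.mul_left _) fun n => ?_
  have := intervalIntegral.norm_integral_le_of_norm_le_const (a := 0) (b := 4 * P.L)
    (f := fun t => (P.br X n t) ^ 2 + (deriv (P.br X n) t) ^ 2 + (deriv (deriv (P.br X n)) t) ^ 2)
    (C := (Q ^ 2 + (Q2 * (4 * P.L)) ^ 2 + Q2 ^ 2) * (1 / 4) ^ n.natAbs) (fun t ht => by
      rw [Set.uIoc_of_le (by positivity)] at ht
      have t1 := hb n t
      have t2 := e3 n t ⟨ht.1.le, ht.2⟩
      have t3 := e2 n t
      rw [e1, Real.norm_eq_abs, abs_of_nonneg (by positivity)]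
      have q : (1 / 4 : ℝ) ^ n.natAbs = ((1 / 2) ^ n.natAbs) ^ 2 := by
        rw [← pow_mul, mul_comm, pow_mul]; norm_num
      rw [← sq_abs (P.br X n t), ← sq_abs (dx n t), ← sq_abs (deriv (dx n) t), q]
      calc _ ≤ (Q * (1 / 2) ^ n.natAbs) ^ 2 + (Q2 * (4 * P.L) * (1 / 2) ^ n.natAbs) ^ 2
            + (Q2 * (1 / 2) ^ n.natAbs) ^ 2 := by gcongr
        _ = _ := by ring)
  refine this.trans (le_of_eq ?_)
  rw [sub_zero, abs_of_pos (by positivity)]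
  ring

end Par

end

section

/-! ### Comparison with the decoupled orbit -/

/-- Uniqueness for the Cauchy problem of `y″ = -G(y)` with `G` Lipschitz. -/
lemma newton_unique {G y dy z dz : ℝ → ℝ} {M L : ℝ} (hM : 0 ≤ M)
    (hG : ∀ x x', |G x - G x'| ≤ M * |x - x'|)
    (y1 : ∀ s ∈ Set.Icc 0 L, HasDerivAt y (dy s) s)
    (y2 : ∀ s ∈ Set.Icc 0 L, HasDerivAt dy (-G (y s)) s)
    (z1 : ∀ s ∈ Set.Icc 0 L, HasDerivAt z (dz s) s)
    (z2 : ∀ s ∈ Set.Icc 0 L, HasDerivAt dz (-G (z s)) s)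
    (h0 : y 0 = z 0) (h1 : dy 0 = dz 0) {s : ℝ} (hs : s ∈ Set.Icc 0 L) : y s = z s := by
  have key := ODE_solution_unique (E := ℝ × ℝ) (v := fun _ q => (q.2, -G q.1))
    (K := ⟨M + 1, by linarith⟩) (a := 0) (b := L) (f := fun s => (y s, dy s))
    (g := fun s => (z s, dz s)) (fun _ => LipschitzWith.of_dist_le_mul fun q q' => by
      change _ ≤ (M + 1) * _
      rw [Prod.dist_eq, Prod.dist_eq, Real.dist_eq, Real.dist_eq, Real.dist_eq]
      have := hG q.1 q'.1
      have a1 := le_max_left |q.1 - q'.1| |q.2 - q'.2|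
      have a2 := le_max_right |q.1 - q'.1| |q.2 - q'.2|
      have a3 := abs_nonneg (q.1 - q'.1)
      rw [show -G q.1 - -G q'.1 = -(G q.1 - G q'.1) by ring, abs_neg]
      generalize max |q.1 - q'.1| |q.2 - q'.2| = m at *
      apply max_le
      · nlinarith
      · nlinarith)
    (fun s hs => ((y1 s hs).continuousAt.prodMk (y2 s hs).continuousAt).continuousWithinAt)
    (fun s hs => ((y1 s (Set.Ico_subset_Icc_self hs)).prodMk
      (y2 s (Set.Ico_subset_Icc_self hs))).hasDerivWithinAt)
    (fun s hs => ((z1 s hs).continuousAt.prodMk (z2 s hs).continuousAt).continuousWithinAt)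
    (fun s hs => ((z1 s (Set.Ico_subset_Icc_self hs)).prodMk
      (z2 s (Set.Ico_subset_Icc_self hs))).hasDerivWithinAt)
    (by simp [h0, h1]) hs
  exact congrArg Prod.fst key

namespace Par

/-- The same data with the coupling of the centre to its neighbours multiplied by `0`. -/
noncomputable def dec0 (P : Par) : Par := { P with j := 0 }

variable {P : Par} {V : ℝ → ℝ} {VL Vinf a0 μ lam CT c : ℝ}
variable {p p' P0 : ℝ} {X X' : ℕ → ℝ → ℝ}

lemma Good.dec0 (h : P.Good) : P.dec0.Good :=
  ⟨h.γ_pos, h.κ_pos, h.L_pos, by simp [Par.dec0], h.τ_nonneg, h.K_pos, h.K_ge, h.B_pos, h.c_pos,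
    h.c_le, h.cos_ge, h.M_nonneg, h.η_nonneg, h.g_lip, h.g_zero, h.N_lip, h.N_zero, h.c1, h.c2,
    h.c3⟩

lemma Reg.dec0 (R : P.Reg V VL Vinf a0 μ) : P.dec0.Reg V VL Vinf a0 μ :=
  ⟨R.good.dec0, R.pot, R.g_eq, R.μ_pos, R.μ_le, R.γ_eq, R.L_lo, R.L_hi, R.τL⟩

lemma Fine.dec0 (F : P.Fine a0 μ lam CT c P0) : P.dec0.Fine a0 μ lam CT c P0 :=
  ⟨F.c_pos, F.cτ, F.lamτ, F.CT_pos, F.Lasym, F.s1, F.s2, F.s3, F.s4, F.s5⟩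

/-- The central component depends weakly on the coupling and on the momentum at the node: the
contraction argument applies to the difference, with the neighbours as an `O(μ²)` perturbation. -/
lemma Sol.close (S : P.Sol p X) (S' : P.dec0.Sol p' X') (R : P.Reg V VL Vinf a0 μ)
    (hp0 : 0 ≤ p) (hpP : p ≤ P0) {s : ℝ} (hs : s ∈ Set.Icc 0 P.L) :
    |X 0 s - X' 0 s| ≤ P.w s * (2 * (|p - p'| + 8 * P.S3 a0 P0 * μ ^ 2)) := by
  have h := R.good
  have hL := h.L_pos
  have hγ := h.γ_pos
  have hμ := R.μ_pos
  have hg := h.g_cont; have hch := continuous_chi P.τ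
  have cX := S.cont 0; have cX1 := S.cont 1; have cX' := S'.cont 0
  have hw0 : ∀ s ∈ Set.Icc 0 P.L, 0 < P.w s := fun s hs => h.W_pos 0 hs.1
  have cw : Continuous P.w := P.W_cont 0
  have hS3 : 0 ≤ P.S3 a0 P0 * μ :=
    (abs_nonneg _).trans (S.GG_y R hp0 hpP (s := 0) ⟨le_rfl, h.L_pos.le⟩)
  obtain ⟨s1, hs1, hmax⟩ := isCompact_Icc.exists_isMaxOn (s := Set.Icc 0 P.L)
    ⟨0, le_rfl, hL.le⟩ (f := fun s => |X 0 s - X' 0 s| / P.w s)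
    (((cX.sub cX').abs.continuousOn).div cw.continuousOn fun s hs => (hw0 s hs).ne')
  set D := |X 0 s1 - X' 0 s1| / P.w s1 with hD
  have hD0 : 0 ≤ D := div_nonneg (abs_nonneg _) (hw0 _ hs1).le
  have hd : ∀ s ∈ Set.Icc 0 P.L, |X 0 s - X' 0 s| ≤ P.w s * D := fun s hs => by
    have : |X 0 s - X' 0 s| / P.w s ≤ D := hmax hs
    rwa [div_le_iff₀ (hw0 s hs), mul_comm] at this
  set A := |p - p'| + 8 * P.S3 a0 P0 * μ ^ 2 with hA
  have step : ∀ s ∈ Set.Icc 0 P.L, |X 0 s - X' 0 s| ≤ P.w s * (A + D / 4) := by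
    intro s hs
    have c1 : Continuous fun r => chi P.τ r * (P.g (X 0 (min r P.τ)) - P.g (X' 0 (min r P.τ))) := by
      fun_prop
    have c2 : Continuous fun r => 2 * P.γ * P.j * X 1 r := by fun_prop
    have e1 := S.eq 0 s hs
    have e2 := S'.eq 0 s hs
    change _ = p' * (sin (P.ω * s) / P.ω) + SS P.ω (P.dec0.src0 X') s at e2
    change _ = p * (sin (P.ω * s) / P.ω) + SS P.ω (P.src0 X) s at e1
    have e3 : X 0 s - X' 0 s = (p - p') * (sin (P.ω * s) / P.ω)
        + (SS P.ω (fun r => 2 * P.γ * P.j * X 1 r) s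
        - SS P.ω (fun r => chi P.τ r * (P.g (X 0 (min r P.τ)) - P.g (X' 0 (min r P.τ)))) s) := by
      rw [SS_sub c2 c1]
      have : SS P.ω (P.src0 X) s - SS P.ω (P.dec0.src0 X') s = _ :=
        SS_sub (h.src0_cont S.cont) (h.dec0.src0_cont S'.cont) s
      rw [e1, e2, add_sub_add_comm, this, ← sub_mul]
      congr 2
      funext r
      simp only [src0, Par.dec0]
      ring
    have b1 : |(p - p') * (sin (P.ω * s) / P.ω)| ≤ P.w s * |p - p'| := by
      rw [abs_mul, mul_comm]
      have := abs_sin_mul_div_le h.ω_pos hs.1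
      have := h.w_ge hs.1
      gcongr
      linarith
    have b2 : |SS P.ω (fun r => 2 * P.γ * P.j * X 1 r) s| ≤ P.w s * (8 * P.S3 a0 P0 * μ ^ 2) := by
      refine (abs_SS_le h.ω_pos c2 hs.1).trans ?_
      have i1 : ∫ r in (0:ℝ)..s, |2 * P.γ * P.j * X 1 r|
          ≤ s * (2 * P.γ * 1 * (4 * P.S3 a0 P0 * μ * (1 / 2) ^ (0 + 1))) := by
        refine int_abs_le_const hs.1 fun r hr => ?_
        have := S.tail R hp0 hpP 0 (s := r) ⟨hr.1, hr.2.trans hs.2⟩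
        have := h.j_le
        rw [abs_mul, abs_mul (2 * P.γ) P.j, abs_of_pos (by positivity : 0 < 2 * P.γ)]
        gcongr
      have hw := h.w_ge hs.1
      have i2 : s * (2 * P.γ * 1 * (4 * P.S3 a0 P0 * μ * (1 / 2) ^ (0 + 1)))
          ≤ 8 * P.S3 a0 P0 * μ ^ 2 := by
        have := R.γL
        have := hs.2
        calc _ = 4 * (P.S3 a0 P0 * μ) * (P.γ * s) := by ring
          _ ≤ 4 * (P.S3 a0 P0 * μ) * (P.γ * P.L) := by gcongr
          _ ≤ 4 * (P.S3 a0 P0 * μ) * (2 * μ) := by gcongr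
          _ = _ := by ring
      have i3 : 0 ≤ 8 * P.S3 a0 P0 * μ ^ 2 := by
        calc 0 ≤ 8 * (P.S3 a0 P0 * μ) * μ := by positivity
          _ = _ := by ring
      have := hs.1
      calc _ ≤ s * (8 * P.S3 a0 P0 * μ ^ 2) := by gcongr; exact i1.trans i2
        _ ≤ _ := by gcongr; linarith
    have b3 := h.center_est cX cX' hD0 hd hs
    rw [e3]
    refine (abs_add_le _ _).trans ?_
    have := abs_sub (SS P.ω (fun r => 2 * P.γ * P.j * X 1 r) s)
      (SS P.ω (fun r => chi P.τ r * (P.g (X 0 (min r P.τ)) - P.g (X' 0 (min r P.τ)))) s)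
    calc _ ≤ P.w s * |p - p'| + (P.w s * (8 * P.S3 a0 P0 * μ ^ 2) + P.w s * (D / 4)) := by linarith
      _ = _ := by rw [hA]; ring
  have hDA : D ≤ A + D / 4 := by
    rw [hD, div_le_iff₀ (hw0 _ hs1), ← hD, mul_comm]
    exact step s1 hs1
  have hA0 : D ≤ 2 * A := by linarith
  refine (hd s hs).trans ?_
  have := hw0 s hs
  gcongr

/-- The unperturbed periodic orbit, read backwards from its node, is the central component of the
decoupled problem with node momentum `√(2E)`. -/
lemma Sol.identify {E : ℝ} (S : P.dec0.Sol (√(2 * E)) X') (R : P.Reg V VL Vinf a0 μ)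
    (F : P.Fine a0 μ lam CT c P0) (hE : VL + c ^ 2 ≤ E) (hP0 : √(2 * E) ≤ P0)
    {xc : ℝ → ℝ} (hxc : SolAtEnergy V Vinf P.γ E (4 * P.L) xc) {s : ℝ} (hs : s ∈ Set.Icc 0 P.L) :
    xc (P.L - s) = X' 0 s := by
  have h := R.good.dec0
  have R' := R.dec0
  have hL : 0 < P.L := h.L_pos
  have hγ : 0 < P.γ := h.γ_pos
  have hM := R.pot.M_pos
  have hcp := F.c_pos
  have hV0 : 0 ≤ VL := (R.pot.nonneg 0).trans (R.pot.le 0)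
  have hVi := R.pot.Vinf_le
  have hE0 : 0 < E := by nlinarith
  have hsq : √(2 * E) ^ 2 = 2 * E := sq_sqrt (by linarith)
  have hout : ∀ s, P.τ ≤ s → s ≤ P.L → a0 ≤ P.dec0.yy (√(2 * E)) X' s := fun s h1 h2 =>
    S.outer R' F.dec0 (by rw [hsq]; linarith) (by positivity) hP0 h1 h2
  obtain ⟨hC, -, -, hev, hodd, hx0, -, hode, hen⟩ := hxc
  have hd1 : ∀ t, HasDerivAt xc (deriv xc t) t := fun t =>
    (hC.differentiable (by norm_num) t).hasDerivAt
  have hd2 : ∀ t, HasDerivAt (deriv xc) (deriv (deriv xc) t) t := fun t => by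
    have : ContDiff ℝ 1 (deriv xc) := by
      have : ContDiff ℝ (1 + 1) xc := by norm_num; exact hC
      exact (contDiff_succ_iff_deriv.1 this).2.2
    exact (this.differentiable (by norm_num) t).hasDerivAt
  have hxL : xc P.L = 0 := by
    have := hodd P.L
    rw [show 4 * P.L / 2 - P.L = P.L by ring] at this
    linarith
  have hvL : deriv xc P.L ^ 2 = √(2 * E) ^ 2 := by
    have := hen P.L
    rw [hxL, R.pot.V0] at this
    rw [hsq]; linarith
  obtain ⟨σ, hσ, hσv⟩ : ∃ σ : ℝ, (σ = 1 ∨ σ = -1) ∧ -(σ * deriv xc P.L) = √(2 * E) := by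
    rcases sq_eq_sq_iff_eq_or_eq_neg.1 hvL with h | h
    · exact ⟨-1, Or.inr rfl, by rw [h]; ring⟩
    · exact ⟨1, Or.inl rfl, by rw [h]; ring⟩
  have hσG : ∀ x, σ * deriv V x = deriv V (σ * x) := fun x => by
    rcases hσ with rfl | rfl
    · simp
    · rw [neg_one_mul, neg_one_mul, R.pot.odd]
  have hlin : ∀ s, HasDerivAt (fun s => P.L - s) (-1) s := fun s =>
    (hasDerivAt_id s).const_sub P.L
  have key : ∀ s ∈ Set.Icc 0 P.L, P.dec0.yy (√(2 * E)) X' s = σ * xc (P.L - s) := by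
    intro s hs
    refine newton_unique (G := fun x => deriv V x + 2 * P.γ * x) (M := P.M + 2 * P.γ)
      (dy := P.dec0.dyy (√(2 * E)) X') (dz := fun s => -(σ * deriv xc (P.L - s)))
      (z := fun s => σ * xc (P.L - s)) (L := P.L)
      (by positivity) (fun x x' => ?_) (fun s _ => h.yy_deriv _ S.cont s) (fun s hs => ?_)
      (fun s _ => ?_) (fun s _ => ?_) ?_ ?_ hs
    · rw [show deriv V x + 2 * P.γ * x - (deriv V x' + 2 * P.γ * x')
        = (deriv V x - deriv V x') + 2 * P.γ * (x - x') by ring]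
      refine (abs_add_le _ _).trans ?_
      rw [abs_mul (2 * P.γ), abs_of_pos (by positivity : 0 < 2 * P.γ)]
      linarith [R.pot.lip x x']
    · refine (h.dyy_deriv _ S.cont s).congr_deriv ?_
      rw [S.src0_eq R' hout hs, h.ω_sq, S.X0 hs]
      simp only [Par.dec0]
      ring
    · exact (((hd1 (P.L - s)).comp s (hlin s)).const_mul σ).congr_deriv (by ring)
    · refine (((hd2 (P.L - s)).comp s (hlin s)).const_mul σ).neg.congr_deriv ?_
      rw [← hσG]
      linear_combination σ * hode (P.L - s)
    · rw [yy_zero]; simp [hxL]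
    · rw [dyy_zero]; simp only [sub_zero]; rw [hσv]
  have hσ1 : σ = 1 := by
    rcases hσ with rfl | rfl
    · rfl
    · exfalso
      have h1 := hout P.L (by linarith [R.τL]) le_rfl
      rw [key P.L ⟨hL.le, le_rfl⟩, sub_self, hx0] at h1
      have h2 : 0 ≤ √(E - Vinf) / √P.γ := by positivity
      have := R.pot.a0_pos
      linarith
  rw [S.X0 hs, key s hs, hσ1, one_mul]

/-- Distance of the central component of the breather to the unperturbed orbit, at all times by
reflection. -/
lemma Sol.br_close {E : ℝ} (S : P.Sol p X) (S' : P.dec0.Sol (√(2 * E)) X') (R : P.Reg V VL Vinf a0 μ)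
    (F : P.Fine a0 μ lam CT c P0) (hp0 : 0 ≤ p) (hpP : p ≤ P0)
    (hE : VL + c ^ 2 ≤ E) (hP0 : √(2 * E) ≤ P0)
    {xc : ℝ → ℝ} (hxc : SolAtEnergy V Vinf P.γ E (4 * P.L) xc) (t : ℝ) :
    |P.br X 0 t - xc t| ≤ (1 + P.L) * exp (P.K * (P.τ + 1))
      * (2 * (|p - √(2 * E)| + 8 * P.S3 a0 P0 * μ ^ 2)) := by
  have h := R.good
  have hL := h.L_pos
  have hid : ∀ s ∈ Set.Icc 0 P.L, xc (P.L - s) = X' 0 s := fun s hs =>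
    S'.identify R F hE hP0 hxc hs
  have hx0 : xc P.L = 0 := by
    have := hid 0 ⟨le_rfl, hL.le⟩
    rwa [sub_zero, S'.zero h.dec0] at this
  obtain ⟨-, -, -, hev, hodd, -⟩ := hxc
  have hsym := sym_tri hL (Y := fun s => xc (P.L - s)) (fun s => by
    rw [hodd]; congr 2; ring) (fun s => by
    rw [← hev]; congr 1; ring) (P.L - t)
  have e : xc t = oddExt P.L (fun s => xc (P.L - s)) (P.L - t) := by
    have e0 : xc t = xc (P.L - (P.L - t)) := by congr 1; ring
    rw [e0, ← hsym]
    unfold oddExt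
    rcases le_total (tri P.L (P.L - t)) 0 with h | h
    · rw [max_eq_right h, max_eq_left (by linarith)]
      beta_reduce
      rw [sub_zero, hx0, zero_sub, hodd]
      congr 2; ring
    · rw [max_eq_left h, max_eq_right (a := -tri P.L (P.L - t)) (by linarith)]
      beta_reduce
      rw [sub_zero, hx0, sub_zero]
  have e2 : P.br X 0 t - xc t = oddExt P.L (fun s => X 0 s - xc (P.L - s)) (P.L - t) := by
    rw [e]; unfold br oddExt; simp only [Int.natAbs_zero]; ring
  rw [e2]
  refine oddExt_bound hL (by simp [S.zero h, hx0]) (fun s hs => ?_) _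
  rw [hid s hs]
  refine (S.close S' R hp0 hpP hs).trans ?_
  have hS3 : 0 ≤ P.S3 a0 P0 * μ :=
    (abs_nonneg _).trans (S.GG_y R hp0 hpP (s := 0) ⟨le_rfl, h.L_pos.le⟩)
  have hμ := R.μ_pos
  have : 0 ≤ 8 * P.S3 a0 P0 * μ ^ 2 := by
    calc 0 ≤ 8 * (P.S3 a0 P0 * μ) * μ := by positivity
      _ = _ := by ring
  have := h.w_le hs
  gcongr

end Par

end

section

/-! ### The breather for given smallness conditions -/

namespace Par
variable {P : Par} {V : ℝ → ℝ} {VL Vinf a0 μ lam CT c P0 : ℝ}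

lemma S3_nonneg (hK : 0 < P.K) (hM : 0 < P.M) (ha : 0 < a0) (hB : 0 < P.B) (hc : 0 < P.c)
    (hκ : 0 < P.κ) (hP0 : 0 ≤ P0) : 0 ≤ P.S3 a0 P0 := by
  unfold S3 S2 S1; positivity

lemma abs_sqrt_sub_le {a b : ℝ} (ha : 0 ≤ a) (hb : 0 < b) : |√a - √b| ≤ |a - b| / √b := by
  have h : 0 < √b := sqrt_pos.2 hb
  have h' := sqrt_nonneg a
  rw [le_div_iff₀ h, show a - b = (√a - √b) * (√a + √b) by
    rw [mul_comm, ← sq_sub_sq, sq_sqrt ha, sq_sqrt hb.le], abs_mul, abs_of_pos (by positivity :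
      0 < √a + √b)]
  gcongr
  linarith

/-- Existence of the breather, and its bounds, from shooting in an energy window of half-width
`δ` around `E`. -/
lemma Reg.breather (R : P.Reg V VL Vinf a0 μ) (F : P.Fine a0 μ lam CT c P0) (hj : P.j = 1)
    (hN : ∀ x, |x| ≤ 4 * P.S3 a0 P0 * μ → P.N x = deriv V x - P.κ ^ 2 * x) {E d δ σ : ℝ}
    (hδ : 0 < δ) (hσ : |σ| = 1)
    (hd : 0 < d) (hEδ : VL + c ^ 2 ≤ E - δ) (hP0 : √(2 * (E + δ)) ≤ P0)
    (h1 : d * δ ≤ σ * (delay V Vinf a0 (√(2 * (E + δ))) - lam / 4))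
    (h2 : σ * (delay V Vinf a0 (√(2 * (E - δ))) - lam / 4) ≤ -(d * δ))
    (hC : P.C4 a0 CT c P0 * μ ≤ c * (d * δ)) {xc : ℝ → ℝ}
    (hxc : SolAtEnergy V Vinf P.γ E (4 * P.L) xc) :
    ∃ x : ℤ → ℝ → ℝ,
      (∀ n, Differentiable ℝ (x n)) ∧ (∀ n, Differentiable ℝ (deriv (x n))) ∧
      (∀ n, Function.Periodic (x n) (4 * P.L)) ∧
      Summable (fun n : ℤ => ∫ t in (0:ℝ)..(4 * P.L),
        (x n t) ^ 2 + (deriv (x n) t) ^ 2 + (deriv (deriv (x n)) t) ^ 2) ∧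
      (∀ n : ℤ, ∀ t : ℝ, deriv (deriv (x n)) t + deriv V (x n t)
        = P.γ * (x (n + 1) t - 2 * x n t + x (n - 1) t)) ∧
      (∀ n : ℤ, ∀ t : ℝ, x n t = x (-n) t) ∧
      (∀ n : ℤ, ∀ t : ℝ, x n (-t) = x n t) ∧
      (∀ n : ℤ, ∀ t : ℝ, x n t = - x n (4 * P.L / 2 - t)) ∧
      (∀ t, |x 0 t - xc t| ≤ (1 + P.L) * exp (P.K * (P.τ + 1))
        * (2 * (2 * δ / √(2 * E) + 8 * P.S3 a0 P0 * μ ^ 2))) ∧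
      (∀ n : ℤ, 1 ≤ n → ∀ t, |x n t| ≤ 4 * P.S3 a0 P0 * μ) := by
  have h := R.good
  have hL := h.L_pos
  have hV0 : 0 ≤ VL := (R.pot.nonneg 0).trans (R.pot.le 0)
  have hcp := F.c_pos
  obtain ⟨X, hc, hX, hb, hl⟩ := h.exists_family
  obtain ⟨X', hc', hX', hb', -⟩ := h.dec0.exists_family
  obtain ⟨e, he, hbc⟩ := R.shoot F hδ hσ hd hEδ hP0 h1 h2 hC hc hX hb hl
  have he0 : 0 < e := by nlinarith [he.1]
  have hE0 : 0 < E := by nlinarith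
  have hsq : √(2 * e) ^ 2 = 2 * e := sq_sqrt (by linarith)
  set p := √(2 * e) with hp
  have hp0 : 0 < p := by positivity
  have hpP : p ≤ P0 := (sqrt_le_sqrt (by linarith [he.2])).trans hP0
  have hEP : √(2 * E) ≤ P0 := (sqrt_le_sqrt (by linarith)).trans hP0
  have S : P.Sol p (X p) := ⟨hc _, hX _, hb _⟩
  have S' : P.dec0.Sol (√(2 * E)) (X' (√(2 * E))) := ⟨hc' _, hX' _, hb' _⟩
  have hμ := R.μ_pos
  have hM := R.pot.M_pos
  have hS3 : 0 ≤ P.S3 a0 P0 := S3_nonneg h.K_pos R.pot.M_pos R.pot.a0_pos h.B_pos h.c_pos h.κ_pos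
    (hp0.le.trans hpP)
  have hout : ∀ s, P.τ ≤ s → s ≤ P.L → a0 ≤ P.yy p (X p) s := fun s a b =>
    S.outer R F (by rw [hsq]; linarith [he.1]) hp0 hpP a b
  have htail : ∀ n, ∀ s ∈ Set.Icc 0 P.L, |X p (n + 1) s| ≤ 4 * P.S3 a0 P0 * μ := fun n s hs => by
    refine (S.tail R hp0.le hpP n hs).trans ?_
    have : (1 / 2 : ℝ) ^ (n + 1) ≤ 1 := pow_le_one₀ (by norm_num) (by norm_num)
    exact mul_le_of_le_one_right (by positivity) this
  have hode := fun n => S.br_ode R hj hout hbc (fun n s hs => hN _ (htail n s hs)) n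
  choose dx hdx using hode
  have e1 : ∀ n, deriv (P.br (X p) n) = dx n := fun n => funext fun t => (hdx n t).1.deriv
  refine ⟨P.br (X p), fun n t => (hdx n t).1.differentiableAt, fun n t => ?_, h.br_periodic _,
    S.br_summable R hp0.le hpP hdx, fun n t => ?_, fun n t => ?_, h.br_even _, fun n t => ?_,
    fun t => ?_, fun n hn t => ?_⟩
  · rw [e1]; exact (hdx n t).2.differentiableAt
  · rw [e1, (hdx n t).2.deriv]; ring
  · unfold br; rw [Int.natAbs_neg]
  · rw [show 4 * P.L / 2 = 2 * P.L by ring]; exact br_odd _ n t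
  · refine (S.br_close S' R F hp0.le hpP (by linarith) hEP hxc t).trans ?_
    have hpE : |p - √(2 * E)| ≤ 2 * δ / √(2 * E) := by
      refine (abs_sqrt_sub_le (by linarith) (by linarith)).trans ?_
      gcongr
      rw [abs_le]; constructor <;> linarith [he.1, he.2]
    gcongr
  · obtain ⟨m, hm⟩ : ∃ m : ℕ, n.natAbs = m + 1 := ⟨n.natAbs - 1, by omega⟩
    unfold br; rw [hm]
    exact oddExt_bound hL (S.zero h _) (htail m) _

end Par

end

section

/-! ### Choice of the data -/
open Filter Topology

/-- A strict inequality at `0` for a continuous function persists to the right of `0`. -/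
lemma ev_le {f : ℝ → ℝ} (hf : Continuous f) {b : ℝ} (h : f 0 < b) :
    ∀ᶠ μ in 𝓝[>] (0:ℝ), f μ ≤ b :=
  ((hf.tendsto 0).eventually (gt_mem_nhds h)).filter_mono nhdsWithin_le_nhds |>.mono
    fun _ hx => (show _ < _ from hx).le

/-- Truncation of the real line to `[-ρ, ρ]`. -/
noncomputable def clampR (ρ x : ℝ) : ℝ := max (-ρ) (min ρ x)

lemma clampR_mem {ρ : ℝ} (h : 0 ≤ ρ) (x : ℝ) : clampR ρ x ∈ Set.Icc (-ρ) ρ :=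
  ⟨le_max_left _ _, max_le (by linarith) (min_le_left _ _)⟩

lemma clampR_lip (ρ x y : ℝ) : |clampR ρ x - clampR ρ y| ≤ |x - y| := by
  unfold clampR
  rw [max_comm (-ρ), max_comm (-ρ), min_comm ρ, min_comm ρ]
  exact (abs_max_sub_max_le_abs _ _ _).trans (abs_inf_sub_inf_le_abs _ _ _)

lemma clampR_eq {ρ x : ℝ} (h : |x| ≤ ρ) : clampR ρ x = x := by
  unfold clampR
  rw [min_eq_right (abs_le.1 h).2, max_eq_right (abs_le.1 h).1]

/-- The data of the truncated problem at coupling `γ = μ²` and quarter period `L`. The remainder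
`V′ - κ²` of the site force is frozen outside `[-ρ, ρ]`. -/
noncomputable def parOf (V : ℝ → ℝ) (κ τ K B cc M η ρ μ L : ℝ) : Par where
  γ := μ ^ 2
  κ := κ
  L := L
  j := 1
  τ := τ
  K := K
  B := B
  c := cc
  M := M
  η := η
  g := deriv V
  N := fun x => deriv V (clampR ρ x) - κ ^ 2 * clampR ρ x

/-- With `B` large and `η`, `μ` small in terms of the fixed constants, the contraction conditions
hold. -/
lemma parOf_good {V : ℝ → ℝ} {VL Vinf a0 κ τ K B cc M η ρ μ L : ℝ}
    (H : Pot V VL Vinf a0 κ M) (hκ : 0 < κ) (hτ : 0 ≤ τ) (hK : K = 4 * (M * (2 + τ)))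
    (hcc : 0 < cc) (hcc1 : cc ≤ 1) (hcos : cc ≤ |cos (κ * L)|)
    (hB : B = 48 * (2 / (cc * κ)) * exp (K * (τ + 1))) (hρ : 0 ≤ ρ)
    (hη : η = μ / (16 * (2 / (cc * κ))))
    (hnear : ∀ x ∈ Set.Icc (-ρ) ρ, ∀ y ∈ Set.Icc (-ρ) ρ,
      |(deriv V x - κ ^ 2 * x) - (deriv V y - κ ^ 2 * y)| ≤ η * |x - y|)
    (hμ : 0 < μ) (hμ1 : μ ≤ 1) (hL1 : 1 ≤ μ * L) (hL2 : μ * L ≤ 2)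
    (s1 : 2 * B * μ ≤ 1 / 4) (s2 : 10 * (2 / (cc * κ)) * μ ≤ 1 / 8) :
    (parOf V κ τ K B cc M η ρ μ L).Good := by
  have hM := H.M_pos
  have hL : 0 < L := by
    by_contra hn
    nlinarith
  have hK0 : 0 < K := by rw [hK]; positivity
  have hg : 0 < 2 / (cc * κ) := by positivity
  have hB0 : 0 < B := by rw [hB]; positivity
  have hη0 : 0 ≤ η := by rw [hη]; positivity
  refine ⟨by simp only [parOf]; positivity, hκ, hL, by simp [parOf], hτ, hK0, hK.ge, hB0, hcc, hcc1,
    hcos, hM.le, hη0, H.lip, H.d0, fun x y => ?_, ?_, ?_, ?_, ?_⟩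
  · refine (hnear _ (clampR_mem hρ x) _ (clampR_mem hρ y)).trans ?_
    exact mul_le_mul_of_nonneg_left (clampR_lip ρ x y) hη0
  · simp only [parOf]
    rw [clampR_eq (by simpa using hρ), H.d0]; simp
  · simp only [parOf]
    calc μ ^ 2 * B * L = B * μ * (μ * L) := by ring
      _ ≤ B * μ * 2 := by gcongr
      _ ≤ 1 / 4 := by linarith
  · simp only [parOf]
    set G := 2 / (cc * κ)
    have e : G * L * (5 * μ ^ 2 + η) = (μ * L) * (5 * G * μ + 1 / 16) := by
      rw [hη]; field_simp
    rw [e]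
    calc _ ≤ 2 * (5 * G * μ + 1 / 16) := by gcongr
      _ ≤ 1 / 4 := by linarith
  · simp only [parOf]
    set G := 2 / (cc * κ)
    set e := exp (K * (τ + 1))
    have he : 0 < e := exp_pos _
    calc G * L * (μ ^ 2 * ((1 + L) * e)) = G * e * ((μ * L) * (μ + μ * L)) := by ring
      _ ≤ G * e * (2 * (1 + 2)) := by gcongr
      _ = B / 8 := by rw [hB]; ring

end

set_option maxHeartbeats 1000000 in
/-- main theorem: existence of large-amplitude breathers of the discrete
Klein--Gordon equation for all sufficiently small `γ` in the non-resonant set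
`C̃_{E,ν} = ∪_{m ≥ m₀}(Γ̃_m, γ̃_m)`. -/
theorem stmt11
    (V : ℝ → ℝ) (VL Vinf a0 κ x₀ : ℝ)
    -- (P1)
    (hV : ContDiff ℝ 2 V) (hVeven : ∀ x, V (-x) = V x)
    -- (P2)
    (hx₀ : 0 < x₀) (hV7 : ContDiffOn ℝ 7 V (Set.Ioo (-x₀) x₀)) (hκ : 0 < κ)
    (htaylor : ∃ K > (0:ℝ), ∃ r > (0:ℝ), ∀ x : ℝ, |x| ≤ r →
      |V x - κ ^ 2 * x ^ 2 / 2| ≤ K * x ^ 6)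
    -- (P3)
    (hVnonneg : ∀ x, 0 ≤ V x) (hVle : ∀ x, V x ≤ VL) (hVL : 0 < VL)
    -- (P4)
    (ha0 : 0 < a0) (hVinf : 0 < Vinf) (hVinfL : Vinf ≤ VL)
    (hVconst : ∀ x : ℝ, a0 ≤ |x| → V x = Vinf)
    -- fixed energy and the non-degeneracy condition λ'(E) ≠ 0
    (E ν : ℝ) (hE : VL < E) (hν : ν ∈ Set.Ioo (0:ℝ) 1)
    (hnondeg : (∫ s in (0:ℝ)..a0, (E - V s) ^ (-(3:ℝ)/2))
        - a0 * (E - Vinf) ^ (-(3:ℝ)/2) ≠ 0)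
    -- the period function T(E,·), with its expansion, and ω₀(E,·)
    (lam : ℝ)
    (hlam : lam = 2 * Real.sqrt 2 * ((∫ s in (0:ℝ)..a0, 1 / Real.sqrt (E - V s))
      - a0 / Real.sqrt (E - Vinf)))
    (T ω₀ : ℝ → ℝ) (hTpos : ∀ γ : ℝ, 0 < γ → 0 < T γ)
    (hT : ∃ C > (0:ℝ), ∃ γ' > (0:ℝ), ∀ γ ∈ Set.Ioo (0:ℝ) γ',
      |T γ - (Real.sqrt 2 * π / Real.sqrt γ + lam)| ≤ C * γ)
    (hω₀ : ∀ γ : ℝ, 0 < γ → ω₀ γ = 2 * π / (Real.sqrt γ * T γ))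
    -- the non-resonant set C̃_{E,ν}
    (Γt γt : ℕ → ℝ) (m₀ : ℕ)
    (hpos : ∀ m ≥ m₀, 0 < Γt m ∧ 0 < γt m)
    (hsmall : Filter.Tendsto Γt Filter.atTop (nhds 0) ∧
      Filter.Tendsto γt Filter.atTop (nhds 0))
    (hΓeq : ∀ m ≥ m₀, Real.sqrt (κ ^ 2 + 4 * Γt m)
      / Real.sqrt (((m : ℝ) + 1) ^ 2 - ν * ((m : ℝ) + 1))
      = Real.sqrt (Γt m) * ω₀ (Γt m))
    (hγeq : ∀ m ≥ m₀, κ / Real.sqrt ((m : ℝ) ^ 2 + ν * (m : ℝ))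
      = Real.sqrt (γt m) * ω₀ (γt m)) :
    ∃ γ₀ > (0:ℝ), ∃ C > (0:ℝ),
      ∀ m : ℕ, m₀ ≤ m → ∀ γ ∈ Set.Ioo (Γt m) (γt m), γ < γ₀ →
        ∀ xc : ℝ → ℝ, SolAtEnergy V Vinf γ E (T γ) xc →
          ∃ x : ℤ → ℝ → ℝ,
            -- x ∈ H²_per((0,T); l²(ℤ)) : regularity, periodicity, square-summability
            (∀ n, Differentiable ℝ (x n)) ∧ (∀ n, Differentiable ℝ (deriv (x n))) ∧
            (∀ n, Function.Periodic (x n) (T γ)) ∧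
            Summable (fun n : ℤ => ∫ t in (0:ℝ)..(T γ),
              (x n t) ^ 2 + (deriv (x n) t) ^ 2 + (deriv (deriv (x n)) t) ^ 2) ∧
            -- the discrete Klein--Gordon equation
            (∀ n : ℤ, ∀ t : ℝ, deriv (deriv (x n)) t + deriv V (x n t)
              = γ * (x (n + 1) t - 2 * x n t + x (n - 1) t)) ∧
            -- symmetries
            (∀ n : ℤ, ∀ t : ℝ, x n t = x (-n) t) ∧
            (∀ n : ℤ, ∀ t : ℝ, x n (-t) = x n t) ∧
            (∀ n : ℤ, ∀ t : ℝ, x n t = - x n (T γ / 2 - t)) ∧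
            -- closeness to the central oscillation and smallness at the other sites
            (∀ t ∈ Set.Icc (0:ℝ) (T γ), |x 0 t - xc t| ≤ C * γ ^ (-(1:ℝ)/4)) ∧
            (∀ n : ℤ, 1 ≤ n → ∀ t ∈ Set.Icc (0:ℝ) (T γ),
              |x n t| ≤ C * γ ^ ((1:ℝ)/4)) := by
  obtain ⟨M, H⟩ := exists_pot hV hVeven hx₀ hV7 htaylor hVnonneg hVle ha0 hVconst
  obtain ⟨γr, hγr, cc, hcc, hcc1, hres⟩ := nonresonance hκ hν T ω₀ hTpos hT hω₀ Γt γt m₀ hpos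
    hsmall hΓeq hγeq
  obtain ⟨d, hd, δ0, hδ0, σ, hσ, hdelay⟩ := delay_sign H hE hnondeg hlam
  obtain ⟨CT, hCT, γ', hγ', hT⟩ := hT
  have hM := H.M_pos
  have hE0 : 0 < E := hVL.trans hE
  -- the centre crosses the well with speed at least `c`, for all energies in the window around `E`
  obtain ⟨c, hc, hc2⟩ : ∃ c > 0, c ^ 2 = (E - VL) / 2 :=
    ⟨√((E - VL) / 2), sqrt_pos.2 (by linarith), sq_sqrt (by linarith)⟩
  set P0 := √(4 * E) with hP0
  set τ := max ((a0 + 1) / c) (|lam| / 4 + 1) with hτ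
  have hτ1 : a0 + 1 ≤ c * τ := by
    have := le_max_left ((a0 + 1) / c) (|lam| / 4 + 1)
    rwa [div_le_iff₀' hc] at this
  have hτ2 : |lam| / 4 + 1 ≤ τ := le_max_right _ _
  have hτ0 : 0 < τ := by have := abs_nonneg lam; linarith
  set K := 4 * (M * (2 + τ)) with hK
  set G := 2 / (cc * κ) with hG
  have hG0 : 0 < G := by positivity
  set B := 48 * G * exp (K * (τ + 1)) with hB
  -- the derived constants do not involve `γ`, so they can be read off at any reference value
  set Q := parOf V κ τ K B cc M 0 0 0 0 with hQ
  have hS3 : 0 ≤ Q.S3 a0 P0 := Par.S3_nonneg (P := Q) (by simp only [hQ, parOf]; positivity) hM ha0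
    (by simp only [hQ, parOf]; positivity) hcc hκ (sqrt_nonneg _)
  set S3 := Q.S3 a0 P0 with hS3d
  set A := 4 * S3 + 1 with hA
  have hA0 : 0 < A := by positivity
  -- the neighbours live in `[-A μ, A μ]`, where the remainder `V′ - κ²` must have Lipschitz constant
  -- `μ / (16 G)`
  obtain ⟨r, hr, hnear⟩ := H.near (1 / (16 * G * A)) (by positivity)
  have hsE : 0 < √(2 * E) := sqrt_pos.2 (by linarith)
  have ev : ∀ᶠ μ in nhdsWithin (0:ℝ) (Set.Ioi 0), μ ≤ 1 ∧ 2 * B * μ ≤ 1 / 4 ∧ 10 * G * μ ≤ 1 / 8 ∧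
      |lam| * μ + CT * μ ^ 3 ≤ 3 / 10 ∧ (τ + 1) * μ ≤ 1 ∧
      K1 M a0 P0 (Q.Hc P0) τ * μ ^ 2 ≤ c ^ 2 ∧ CT * μ ^ 2 ≤ 4 ∧ (a0 + 1) * (2 * μ) ≤ c ∧
      8 * S3 * μ ≤ 1 ∧ 4 * τ * μ ≤ 1 ∧ A * μ ≤ r ∧ √μ ≤ δ0 / 2 ∧ √μ ≤ (E - VL) / 2 ∧
      Q.C4 a0 CT c P0 * √μ ≤ c * d ∧ μ ^ 2 ≤ γ' / 2 := by
    have hc2' : 0 < c ^ 2 := by positivity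
    have hcd : 0 < c * d := by positivity
    refine Filter.Eventually.and ?_ <| .and ?_ <| .and ?_ <| .and ?_ <| .and ?_ <| .and ?_ <|
      .and ?_ <| .and ?_ <| .and ?_ <| .and ?_ <| .and ?_ <| .and ?_ <| .and ?_ <| .and ?_ ?_
    all_goals
      refine ev_le (by fun_prop) ?_
      simp
      try linarith
  obtain ⟨ε, hε, hev⟩ := mem_nhdsGT_iff_exists_Ioo_subset.1 ev
  have hε : 0 < ε := hε
  refine ⟨min γr (ε ^ 2), lt_min hγr (by positivity),
    6 * exp (K * (τ + 1)) * (2 / √(2 * E) + 8 * S3) + 4 * S3 + 1, by positivity,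
    fun m hm γ hγ hγ0 xc hxc => ?_⟩
  have hγp : 0 < γ := (hpos m hm).1.trans hγ.1
  have hcos := hres m hm γ hγ (hγ0.trans_le (min_le_left _ _))
  obtain ⟨μ, hμ, rfl⟩ : ∃ μ, 0 < μ ∧ γ = μ ^ 2 := ⟨√γ, sqrt_pos.2 hγp, (sq_sqrt hγp.le).symm⟩
  have hμε : μ < ε := lt_of_pow_lt_pow_left₀ 2 hε.le (hγ0.trans_le (min_le_right _ _))
  obtain ⟨e1, e2, e3, e4, e5, e6, e7, e8, e9, e10, e11, e12, e13, e14, e15⟩ := hev ⟨hμ, hμε⟩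
  have hTμ := hT (μ ^ 2) ⟨hγp, by linarith⟩
  rw [sqrt_sq hμ.le] at hTμ
  set L := T (μ ^ 2) / 4 with hL
  have hT4 : T (μ ^ 2) = 4 * L := by rw [hL]; ring
  rw [hT4] at hTμ hxc ⊢
  have hμL : |4 * (μ * L) - √2 * π| ≤ 3 / 10 := by
    have hl : |lam * μ| = |lam| * μ := by rw [abs_mul, abs_of_pos hμ]
    have h1 : |(4 * L - (√2 * π / μ + lam)) * μ| ≤ CT * μ ^ 2 * μ := by
      rw [abs_mul, abs_of_pos hμ]; gcongr
    have e : 4 * (μ * L) - √2 * π = (4 * L - (√2 * π / μ + lam)) * μ + lam * μ := by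
      field_simp; ring
    rw [e]
    refine (abs_add_le _ _).trans ?_
    rw [hl]; linarith
  -- `4 μ L` is within `3 / 10` of `√2 π`, which lies in `[4.39, 4.73]`
  have h2lo : (1.4 : ℝ) ≤ √2 := le_sqrt_of_sq_le (by norm_num)
  have h2hi : √2 ≤ 1.5 := by rw [sqrt_le_left (by norm_num)]; norm_num
  have hπ1 := pi_gt_d2
  have hπ2 := pi_lt_d2
  have hL1 : 1 ≤ μ * L := by
    have := (abs_le.1 hμL).1
    have : (1.4 : ℝ) * 3.14 ≤ √2 * π := by gcongr
    linarith
  have hL2 : μ * L ≤ 2 := by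
    have := (abs_le.1 hμL).2
    have : √2 * π ≤ (1.5 : ℝ) * 3.15 := by gcongr
    linarith
  set η := μ / (16 * G) with hη
  set P := parOf V κ τ K B cc M η (A * μ) μ L with hP
  have hgood : P.Good := parOf_good H hκ hτ0.le hK hcc hcc1 hcos hB (by positivity) hη
    (fun x hx y hy => by
      refine (hnear (A * μ) (by positivity) e11 x hx y hy).trans_eq ?_
      rw [hη]; field_simp) hμ e1 hL1 hL2 e2 e3
  have R : P.Reg V VL Vinf a0 μ := ⟨hgood, H, rfl, hμ, e1, rfl, hL1, hL2, by
    change τ + 1 ≤ L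
    have : (τ + 1) * μ ≤ L * μ := by linarith
    exact le_of_mul_le_mul_right this hμ⟩
  have F : P.Fine a0 μ lam CT c P0 := ⟨hc, hτ1, hτ2, hCT, hTμ, e6, e7, e8, e9, e10⟩
  have hs := sqrt_pos.2 hμ
  have hss : √μ * √μ = μ := mul_self_sqrt hμ.le
  -- the energy window has half-width `√μ = γ^(1/4)`, which dominates the error `O(μ)` in the turning
  -- condition
  obtain ⟨d1, d2⟩ := hdelay (√μ) hs (by linarith)
  obtain ⟨x, x1, x2, x3, x4, x5, x6, x7, x8, x9, x10⟩ := R.breather F rfl (fun x hx => by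
    change |x| ≤ 4 * S3 * μ at hx
    have hx' : |x| ≤ A * μ := hx.trans (by gcongr; linarith)
    change deriv V (clampR (A * μ) x) - κ ^ 2 * clampR (A * μ) x = _
    rw [clampR_eq hx']; rfl) hs hσ hd (by linarith) (sqrt_le_sqrt (by linarith)) d1 d2 (by
    change Q.C4 a0 CT c P0 * μ ≤ _
    calc Q.C4 a0 CT c P0 * μ = Q.C4 a0 CT c P0 * √μ * √μ := by rw [mul_assoc, hss]
      _ ≤ c * d * √μ := by gcongr
      _ = _ := by ring) hxc
  have hsμ : μ ≤ √μ := by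
    calc μ = √μ * √μ := hss.symm
      _ ≤ √μ * 1 := by gcongr; exact sqrt_le_one.2 e1
      _ = √μ := mul_one _
  have p1 : (μ ^ 2) ^ ((1:ℝ) / 4) = √μ := by
    rw [sqrt_eq_rpow, ← rpow_natCast, ← rpow_mul hμ.le]; norm_num
  have p2 : (μ ^ 2) ^ (-(1:ℝ) / 4) = 1 / √μ := by
    rw [neg_div, rpow_neg (by positivity), p1, one_div]
  have he : 0 < exp (K * (τ + 1)) := exp_pos _
  refine ⟨x, x1, x2, x3, x4, x5, x6, x7, x8, fun t _ => ?_, fun n hn t _ => ?_⟩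
  · rw [p2]
    refine (x9 t).trans ?_
    change (1 + L) * exp (K * (τ + 1)) * (2 * (2 * √μ / √(2 * E) + 8 * S3 * μ ^ 2)) ≤ _
    have hLμ : 1 + L ≤ 3 / μ := by
      rw [le_div_iff₀ hμ]; linarith
    have hμ2 : μ ^ 2 ≤ √μ := (pow_le_of_le_one hμ.le e1 two_ne_zero).trans hsμ
    calc _ ≤ 3 / μ * exp (K * (τ + 1)) * (2 * (2 * √μ / √(2 * E) + 8 * S3 * √μ)) := by gcongr
      _ = 6 * exp (K * (τ + 1)) * (2 / √(2 * E) + 8 * S3) * (√μ / μ) := by ring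
      _ = 6 * exp (K * (τ + 1)) * (2 / √(2 * E) + 8 * S3) * (1 / √μ) := by
        congr 1
        rw [div_eq_div_iff hμ.ne' hs.ne']; linarith
      _ ≤ _ := by gcongr; linarith
  · rw [p1]
    refine (x10 n hn t).trans ?_
    change 4 * S3 * μ ≤ _
    have : 0 ≤ 6 * exp (K * (τ + 1)) * (2 / √(2 * E) + 8 * S3) := by positivity
    gcongr
    linarith
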